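/- In dimension 11, every finite set S of points on the unit sphere of EuclideanSpace ℝ (Fin 11) (i.e., ‖x‖ = 1 for all x ∈ S) such that any two distinct points of S are at Euclidean distance at least 1 has cardinality at most 870; that is, the kissing number in dimension 11 is at most 870. -/

import Mathlib

open MvPolynomial Finset

namespace Kiss

section Fischer
variable {m : ℕ}

abbrev PR (m : ℕ) := MvPolynomial (Fin m) ℝ

noncomputable def afac (α : Fin m →₀ ℕ) : ℝ := ∏ i, ((α i).factorial : ℝ)

lemma afac_nonneg (α : Fin m →₀ ℕ) : 0 ≤ afac α := by unfold afac; positivity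

noncomputable def fis : PR m →ₗ[ℝ] PR m →ₗ[ℝ] ℝ :=
  LinearMap.mk₂ ℝ (fun p q => ∑ α ∈ p.support, afac α * coeff α p * coeff α q)
    (by
      intro p p' q
      have h : ∀ (r : PR m) (s : Finset (Fin m →₀ ℕ)), r.support ⊆ s →
        ∑ α ∈ r.support, afac α * coeff α r * coeff α q = ∑ α ∈ s, afac α * coeff α r * coeff α q := by
        intro r s hs
        apply Finset.sum_subset hs
        intro α _ h
        rw [notMem_support_iff.mp h]; ring
      classical
      rw [h _ (p.support ∪ p'.support) support_add, h p (p.support ∪ p'.support) subset_union_left,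
        h p' (p.support ∪ p'.support) subset_union_right, ← Finset.sum_add_distrib]
      apply Finset.sum_congr rfl; intro α _; rw [coeff_add]; ring)
    (by
      intro c p q
      have h : ∑ α ∈ (c • p).support, afac α * coeff α (c • p) * coeff α q = ∑ α ∈ p.support, afac α * coeff α (c • p) * coeff α q := by
        apply Finset.sum_subset support_smul
        intro α _ h
        rw [notMem_support_iff.mp h]; ring
      rw [h, smul_eq_mul, Finset.mul_sum]
      apply Finset.sum_congr rfl; intro α _; rw [coeff_smul, smul_eq_mul]; ring)
    (by
      intro p q q'
      rw [← Finset.sum_add_distrib]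
      apply Finset.sum_congr rfl; intro α _; rw [coeff_add]; ring)
    (by
      intro c p q
      rw [smul_eq_mul, Finset.mul_sum]
      apply Finset.sum_congr rfl; intro α _; rw [coeff_smul, smul_eq_mul]; ring)

lemma fis_apply (p q : PR m) : fis p q = ∑ α ∈ p.support, afac α * coeff α p * coeff α q := rfl

lemma fis_self (p : PR m) : 0 ≤ fis p p := by
  rw [fis_apply]
  apply Finset.sum_nonneg
  intro α _
  have := afac_nonneg α
  rw [mul_assoc]
  exact mul_nonneg this (mul_self_nonneg _)

lemma fis_monomial (α : Fin m →₀ ℕ) (c : ℝ) (q : PR m) : fis (monomial α c) q = afac α * c * coeff α q := by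
  rw [fis_apply]
  classical
  rw [Finset.sum_subset (support_monomial_subset) ]
  · simp
  · intro β _ h
    rw [notMem_support_iff.mp h]; ring

lemma fis_comm (p q : PR m) : fis p q = fis q p := by
  have h : ∀ (p q : PR m), fis p q = ∑ α ∈ p.support ∪ q.support, afac α * coeff α p * coeff α q := by
    intro p q
    rw [fis_apply]
    apply Finset.sum_subset subset_union_left
    intro α _ h
    rw [notMem_support_iff.mp h]; ring
  rw [h p q, h q p, union_comm]
  apply Finset.sum_congr rfl; intro α _; ring

lemma fis_X_mul (i : Fin m) (p q : PR m) : fis (X i * p) q = fis p (pderiv i q) := by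
  induction p using MvPolynomial.induction_on' with
  | monomial α c =>
    have : X i * monomial α c = monomial (α + Finsupp.single i 1) c := by
      rw [X, monomial_mul, one_mul, add_comm]
    rw [this, fis_monomial, fis_monomial, coeff_pderiv]
    have : afac (α + Finsupp.single i 1) = afac α * (α i + 1) := by
      unfold afac
      rw [← Finset.mul_prod_erase univ _ (mem_univ i), ← Finset.mul_prod_erase univ (fun i => ((α i).factorial : ℝ)) (mem_univ i)]
      have h2 : ∏ x ∈ univ.erase i, (((α + Finsupp.single i 1 : Fin m →₀ ℕ) x).factorial : ℝ) = ∏ x ∈ univ.erase i, ((α x).factorial : ℝ) := by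
        apply Finset.prod_congr rfl
        intro x hx
        have : x ≠ i := (Finset.mem_erase.mp hx).1
        simp [Finsupp.single_apply, this.symm]
      rw [h2]
      simp [Nat.factorial_succ]; ring
    rw [this]; ring
  | add p p' h h' => rw [mul_add, map_add, map_add, LinearMap.add_apply, LinearMap.add_apply, h, h']

noncomputable def lf (y : Fin m → ℝ) : PR m := ∑ i, C (y i) * X i
noncomputable def R2 : PR m := ∑ i, X i * X i
noncomputable def dd (y : Fin m → ℝ) (q : PR m) : PR m := ∑ i, C (y i) * pderiv i q
noncomputable def lap (q : PR m) : PR m := ∑ i, pderiv i (pderiv i q)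
def dt (x y : Fin m → ℝ) : ℝ := ∑ i, x i * y i

lemma fis_C_mul (c : ℝ) (p q : PR m) : fis (C c * p) q = c * fis p q := by
  rw [← smul_eq_C_mul, map_smul]; rfl

lemma fis_C_mul' (c : ℝ) (p q : PR m) : fis p (C c * q) = c * fis p q := by
  rw [← smul_eq_C_mul, map_smul]; rfl

lemma fis_lf (y : Fin m → ℝ) (p q : PR m) : fis (lf y * p) q = fis p (dd y q) := by
  unfold lf dd
  rw [Finset.sum_mul, map_sum, map_sum, LinearMap.sum_apply]
  apply Finset.sum_congr rfl; intro i _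
  rw [mul_assoc, fis_C_mul, fis_X_mul, fis_C_mul']

lemma fis_R2 (p q : PR m) : fis (R2 * p) q = fis p (lap q) := by
  unfold R2 lap
  rw [Finset.sum_mul, map_sum, map_sum, LinearMap.sum_apply]
  apply Finset.sum_congr rfl; intro i _
  rw [mul_assoc, fis_X_mul, fis_X_mul]

lemma pderiv_lf (i : Fin m) (y : Fin m → ℝ) : pderiv i (lf y) = C (y i) := by
  unfold lf
  rw [map_sum]
  simp [pderiv_X, Pi.single_apply]

lemma pderiv_R2 (i : Fin m) : pderiv i (R2 : PR m) = 2 * X i := by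
  unfold R2
  rw [map_sum]
  simp [pderiv_X, Pi.single_apply, Finset.sum_add_distrib]
  ring

lemma dd_lf_pow (x y : Fin m → ℝ) (k : ℕ) : dd y (lf x ^ (k+1)) = C ((k+1) * dt x y) * lf x ^ k := by
  unfold dd dt
  simp only [pderiv_pow, pderiv_lf, Nat.add_sub_cancel]
  rw [Finset.mul_sum, map_sum, Finset.sum_mul]
  apply Finset.sum_congr rfl; intro i _
  simp only [map_mul, map_add, map_natCast, map_one]
  push_cast
  ring

lemma lap_lf_pow (x : Fin m → ℝ) (k : ℕ) : lap (lf x ^ (k+2)) = C ((k+2) * (k+1) * dt x x) * lf x ^ k := by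
  unfold lap dt
  simp only [pderiv_pow, pderiv_lf, Derivation.leibniz, pderiv_C, Nat.add_sub_cancel, smul_eq_mul]
  rw [Finset.mul_sum, map_sum, Finset.sum_mul]
  apply Finset.sum_congr rfl; intro i _
  have : k + 2 - 1 = k + 1 := rfl
  rw [this]
  simp only [map_mul, map_add, map_natCast, map_one, pderiv_pow, pderiv_lf, Derivation.map_natCast, Nat.add_sub_cancel, map_ofNat]
  push_cast
  ring

lemma fis_pow (x y : Fin m → ℝ) (j : ℕ) : ∀ a : ℕ, fis (lf x ^ (a + 2*j)) (lf y ^ a * R2 ^ j)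
    = ((a + 2*j).factorial : ℝ) * dt x y ^ a * dt x x ^ j := by
  induction j with
  | zero =>
    intro a
    induction a with
    | zero =>
      simp only [mul_zero, add_zero, pow_zero, mul_one]
      rw [show (1 : PR m) = monomial 0 1 from rfl, fis_monomial]
      simp [afac]
    | succ a ih =>
      simp only [mul_zero, add_zero, pow_zero, mul_one] at ih ⊢
      rw [fis_comm, pow_succ (lf y), mul_comm (lf y ^ a), fis_lf, dd_lf_pow, fis_C_mul', fis_comm, ih, Nat.factorial_succ, pow_succ]
      push_cast; ring
  | succ j ih =>
    intro a
    rw [fis_comm, pow_succ R2, ← mul_assoc, mul_comm _ R2, fis_R2, show a + 2*(j+1) = (a + 2*j) + 2 by ring, lap_lf_pow, fis_C_mul', fis_comm,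
      ih, Nat.factorial_succ, Nat.factorial_succ, pow_succ]
    push_cast; ring

lemma sum_lf (y : Fin m → ℝ) : ∑ i, C (y i) * X i = lf y := rfl

lemma lap_mul_pow (y : Fin m → ℝ) (a j : ℕ) : lap (lf y ^ a * R2 ^ j) =
    C ((a:ℝ) * ((a-1 : ℕ):ℝ) * dt y y) * lf y ^ (a-2) * R2 ^ j
    + C (2 * (j:ℝ) * (2 * j + m - 2 + 2 * a)) * lf y ^ a * R2 ^ (j-1) := by
  have key : ∀ i : Fin m, pderiv i (pderiv i (lf y ^ a * R2 ^ j)) =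
      C ((a:ℝ) * ((a-1 : ℕ):ℝ)) * lf y ^ (a-2) * R2 ^ j * C (y i * y i)
      + C (4 * (a:ℝ) * j) * lf y ^ (a-1) * R2 ^ (j-1) * (C (y i) * X i)
      + C (2 * (j:ℝ)) * lf y ^ a * R2 ^ (j-1)
      + C (4 * (j:ℝ) * ((j-1:ℕ):ℝ)) * lf y ^ a * R2 ^ (j-2) * (X i * X i) := by
    intro i
    simp only [pderiv_pow, pderiv_lf, pderiv_R2, Derivation.leibniz, pderiv_C, smul_eq_mul, map_add, Derivation.map_natCast,
      pderiv_X_self, map_mul, map_natCast, Nat.sub_sub, map_ofNat]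
    have h2 : pderiv i (2 : PR m) = 0 := by
      have := Derivation.map_natCast (pderiv (R := ℝ) i) 2
      simpa using this
    rw [h2]
    norm_num
    ring
  unfold lap
  rw [Finset.sum_congr rfl (fun i _ => key i)]
  simp only [Finset.sum_add_distrib, ← Finset.mul_sum]
  rw [sum_lf, show ∑ i : Fin m, (X i * X i : PR m) = R2 from rfl, ← map_sum, show ∑ i, y i * y i = dt y y from rfl]
  simp only [Finset.sum_const, Finset.card_univ, Fintype.card_fin, nsmul_eq_mul]
  have e1 : C (4 * (a:ℝ) * j) * lf y ^ (a-1) * R2 ^ (j-1) * lf y = C (4 * (a:ℝ) * j) * lf y ^ a * R2 ^ (j-1) := by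
    rcases a with _ | a
    · simp
    · simp only [Nat.add_sub_cancel]; ring
  have e2 : C (4 * (j:ℝ) * ((j-1:ℕ):ℝ)) * lf y ^ a * R2 ^ (j-2) * R2 = C (4 * (j:ℝ) * ((j:ℝ)-1)) * lf y ^ a * R2 ^ (j-1) := by
    rcases j with _ | _ | j
    · simp
    · simp
    · simp only [Nat.add_sub_cancel, show j + 1 + 1 - 1 = j + 1 from rfl, show j + 1 + 1 - 2 = j from rfl]; push_cast; ring
  rw [e1, e2]
  have e3 : ((m : ℕ) : PR m) = C (m : ℝ) := by simp
  rw [e3]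
  have e4 : (2 * (j:ℝ) * (2 * j + m - 2 + 2 * a)) = 4 * (a:ℝ) * j + m * (2 * (j:ℝ)) + 4 * (j:ℝ) * ((j:ℝ)-1) := by ring
  rw [e4, C_add, C_add, C_mul (a := (a:ℝ) * ((a-1 : ℕ):ℝ)), C_mul (a := (m:ℝ))]
  ring

noncomputable def zh (γ : ℕ → ℝ) (k : ℕ) (y : Fin m → ℝ) : PR m :=
  ∑ j ∈ range (k/2+1), C (γ j * dt y y ^ j) * (lf y ^ (k-2*j) * R2 ^ j)

lemma lap_C_mul (c : ℝ) (q : PR m) : lap (C c * q) = C c * lap q := by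
  unfold lap
  rw [Finset.mul_sum]
  apply Finset.sum_congr rfl; intro i _
  simp [Derivation.leibniz, pderiv_C]

lemma lap_zh (γ : ℕ → ℝ) (k : ℕ) (y : Fin m → ℝ)
    (hγ : ∀ j, 2 * j + 2 ≤ k → γ (j+1) * (2 * (j+1) * (2 * k - 2 * j + m - 4)) = - γ j * ((k - 2*j) * (k-2*j-1))) :
    lap (zh γ k y) = 0 := by
  have h1 : lap (zh γ k y) = ∑ j ∈ range (k/2+1), C (γ j * dt y y ^ j) * lap (lf y ^ (k-2*j) * R2 ^ j) := by
    simp only [← lap_C_mul]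
    unfold lap zh
    simp only [map_sum]
    rw [Finset.sum_comm]
  rw [h1]
  simp only [lap_mul_pow, mul_add, Finset.sum_add_distrib]
  rw [Finset.sum_range_succ, Finset.sum_range_succ' (n := k/2)]
  have z1 : (((k - 2*(k/2) : ℕ):ℝ) * ((k - 2*(k/2) - 1 : ℕ):ℝ)) = 0 := by
    rcases Nat.mod_two_eq_zero_or_one k with h | h
    · have : k - 2*(k/2) = 0 := by omega
      rw [this]; simp
    · have : k - 2*(k/2) - 1 = 0 := by omega
      rw [this]; simp
  rw [z1]
  simp only [zero_mul, map_zero, mul_zero, add_zero, Nat.cast_zero]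
  rw [← Finset.sum_add_distrib]
  apply Finset.sum_eq_zero
  intro j hj
  have hj' : 2 * j + 2 ≤ k := by have := Finset.mem_range.mp hj; omega
  have := hγ j hj'
  rw [show k - 2*j - 2 = k - 2*(j+1) by omega, Nat.add_sub_cancel]
  have c1 : ((k - 2*j : ℕ):ℝ) = k - 2*j := by rw [Nat.cast_sub (by omega)]; push_cast; ring
  have c2 : ((k - 2*j - 1 : ℕ):ℝ) = k - 2*j - 1 := by rw [Nat.sub_sub, Nat.cast_sub (by omega)]; push_cast; ring
  have c3 : ((k - 2*(j+1) : ℕ):ℝ) = k - 2*(j+1) := by rw [Nat.cast_sub (by omega)]; push_cast; ring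
  rw [c1, c2, c3]
  have : γ j * dt y y ^ j * ((↑k - 2 * ↑j) * (↑k - 2 * ↑j - 1) * dt y y) + γ (j + 1) * dt y y ^ (j + 1) * (2 * ((j + 1 : ℕ) : ℝ) * (2 * ((j + 1 : ℕ) : ℝ) + ↑m - 2 + 2 * (↑k - 2 * (↑j + 1)))) = 0 := by
    push_cast
    rw [pow_succ]
    linear_combination dt y y ^ j * dt y y * this
  calc _ = (C (γ j * dt y y ^ j * ((↑k - 2 * ↑j) * (↑k - 2 * ↑j - 1) * dt y y)) + C (γ (j + 1) * dt y y ^ (j + 1) * (2 * ((j + 1 : ℕ) : ℝ) * (2 * ((j + 1 : ℕ) : ℝ) + ↑m - 2 + 2 * (↑k - 2 * (↑j + 1)))))) * (lf y ^ (k - 2*(j+1)) * R2 ^ j) := by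
        rw [C_mul (a := γ j * dt y y ^ j), C_mul (a := γ (j + 1) * dt y y ^ (j + 1))]; ring
    _ = 0 := by rw [← C_add, this, C_0, zero_mul]

def gk (γ : ℕ → ℝ) (k : ℕ) (w r : ℝ) : ℝ := ∑ j ∈ range (k/2+1), γ j * (w ^ (k-2*j) * r ^ j)

lemma fis_zh (γ : ℕ → ℝ) (k : ℕ)
    (hγ : ∀ j, 2 * j + 2 ≤ k → γ (j+1) * (2 * (j+1) * (2 * k - 2 * j + m - 4)) = - γ j * ((k - 2*j) * (k-2*j-1))) (x y : Fin m → ℝ) :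
    fis (zh γ k x) (zh γ k y) = γ 0 * k.factorial * gk γ k (dt x y) (dt x x * dt y y) := by
  have h1 : fis (zh γ k x) (zh γ k y) = γ 0 * fis (lf x ^ k) (zh γ k y) := by
    conv_lhs => rw [zh]
    rw [map_sum, LinearMap.sum_apply, Finset.sum_range_succ', Finset.sum_eq_zero, zero_add]
    · rw [fis_C_mul]; simp
    · intro j _
      rw [fis_C_mul, pow_succ R2, ← mul_assoc, mul_comm _ R2, fis_R2, lap_zh γ k y hγ]; simp
  rw [h1, zh, map_sum, gk, mul_assoc, Finset.mul_sum, Finset.mul_sum, Finset.mul_sum]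
  apply Finset.sum_congr rfl
  intro j hj
  have hj : k = k - 2*j + 2*j := by have := Finset.mem_range.mp hj; omega
  have h2 := fis_pow x y j (k - 2*j)
  rw [← hj] at h2
  rw [fis_C_mul', h2, mul_pow]; ring

theorem gk_pos {ι : Type*} (s : Finset ι) (γ : ℕ → ℝ) (k : ℕ) (h0 : 0 < γ 0)
    (hγ : ∀ j, 2 * j + 2 ≤ k → γ (j+1) * (2 * (j+1) * (2 * k - 2 * j + m - 4)) = - γ j * ((k - 2*j) * (k-2*j-1)))
    (c : ι → ℝ) (v : ι → Fin m → ℝ) :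
    0 ≤ ∑ a ∈ s, ∑ b ∈ s, c a * c b * gk γ k (dt (v a) (v b)) (dt (v a) (v a) * dt (v b) (v b)) := by
  have h := fis_self (∑ a ∈ s, C (c a) * zh γ k (v a))
  have : fis (∑ a ∈ s, C (c a) * zh γ k (v a)) (∑ a ∈ s, C (c a) * zh γ k (v a)) = (γ 0 * k.factorial) *
      ∑ a ∈ s, ∑ b ∈ s, c a * c b * gk γ k (dt (v a) (v b)) (dt (v a) (v a) * dt (v b) (v b)) := by
    simp only [map_sum, LinearMap.sum_apply, fis_C_mul, fis_C_mul', Finset.mul_sum, fis_zh γ k hγ]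
    rw [Finset.sum_comm]
    apply Finset.sum_congr rfl; intro a _
    apply Finset.sum_congr rfl; intro b _
    ring
  rw [this] at h
  have hp : 0 < γ 0 * k.factorial := by positivity
  exact nonneg_of_mul_nonneg_right h hp

end Fischer
end Kiss

namespace Kiss
noncomputable def Bz : ℕ → (ℕ → ℝ) → ℝ → ℝ
  | 0, c, _ => c 0
  | n+1, c, x => (1-x) * Bz n c x + x * Bz n (fun i => c (i+1)) x

theorem Bz_mono (n : ℕ) : ∀ (c d : ℕ → ℝ) (x : ℝ), 0 ≤ x → x ≤ 1 → (∀ i ≤ n, c i ≤ d i) → Bz n c x ≤ Bz n d x := by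
  induction n with
  | zero => intro c d x _ _ h; exact h 0 le_rfl
  | succ n ih =>
    intro c d x h0 h1 h
    have a := ih c d x h0 h1 (fun i hi => h i (by omega))
    have b := ih (fun i => c (i+1)) (fun i => d (i+1)) x h0 h1 (fun i hi => h (i+1) (by omega))
    simp only [Bz]
    have := mul_le_mul_of_nonneg_left a (sub_nonneg.2 h1)
    have := mul_le_mul_of_nonneg_left b h0
    linarith

theorem Bz_congr (n : ℕ) (c d : ℕ → ℝ) (x : ℝ) (h : ∀ i ≤ n, c i = d i) : Bz n c x = Bz n d x := by
  induction n generalizing c d with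
  | zero => exact h 0 le_rfl
  | succ n ih =>
    simp only [Bz]
    rw [ih c d (fun i hi => h i (by omega)), ih (fun i => c (i+1)) (fun i => d (i+1)) (fun i hi => h (i+1) (by omega))]

theorem Bz_lin (n : ℕ) : ∀ (a b : ℝ) (c d : ℕ → ℝ) (x : ℝ), Bz n (fun i => a * c i + b * d i) x = a * Bz n c x + b * Bz n d x := by
  induction n with
  | zero => intros; rfl
  | succ n ih => intro a b c d x; simp only [Bz]; rw [ih, ih a b (fun i => c (i+1)) (fun i => d (i+1))]; ring

theorem Bz_const (n : ℕ) (a x : ℝ) : Bz n (fun _ => a) x = a := by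
  induction n with
  | zero => rfl
  | succ n ih => simp only [Bz]; rw [ih]; ring

theorem Bz_swap (n m : ℕ) (c : ℕ → ℕ → ℝ) (x y : ℝ) :
    Bz n (fun i => Bz m (c i) y) x = Bz m (fun j => Bz n (fun i => c i j) x) y := by
  induction n generalizing c with
  | zero => rfl
  | succ n ih =>
    simp only [Bz]
    rw [ih, ih (fun i => c (i+1)), ← Bz_lin]

noncomputable def Ar (c : ℕ → ℝ) : ℕ → ℝ := fun i => (c i + c (i+1))/2
def Af (c : ℕ → ℕ) : ℕ → ℕ := fun i => (c i + c (i+1))/2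

theorem Ar_shift (r : ℕ) (c : ℕ → ℝ) (i : ℕ) : (Ar^[r] (fun i => c (i+1))) i = (Ar^[r] c) (i+1) := by
  induction r generalizing c with
  | zero => rfl
  | succ r ih => simp only [Function.iterate_succ, Function.comp]; exact ih (Ar c)

theorem Bz_Ar (n : ℕ) (c : ℕ → ℝ) (x : ℝ) : Bz n (Ar c) x = (Bz n c x + Bz n (fun i => c (i+1)) x)/2 := by
  have := Bz_lin n (1/2) (1/2) c (fun i => c (i+1)) x
  rw [show Ar c = fun i => 1/2 * c i + 1/2 * c (i+1) from by funext i; simp only [Ar]; ring, this]; ring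

theorem Bz_left (n : ℕ) (c : ℕ → ℝ) (x : ℝ) : Bz n c (x/2) = Bz n (fun r => (Ar^[r] c) 0) x := by
  induction n generalizing c with
  | zero => rfl
  | succ n ih =>
    simp only [Bz]
    have h := ih (Ar c)
    rw [Bz_Ar] at h
    simp only [Function.iterate_succ, Function.comp] at *
    rw [← h, ← ih c]; ring

theorem Bz_right (n : ℕ) (c : ℕ → ℝ) (x : ℝ) : Bz n c ((1+x)/2) = Bz n (fun i => (Ar^[n-i] c) i) x := by
  induction n generalizing c with
  | zero => rfl
  | succ n ih =>
    simp only [Bz]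
    have h := ih (Ar c)
    rw [Bz_Ar] at h
    have h2 := ih (fun i => c (i+1))
    have e1 : Bz n (fun i => (Ar^[n+1-i] c) i) x = Bz n (fun i => (Ar^[n-i] (Ar c)) i) x := by
      apply Bz_congr; intro i hi
      rw [show n+1-i = (n-i)+1 by omega]; rfl
    have e2 : Bz n (fun i => (Ar^[n+1-(i+1)] c) (i+1)) x = Bz n (fun i => (Ar^[n-i] (fun i => c (i+1))) i) x := by
      apply Bz_congr; intro i hi
      rw [Ar_shift, show n+1-(i+1) = n-i by omega]
    rw [e1, e2, ← h, ← h2]; ring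

theorem Ar_mono (r : ℕ) (c d : ℕ → ℝ) (h : ∀ i, c i ≤ d i) (i : ℕ) : (Ar^[r] c) i ≤ (Ar^[r] d) i := by
  induction r generalizing c d with
  | zero => exact h i
  | succ r ih =>
    simp only [Function.iterate_succ, Function.comp]
    apply ih; intro i; simp only [Ar]; linarith [h i, h (i+1)]

theorem Af_le (r : ℕ) (c : ℕ → ℕ) (i : ℕ) : (((Af^[r] c) i : ℕ) : ℝ) ≤ (Ar^[r] (fun i => (c i : ℝ))) i := by
  induction r generalizing c with
  | zero => rfl
  | succ r ih =>
    simp only [Function.iterate_succ, Function.comp]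
    refine (ih (Af c)).trans (Ar_mono r _ _ ?_ i)
    intro i; simp only [Ar, Af]
    have : ((((c i + c (i+1))/2 : ℕ)) : ℝ) ≤ ((c i + c (i+1) : ℕ) : ℝ)/2 := Nat.cast_div_le
    push_cast at this; exact this

def dig (W a n : ℕ) : ℕ := (a >>> (W*n)) % 2^W

theorem dig_eq (W a n : ℕ) : dig W a n = a / 2^(W*n) % 2^W := by rw [dig, Nat.shiftRight_eq_div_pow]
theorem dig_lt (W a n : ℕ) : dig W a n < 2^W := Nat.mod_lt _ (by positivity)
theorem dig_and (W a b n : ℕ) : dig W (a &&& b) n = dig W a n &&& dig W b n := by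
  simp only [dig, Nat.shiftRight_and_distrib, Nat.and_mod_two_pow]
theorem dig_or (W a b n : ℕ) : dig W (a ||| b) n = dig W a n ||| dig W b n := by
  simp only [dig, Nat.shiftRight_or_distrib, Nat.or_mod_two_pow]
theorem dig_shr (W a s n : ℕ) : dig W (a >>> (W*s)) n = dig W a (n+s) := by
  simp only [dig, ← Nat.shiftRight_add]; congr 2; ring
theorem dig_shl (W a s n : ℕ) : dig W (a <<< (W*s)) n = if s ≤ n then dig W a (n-s) else 0 := by
  split_ifs with h
  · obtain ⟨k, rfl⟩ := Nat.exists_eq_add_of_le h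
    simp only [dig, Nat.mul_add, Nat.shiftRight_add, Nat.shiftLeft_shiftRight, Nat.add_sub_cancel_left]
  · rw [dig_eq, Nat.shiftLeft_eq]
    obtain ⟨k, hk⟩ : ∃ k, s = n + 1 + k := ⟨s-n-1, by omega⟩
    rw [show W*s = W*n + (W + W*k) by rw [hk]; ring, pow_add, pow_add, show a*(2^(W*n)*(2^W*2^(W*k))) = (2^(W*n))*(2^W*(a*2^(W*k))) by ring,
      Nat.mul_div_cancel_left _ (by positivity), Nat.mul_mod_right]

theorem dig_nest (W s p i n : ℕ) (h : n < s) : dig W p (s*i+n) = dig W (dig (W*s) p i) n := by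
  rw [dig_eq, dig_eq, dig_eq]
  rw [show W*(s*i+n) = W*s*i + W*n by ring, pow_add, ← Nat.div_div_eq_div_mul]
  generalize p / 2^(W*s*i) = q
  obtain ⟨k, hk⟩ : ∃ k, s = n + 1 + k := ⟨s-n-1, by omega⟩
  rw [show W*s = W*n + (W + W*k) by rw [hk]; ring, pow_add, Nat.mod_mul_right_div_self, pow_add, Nat.mod_mul_right_mod]

theorem mod_add_lt (W x y : ℕ) (n : ℕ) (h : ∀ i < n, dig W x i + dig W y i < 2^W) :
    x % 2^(W*n) + y % 2^(W*n) < 2^(W*n) := by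
  induction n with
  | zero => simp [Nat.mod_one]
  | succ n ih =>
    have := ih (fun i hi => h i (by omega))
    have h2 := h n (by omega)
    rw [dig_eq, dig_eq] at h2
    rw [Nat.mul_succ, pow_add, Nat.mod_mul, Nat.mod_mul]
    generalize x / 2^(W*n) % 2^W = a at *
    generalize y / 2^(W*n) % 2^W = b at *
    calc _ < 2^(W*n) * (a+b+1) := by rw [mul_add, mul_add]; omega
      _ ≤ _ := Nat.mul_le_mul_left _ h2

theorem dig_add (W x y n : ℕ) (h : ∀ i ≤ n, dig W x i + dig W y i < 2^W) :
    dig W (x+y) n = dig W x n + dig W y n := by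
  have h1 := mod_add_lt W x y n (fun i hi => h i hi.le)
  have h2 := h n le_rfl
  simp only [dig_eq] at *
  have e : (x+y)/2^(W*n) = x/2^(W*n) + y/2^(W*n) := by
    rw [Nat.add_div (by positivity), if_neg (by omega), Nat.add_zero]
  rw [e, Nat.add_mod, Nat.mod_eq_of_lt h2]

def avg (M sh b : ℕ) : ℕ := ((b + (b >>> sh)) >>> 1) &&& M

theorem dig_avg (B M s b n : ℕ) (hM : dig (B+1) M n = 2^B-1) (hb : ∀ n, dig (B+1) b n < 2^B) :
    dig (B+1) (avg M ((B+1)*s) b) n = (dig (B+1) b n + dig (B+1) b (n+s))/2 := by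
  have key : ∀ i, dig (B+1) b i + dig (B+1) (b >>> ((B+1)*s)) i < 2^(B+1) := by
    intro i; rw [dig_shr, pow_succ]; have := hb i; have := hb (i+s); omega
  have h := dig_add (B+1) b (b >>> ((B+1)*s)) n (fun i _ => key i)
  rw [dig_shr] at h
  rw [avg, dig_and, hM, Nat.and_two_pow_sub_one_eq_mod, ← h]
  generalize b + b >>> ((B+1)*s) = z
  rw [dig_eq, dig_eq, Nat.shiftRight_eq_div_pow, pow_one, Nat.div_div_eq_div_mul, mul_comm 2, ← Nat.div_div_eq_div_mul]
  generalize z / 2^((B+1)*n) = q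
  rw [Nat.mod_mod_of_dvd _ (pow_dvd_pow 2 (Nat.le_succ B)), pow_succ, mul_comm (2^B) 2, Nat.mod_mul_right_div_self]

theorem and_lt_of_right {a b c : ℕ} (h : b < c) : a &&& b < c := lt_of_le_of_lt Nat.and_le_right h

theorem dig_avg_lt (B M sh b : ℕ) (hM : ∀ n, dig (B+1) M n < 2^B) (n : ℕ) : dig (B+1) (avg M sh b) n < 2^B := by
  rw [avg, dig_and]; exact and_lt_of_right (hM n)

theorem iter_avg_lt (B M sh : ℕ) (hM : ∀ n, dig (B+1) M n < 2^B) (r : ℕ) : ∀ b, (∀ n, dig (B+1) b n < 2^B) → ∀ n, dig (B+1) ((avg M sh)^[r] b) n < 2^B := by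
  induction r with
  | zero => intro b h; exact h
  | succ r ih => intro b h; exact ih _ (dig_avg_lt B M sh b hM)

theorem Af_congr (r : ℕ) : ∀ (c d : ℕ → ℕ) (j : ℕ), (∀ i ≤ r, c (j+i) = d (j+i)) → (Af^[r] c) j = (Af^[r] d) j := by
  induction r with
  | zero => intro c d j h; exact h 0 le_rfl
  | succ r ih =>
    intro c d j h
    simp only [Function.iterate_succ, Function.comp]
    apply ih; intro i hi
    simp only [Af]; rw [h i (by omega), add_assoc, h (i+1) (by omega)]

theorem dig_iter (B M s tot : ℕ) (hM : ∀ n < tot, dig (B+1) M n = 2^B-1) (hM' : ∀ n, dig (B+1) M n < 2^B) (r : ℕ) :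
    ∀ b, (∀ n, dig (B+1) b n < 2^B) → ∀ n j, n + s*(j+r) < tot → dig (B+1) ((avg M ((B+1)*s))^[r] b) (n+s*j) = (Af^[r] (fun i => dig (B+1) b (n+s*i))) j := by
  induction r with
  | zero => intro b _ n j h; rfl
  | succ r ih =>
    intro b hb n j h
    simp only [Function.iterate_succ, Function.comp]
    rw [ih _ (dig_avg_lt B M _ b hM') n j (by rw [mul_add] at h ⊢; rw [mul_add] at h; omega)]
    apply Af_congr
    intro i hi
    have : n + s*(j+i) ≤ n + s*(j+(r+1)) := by gcongr; omega
    rw [dig_avg B M s b _ (hM _ (by omega)) hb]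
    simp only [Af]; rw [show n+s*(j+i)+s = n+s*(j+i+1) by ring]

def lft (W M m s N : ℕ) (k : ℕ) : ℕ → ℕ :=
  Nat.rec (fun b => (b <<< (W*(s*N))) &&& (m <<< (W*(s*N))))
    (fun k ih b => ((b <<< (W*(s*(N-(k+1))))) &&& (m <<< (W*(s*(N-(k+1)))))) ||| ih (avg M (W*s) b)) k
def rgt (W M m s : ℕ) (k : ℕ) : ℕ → ℕ :=
  Nat.rec (fun b => b &&& m) (fun k ih b => (b &&& (m <<< (W*(s*(k+1))))) ||| ih (avg M (W*s) b)) k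

theorem lft_zero (W M m s N b : ℕ) : lft W M m s N 0 b = (b <<< (W*(s*N))) &&& (m <<< (W*(s*N))) := rfl
theorem lft_succ (W M m s N k b : ℕ) : lft W M m s N (k+1) b = ((b <<< (W*(s*(N-(k+1))))) &&& (m <<< (W*(s*(N-(k+1)))))) ||| lft W M m s N k (avg M (W*s) b) := rfl
theorem rgt_zero (W M m s b : ℕ) : rgt W M m s 0 b = b &&& m := rfl
theorem rgt_succ (W M m s k b : ℕ) : rgt W M m s (k+1) b = (b &&& (m <<< (W*(s*(k+1))))) ||| rgt W M m s k (avg M (W*s) b) := rfl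

structure Ax (B M tot m s N : ℕ) : Prop where
  hs : 0 < s
  hM : ∀ n < tot, dig (B+1) M n = 2^B-1
  hM' : ∀ n, dig (B+1) M n < 2^B
  hm : ∀ n < tot, dig (B+1) m n = if (n/s)%(N+1) = 0 then 2^B-1 else 0
  hm' : ∀ n, dig (B+1) m n < 2^B

theorem Ax.mk_dig {B M tot m s N : ℕ} (h : Ax B M tot m s N) (r n : ℕ) (hr : r ≤ N) (hn : n < tot) :
    dig (B+1) (m <<< ((B+1)*(s*r))) n = if (n/s)%(N+1) = r then 2^B-1 else 0 := by
  rw [dig_shl]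
  by_cases h1 : s*r ≤ n
  · rw [if_pos h1, h.hm _ (by omega)]
    have e : (n - s*r)/s = n/s - r := by rw [Nat.sub_mul_div]
    have hr2 : r ≤ n/s := (Nat.le_div_iff_mul_le h.hs).2 (by rw [mul_comm]; exact h1)
    rw [e]
    congr 1
    obtain ⟨k, hk⟩ := Nat.exists_eq_add_of_le hr2
    rw [hk, Nat.add_sub_cancel_left]
    apply propext
    constructor
    · intro hh
      rw [Nat.add_mod, hh, Nat.add_zero, Nat.mod_mod, Nat.mod_eq_of_lt (by omega)]
    · intro hh
      have : (r + k) ≡ r + 0 [MOD (N+1)] := by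
        show (r+k)%(N+1) = (r+0)%(N+1)
        rw [hh, Nat.add_zero, Nat.mod_eq_of_lt (by omega)]
      have := Nat.ModEq.add_left_cancel' r this
      simpa [Nat.ModEq] using this
  · rw [if_neg h1, if_neg]
    intro hh
    have h2 : r ≤ n/s := hh ▸ Nat.mod_le _ _
    exact h1 (by rw [mul_comm]; exact (Nat.le_div_iff_mul_le h.hs).1 h2)

theorem Ax.mk_lt {B M tot m s N : ℕ} (h : Ax B M tot m s N) (r n : ℕ) :
    dig (B+1) (m <<< ((B+1)*r)) n < 2^B := by
  rw [dig_shl]; split_ifs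
  · exact h.hm' _
  · positivity

theorem Ax.lft_lt {B M tot m s N : ℕ} (h : Ax B M tot m s N) (k : ℕ) : ∀ b n, dig (B+1) (lft (B+1) M m s N k b) n < 2^B := by
  induction k with
  | zero => intro b n; rw [lft_zero, dig_and]; exact and_lt_of_right (h.mk_lt _ _)
  | succ k ih =>
    intro b n
    rw [lft_succ, dig_or, dig_and]; exact Nat.or_lt_two_pow (and_lt_of_right (h.mk_lt _ _)) (ih _ n)

theorem Ax.rgt_lt {B M tot m s N : ℕ} (h : Ax B M tot m s N) (k : ℕ) : ∀ b n, dig (B+1) (rgt (B+1) M m s k b) n < 2^B := by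
  induction k with
  | zero => intro b n; rw [rgt_zero, dig_and]; exact and_lt_of_right (h.hm' _)
  | succ k ih =>
    intro b n
    rw [rgt_succ, dig_or, dig_and]; exact Nat.or_lt_two_pow (and_lt_of_right (h.mk_lt _ _)) (ih _ n)

theorem and_full {a B : ℕ} (h : a < 2^B) : a &&& (2^B-1) = a := by
  rw [Nat.and_two_pow_sub_one_eq_mod, Nat.mod_eq_of_lt h]

theorem Ax.lft_dig {B M tot m s N : ℕ} (h : Ax B M tot m s N) (k : ℕ) : k ≤ N → ∀ b, (∀ n, dig (B+1) b n < 2^B) → ∀ n < tot,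
    dig (B+1) (lft (B+1) M m s N k b) n = if N - k ≤ (n/s)%(N+1) then
      dig (B+1) ((avg M ((B+1)*s))^[(n/s)%(N+1) - (N-k)] b) (n - s*((n/s)%(N+1))) else 0 := by
  have hge : ∀ n, s*((n/s)%(N+1)) ≤ n := fun n => (Nat.mul_le_mul_left _ (Nat.mod_le _ _)).trans (Nat.mul_div_le n s)
  have step : ∀ r ≤ N, ∀ b, (∀ n, dig (B+1) b n < 2^B) → ∀ n < tot, dig (B+1) (b <<< ((B+1)*(s*r)) &&& m <<< ((B+1)*(s*r))) n = if (n/s)%(N+1) = r then dig (B+1) b (n - s*((n/s)%(N+1))) else 0 := by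
    intro r hr b hb n hn
    rw [dig_and, h.mk_dig r n hr hn, dig_shl]
    by_cases h1 : (n/s)%(N+1) = r
    · rw [if_pos h1, if_pos h1, if_pos (by rw [← h1]; exact hge n), and_full (hb _), h1]
    · rw [if_neg h1, if_neg h1, Nat.and_zero]
  induction k with
  | zero =>
    intro _ b hb n hn
    rw [lft_zero, step N le_rfl b hb n hn]
    have : (n/s)%(N+1) < N+1 := Nat.mod_lt _ (by omega)
    by_cases h1 : (n/s)%(N+1) = N
    · rw [if_pos h1, if_pos (by omega), h1]; simp
    · rw [if_neg h1, if_neg (by omega)]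
  | succ k ih =>
    intro hk b hb n hn
    have e : lft (B+1) M m s N (k+1) b = ((b <<< ((B+1)*(s*(N-(k+1))))) &&& (m <<< ((B+1)*(s*(N-(k+1)))))) ||| lft (B+1) M m s N k (avg M ((B+1)*s) b) := rfl
    rw [e, dig_or, step _ (by omega) b hb n hn, ih (by omega) _ (dig_avg_lt B M _ b h.hM') n hn]
    by_cases h1 : (n/s)%(N+1) = N-(k+1)
    · rw [if_pos h1, if_neg (by omega), if_pos (by omega), h1]; simp
    · rw [if_neg h1]
      by_cases h2 : N - k ≤ (n/s)%(N+1)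
      · rw [if_pos h2, if_pos (by omega), Nat.zero_or]
        rw [show (n/s)%(N+1) - (N-(k+1)) = ((n/s)%(N+1) - (N-k))+1 by omega]; rfl
      · rw [if_neg h2, if_neg (by omega)]; rfl

theorem Ax.rgt_dig {B M tot m s N : ℕ} (h : Ax B M tot m s N) (k : ℕ) : k ≤ N → ∀ b, (∀ n, dig (B+1) b n < 2^B) → ∀ n < tot,
    dig (B+1) (rgt (B+1) M m s k b) n = if (n/s)%(N+1) ≤ k then
      dig (B+1) ((avg M ((B+1)*s))^[k - (n/s)%(N+1)] b) n else 0 := by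
  have step : ∀ r ≤ N, ∀ b, (∀ n, dig (B+1) b n < 2^B) → ∀ n < tot, dig (B+1) (b &&& m <<< ((B+1)*(s*r))) n = if (n/s)%(N+1) = r then dig (B+1) b n else 0 := by
    intro r hr b hb n hn
    rw [dig_and, h.mk_dig r n hr hn]
    by_cases h1 : (n/s)%(N+1) = r
    · rw [if_pos h1, if_pos h1, and_full (hb _)]
    · rw [if_neg h1, if_neg h1, Nat.and_zero]
  induction k with
  | zero =>
    intro _ b hb n hn
    have := step 0 (by omega) b hb n hn
    simp only [Nat.mul_zero, Nat.shiftLeft_zero] at this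
    rw [rgt_zero, this]
    by_cases h1 : (n/s)%(N+1) = 0
    · rw [if_pos h1, if_pos (by omega), h1]; rfl
    · rw [if_neg h1, if_neg (by omega)]
  | succ k ih =>
    intro hk b hb n hn
    have e : rgt (B+1) M m s (k+1) b = (b &&& (m <<< ((B+1)*(s*(k+1))))) ||| rgt (B+1) M m s k (avg M ((B+1)*s) b) := rfl
    rw [e, dig_or, step _ (by omega) b hb n hn, ih (by omega) _ (dig_avg_lt B M _ b h.hM') n hn]
    by_cases h1 : (n/s)%(N+1) = k+1
    · rw [if_pos h1, if_neg (by omega), if_pos (by omega), h1]; simp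
    · rw [if_neg h1]
      by_cases h2 : (n/s)%(N+1) ≤ k
      · rw [if_pos h2, if_pos (by omega), Nat.zero_or]
        rw [show (k+1) - (n/s)%(N+1) = (k - (n/s)%(N+1))+1 by omega]; rfl
      · rw [if_neg h2, if_neg (by omega)]; rfl

theorem Ax.left {B M tot m s N : ℕ} (h : Ax B M tot m s N) (b : ℕ) (hb : ∀ n, dig (B+1) b n < 2^B) (l : ℕ)
    (hl : (l/s)%(N+1) = 0) (hlt : l + s*N < tot) (x : ℝ) (h0 : 0 ≤ x) (h1 : x ≤ 1) :
    Bz N (fun r => (dig (B+1) (lft (B+1) M m s N N b) (l+s*r) : ℝ)) x ≤ Bz N (fun r => (dig (B+1) b (l+s*r) : ℝ)) (x/2) := by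
  rw [Bz_left]
  apply Bz_mono _ _ _ _ h0 h1
  intro r hr
  have hsr : l + s*r ≤ l + s*N := by gcongr
  have e : ((l+s*r)/s)%(N+1) = r := by
    rw [Nat.add_mul_div_left _ _ h.hs, Nat.add_mod, hl, Nat.zero_add, Nat.mod_mod, Nat.mod_eq_of_lt (by omega)]
  rw [h.lft_dig N le_rfl b hb _ (by omega), e, if_pos (by omega), Nat.sub_self, Nat.sub_zero, Nat.add_sub_cancel]
  have := dig_iter B M s tot h.hM h.hM' r b hb l 0 (by rw [Nat.zero_add]; omega)
  simp only [Nat.mul_zero] at this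
  simp only [Nat.add_zero] at this
  rw [this]
  exact Af_le r _ 0

theorem Ax.right {B M tot m s N : ℕ} (h : Ax B M tot m s N) (b : ℕ) (hb : ∀ n, dig (B+1) b n < 2^B) (l : ℕ)
    (hl : (l/s)%(N+1) = 0) (hlt : l + s*N < tot) (x : ℝ) (h0 : 0 ≤ x) (h1 : x ≤ 1) :
    Bz N (fun r => (dig (B+1) (rgt (B+1) M m s N b) (l+s*r) : ℝ)) x ≤ Bz N (fun r => (dig (B+1) b (l+s*r) : ℝ)) ((1+x)/2) := by
  rw [Bz_right]
  apply Bz_mono _ _ _ _ h0 h1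
  intro r hr
  have hsr : l + s*r ≤ l + s*N := by gcongr
  have e : ((l+s*r)/s)%(N+1) = r := by
    rw [Nat.add_mul_div_left _ _ h.hs, Nat.add_mod, hl, Nat.zero_add, Nat.mod_mod, Nat.mod_eq_of_lt (by omega)]
  rw [h.rgt_dig N le_rfl b hb _ (by omega), e, if_pos hr]
  rw [dig_iter B M s tot h.hM h.hM' (N-r) b hb l r (by rw [show r+(N-r) = N by omega]; exact hlt)]
  exact Af_le (N-r) _ r
end Kiss

namespace Kiss
def pk (w N : ℕ) (D : ℕ → ℕ) : ℕ := Nat.rec 0 (fun n ih => ih + D n <<< (w*n)) N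
theorem pk_succ (w N : ℕ) (D : ℕ → ℕ) : pk w (N+1) D = pk w N D + D N <<< (w*N) := rfl

theorem dig_small (w d i : ℕ) (h : d < 2^w) : dig w d i = if i = 0 then d else 0 := by
  rw [dig_eq]
  cases i with
  | zero => simp [Nat.mod_eq_of_lt h]
  | succ i => rw [Nat.div_eq_of_lt (lt_of_lt_of_le h (Nat.pow_le_pow_right (by norm_num) (by rw [Nat.mul_succ]; omega)))]; simp

theorem dig_pk (w N : ℕ) (D : ℕ → ℕ) (h : ∀ i < N, D i < 2^w) : ∀ n, dig w (pk w N D) n = if n < N then D n else 0 := by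
  induction N with
  | zero => intro n; simp [pk, dig]
  | succ N ih =>
    have ih := ih (fun i hi => h i (by omega))
    have e : ∀ n, dig w (D N <<< (w*N)) n = if n = N then D N else 0 := by
      intro n; rw [dig_shl, dig_small _ _ _ (h N (by omega))]
      split_ifs <;> first | rfl | omega
    have hadd : ∀ n, dig w (pk w N D) n + dig w (D N <<< (w*N)) n = if n < N+1 then D n else 0 := by
      intro n; rw [ih, e]
      by_cases h1 : n < N
      · rw [if_pos h1, if_neg (by omega), if_pos (by omega)]; rfl
      · by_cases h2 : n = N
        · subst h2; simp
        · rw [if_neg h1, if_neg h2, if_neg (by omega)]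
    intro n
    rw [pk_succ, dig_add]
    · exact hadd n
    · intro i _; rw [hadd]; split_ifs with h1
      · exact h i h1
      · positivity

theorem pk_lt (w N : ℕ) (D : ℕ → ℕ) (h : ∀ i < N, D i < 2^w) : pk w N D < 2^(w*N) := by
  induction N with
  | zero => simp [pk]
  | succ N ih =>
    have := ih (fun i hi => h i (by omega))
    have h2 := h N (by omega)
    rw [pk_succ, Nat.shiftLeft_eq, Nat.mul_succ, pow_add]
    calc _ < 2^(w*N) + D N * 2^(w*N) := by omega
      _ = (D N + 1) * 2^(w*N) := by ring
      _ ≤ 2^w * 2^(w*N) := Nat.mul_le_mul_right _ h2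
      _ = _ := by ring

def pack3 (W n0 n1 n2 : ℕ) (D : ℕ → ℕ → ℕ → ℕ) : ℕ :=
  pk (W*((n2+1)*(n1+1))) (n0+1) fun i => pk (W*(n2+1)) (n1+1) fun j => pk W (n2+1) fun k => D i j k

theorem dig_pack3 (W n0 n1 n2 : ℕ) (D : ℕ → ℕ → ℕ → ℕ) (h : ∀ i ≤ n0, ∀ j ≤ n1, ∀ k ≤ n2, D i j k < 2^W)
    (i j k : ℕ) (hj : j ≤ n1) (hk : k ≤ n2) :
    dig W (pack3 W n0 n1 n2 D) ((n2+1)*(n1+1)*i + ((n2+1)*j + k)) = if i ≤ n0 then D i j k else 0 := by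
  have hlt : (n2+1)*j + k < (n2+1)*(n1+1) := by
    calc _ < (n2+1)*j + (n2+1) := by omega
      _ = (n2+1)*(j+1) := by ring
      _ ≤ _ := Nat.mul_le_mul_left _ (by omega)
  rw [dig_nest _ _ _ _ _ hlt, pack3, dig_pk]
  · by_cases hi : i ≤ n0
    · rw [if_pos (by omega), if_pos hi, dig_nest _ _ _ _ _ (by omega), dig_pk, if_pos (by omega), dig_pk, if_pos (by omega)]
      · intro k hk; exact h i hi j hj k (by omega)
      · intro j hj; exact pk_lt _ _ _ (fun k hk => h i hi j (by omega) k (by omega))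
    · rw [if_neg (by omega), if_neg hi, dig_small _ _ _ (by positivity)]; simp
  · intro i hi
    rw [← mul_assoc]
    exact pk_lt _ _ _ (fun j hj => pk_lt _ _ _ (fun k hk => h i (by omega) j (by omega) k (by omega)))

theorem idx3 (n1 n2 n : ℕ) : ∃ i j k, j ≤ n1 ∧ k ≤ n2 ∧ n = (n2+1)*(n1+1)*i + ((n2+1)*j + k) := by
  refine ⟨n/((n2+1)*(n1+1)), n % ((n2+1)*(n1+1)) / (n2+1), n % ((n2+1)*(n1+1)) % (n2+1), ?_, ?_, ?_⟩
  · have : n % ((n2+1)*(n1+1)) < (n2+1)*(n1+1) := Nat.mod_lt _ (by positivity)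
    have := Nat.div_lt_of_lt_mul this
    omega
  · have := Nat.mod_lt (n % ((n2+1)*(n1+1))) (show n2+1 > 0 by omega); omega
  · rw [Nat.div_add_mod, Nat.div_add_mod]

section
variable (B n0 n1 n2 : ℕ)
def fM : ℕ := pack3 (B+1) n0 n1 n2 fun _ _ _ => 2^B-1
def fT : ℕ := pack3 (B+1) n0 n1 n2 fun _ _ _ => 2^(B-1)
def e0 (full i : ℕ) : ℕ := Nat.rec full (fun _ _ => 0) i
def f0 : ℕ := pack3 (B+1) n0 n1 n2 fun i _ _ => e0 (2^B-1) i
def f1 : ℕ := pack3 (B+1) n0 n1 n2 fun _ j _ => e0 (2^B-1) j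
def f2 : ℕ := pack3 (B+1) n0 n1 n2 fun _ _ k => e0 (2^B-1) k

theorem e0_eq (f i : ℕ) : e0 f i = if i = 0 then f else 0 := by cases i <;> simp [e0]

theorem full_lt : 2^B-1 < 2^(B+1) := by
  have : 0 < 2^B := by positivity
  rw [pow_succ]; omega

theorem pack3_lt (D : ℕ → ℕ → ℕ → ℕ) (h : ∀ i ≤ n0, ∀ j ≤ n1, ∀ k ≤ n2, D i j k < 2^B) (n : ℕ) :
    dig (B+1) (pack3 (B+1) n0 n1 n2 D) n < 2^B := by
  obtain ⟨i, j, k, hj, hk, rfl⟩ := idx3 n1 n2 n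
  rw [dig_pack3 _ _ _ _ _ _ _ _ _ hj hk]
  · split_ifs with hi
    · exact h i hi j hj k hk
    · positivity
  · intro i hi j hj k hk; exact (h i hi j hj k hk).trans (Nat.pow_lt_pow_right (by norm_num) (by omega))

theorem full_lt' : 2^B-1 < 2^B := by
  have : 0 < 2^B := by positivity
  omega

theorem idx_lt (i : ℕ) (n : ℕ) (h : (n2+1)*(n1+1)*i ≤ n) (hn : n < (n2+1)*(n1+1)*(n0+1)) : i ≤ n0 := by
  by_contra hh
  have : (n2+1)*(n1+1)*(n0+1) ≤ (n2+1)*(n1+1)*i := Nat.mul_le_mul_left _ (by omega)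
  omega

theorem axM : (∀ n < (n2+1)*(n1+1)*(n0+1), dig (B+1) (fM B n0 n1 n2) n = 2^B-1) ∧ (∀ n, dig (B+1) (fM B n0 n1 n2) n < 2^B) := by
  constructor
  · intro n hn
    obtain ⟨i, j, k, hj, hk, rfl⟩ := idx3 n1 n2 n
    rw [fM, dig_pack3 _ _ _ _ _ _ _ _ _ hj hk, if_pos (idx_lt n0 n1 n2 i _ (by omega) hn)]
    intros; exact full_lt B
  · exact pack3_lt _ _ _ _ _ (fun _ _ _ _ _ _ => full_lt' B)

theorem e0_lt (i : ℕ) : e0 (2^B-1) i < 2^B := by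
  rw [e0_eq]; have := full_lt' B; split_ifs <;> omega
theorem e0_lt' (i : ℕ) : e0 (2^B-1) i < 2^(B+1) := (e0_lt B i).trans (Nat.pow_lt_pow_right (by norm_num) (by omega))

theorem ax0 : Ax B (fM B n0 n1 n2) ((n2+1)*(n1+1)*(n0+1)) (f0 B n0 n1 n2) ((n2+1)*(n1+1)) n0 where
  hs := by positivity
  hM := (axM B n0 n1 n2).1
  hM' := (axM B n0 n1 n2).2
  hm' := pack3_lt _ _ _ _ _ (fun _ _ _ _ _ _ => e0_lt _ _)
  hm := by
    intro n hn
    obtain ⟨i, j, k, hj, hk, rfl⟩ := idx3 n1 n2 n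
    have hi := idx_lt n0 n1 n2 i _ (by omega) hn
    have hlt : (n2+1)*j + k < (n2+1)*(n1+1) := by
      calc _ < (n2+1)*j + (n2+1) := by omega
        _ = (n2+1)*(j+1) := by ring
        _ ≤ _ := Nat.mul_le_mul_left _ (by omega)
    rw [f0, dig_pack3 _ _ _ _ _ _ _ _ _ hj hk, if_pos hi, e0_eq, Nat.mul_add_div (by positivity), Nat.div_eq_of_lt hlt,
      Nat.add_zero, Nat.mod_eq_of_lt (by omega)]
    intros; exact e0_lt' _ _

theorem ax1 : Ax B (fM B n0 n1 n2) ((n2+1)*(n1+1)*(n0+1)) (f1 B n0 n1 n2) (n2+1) n1 where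
  hs := by positivity
  hM := (axM B n0 n1 n2).1
  hM' := (axM B n0 n1 n2).2
  hm' := pack3_lt _ _ _ _ _ (fun _ _ _ _ _ _ => e0_lt _ _)
  hm := by
    intro n hn
    obtain ⟨i, j, k, hj, hk, rfl⟩ := idx3 n1 n2 n
    have hi := idx_lt n0 n1 n2 i _ (by omega) hn
    rw [f1, dig_pack3 _ _ _ _ _ _ _ _ _ hj hk, if_pos hi, e0_eq, mul_assoc, Nat.mul_add_div (by positivity), Nat.mul_add_div (by positivity), Nat.div_eq_of_lt (show k < n2+1 by omega),
      Nat.mul_add_mod, Nat.add_zero, Nat.mod_eq_of_lt (show j < n1+1 by omega)]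
    intros; exact e0_lt' _ _

theorem ax2 : Ax B (fM B n0 n1 n2) ((n2+1)*(n1+1)*(n0+1)) (f2 B n0 n1 n2) 1 n2 where
  hs := by positivity
  hM := (axM B n0 n1 n2).1
  hM' := (axM B n0 n1 n2).2
  hm' := pack3_lt _ _ _ _ _ (fun _ _ _ _ _ _ => e0_lt _ _)
  hm := by
    intro n hn
    obtain ⟨i, j, k, hj, hk, rfl⟩ := idx3 n1 n2 n
    have hi := idx_lt n0 n1 n2 i _ (by omega) hn
    rw [f2, dig_pack3 _ _ _ _ _ _ _ _ _ hj hk, if_pos hi, e0_eq, Nat.div_one, mul_assoc, Nat.mul_add_mod, Nat.mul_add_mod, Nat.mod_eq_of_lt (by omega)]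
    intros; exact e0_lt' _ _

noncomputable def T3 (c : ℕ → ℕ → ℕ → ℝ) (x y z : ℝ) : ℝ :=
  Bz n0 (fun i => Bz n1 (fun j => Bz n2 (fun k => c i j k) z) y) x

theorem T3_mono (c d : ℕ → ℕ → ℕ → ℝ) (x y z : ℝ) (hx : 0 ≤ x ∧ x ≤ 1) (hy : 0 ≤ y ∧ y ≤ 1) (hz : 0 ≤ z ∧ z ≤ 1)
   (h : ∀ i ≤ n0, ∀ j ≤ n1, ∀ k ≤ n2, c i j k ≤ d i j k) : T3 n0 n1 n2 c x y z ≤ T3 n0 n1 n2 d x y z :=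
  Bz_mono _ _ _ _ hx.1 hx.2 fun i hi => Bz_mono _ _ _ _ hy.1 hy.2 fun j hj => Bz_mono _ _ _ _ hz.1 hz.2 fun k hk => h i hi j hj k hk

def Ln (p : ℕ) (i j k : ℕ) : ℝ := (dig (B+1) p ((n2+1)*(n1+1)*i + ((n2+1)*j + k)) : ℝ)

theorem ijk_lt {i j k : ℕ} (hi : i ≤ n0) (hj : j ≤ n1) (hk : k ≤ n2) : (n2+1)*(n1+1)*i + ((n2+1)*j + k) < (n2+1)*(n1+1)*(n0+1) := by
  have h1 : (n2+1)*j + k < (n2+1)*(n1+1) := by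
      calc _ < (n2+1)*j + (n2+1) := by omega
        _ = (n2+1)*(j+1) := by ring
        _ ≤ _ := Nat.mul_le_mul_left _ (by omega)
  calc _ < (n2+1)*(n1+1)*i + (n2+1)*(n1+1) := by omega
    _ = (n2+1)*(n1+1)*(i+1) := by ring
    _ ≤ _ := Nat.mul_le_mul_left _ (by omega)

variable {B n0 n1 n2}
variable (p : ℕ) (hp : ∀ n, dig (B+1) p n < 2^B) (x y z : ℝ) (hx : 0 ≤ x ∧ x ≤ 1) (hy : 0 ≤ y ∧ y ≤ 1) (hz : 0 ≤ z ∧ z ≤ 1)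
include hp hx hy hz

theorem T3_l2 : T3 n0 n1 n2 (Ln B n1 n2 (lft (B+1) (fM B n0 n1 n2) (f2 B n0 n1 n2) 1 n2 n2 p)) x y z ≤ T3 n0 n1 n2 (Ln B n1 n2 p) x y (z/2) := by
  refine Bz_mono _ _ _ _ hx.1 hx.2 fun i hi => Bz_mono _ _ _ _ hy.1 hy.2 fun j hj => ?_
  have := (ax2 B n0 n1 n2).left p hp ((n2+1)*(n1+1)*i + (n2+1)*j) (by rw [Nat.div_one, mul_assoc, ← mul_add, Nat.mul_mod_right])
    (by have := ijk_lt n0 n1 n2 hi hj (le_refl n2); omega) z hz.1 hz.2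
  simpa only [Ln, one_mul, add_assoc] using this

theorem T3_r2 : T3 n0 n1 n2 (Ln B n1 n2 (rgt (B+1) (fM B n0 n1 n2) (f2 B n0 n1 n2) 1 n2 p)) x y z ≤ T3 n0 n1 n2 (Ln B n1 n2 p) x y ((1+z)/2) := by
  refine Bz_mono _ _ _ _ hx.1 hx.2 fun i hi => Bz_mono _ _ _ _ hy.1 hy.2 fun j hj => ?_
  have := (ax2 B n0 n1 n2).right p hp ((n2+1)*(n1+1)*i + (n2+1)*j) (by rw [Nat.div_one, mul_assoc, ← mul_add, Nat.mul_mod_right])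
    (by have := ijk_lt n0 n1 n2 hi hj (le_refl n2); omega) z hz.1 hz.2
  simpa only [Ln, one_mul, add_assoc] using this

omit hp hx hy hz in
theorem T3_sw1 (c : ℕ → ℕ → ℕ → ℝ) : T3 n0 n1 n2 c x y z = Bz n0 (fun i => Bz n2 (fun k => Bz n1 (fun j => c i j k) y) z) x :=
  Bz_congr _ _ _ _ fun _ _ => Bz_swap _ _ _ _ _

omit hp hx hy hz in
theorem T3_sw0 (c : ℕ → ℕ → ℕ → ℝ) : T3 n0 n1 n2 c x y z = Bz n1 (fun j => Bz n2 (fun k => Bz n0 (fun i => c i j k) x) z) y := by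
  unfold T3; rw [Bz_swap]
  exact Bz_congr _ _ _ _ fun _ _ => Bz_swap _ _ _ _ _

theorem T3_l1 : T3 n0 n1 n2 (Ln B n1 n2 (lft (B+1) (fM B n0 n1 n2) (f1 B n0 n1 n2) (n2+1) n1 n1 p)) x y z ≤ T3 n0 n1 n2 (Ln B n1 n2 p) x (y/2) z := by
  rw [T3_sw1, T3_sw1]
  refine Bz_mono _ _ _ _ hx.1 hx.2 fun i hi => Bz_mono _ _ _ _ hz.1 hz.2 fun k hk => ?_
  have := (ax1 B n0 n1 n2).left p hp ((n2+1)*(n1+1)*i + k) (by rw [mul_assoc, Nat.mul_add_div (by positivity), Nat.div_eq_of_lt (show k < n2+1 by omega), Nat.add_zero, Nat.mul_mod_right])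
    (by have := ijk_lt n0 n1 n2 hi (le_refl n1) hk; omega) y hy.1 hy.2
  simp only [add_assoc, add_comm k] at this
  exact this

theorem T3_r1 : T3 n0 n1 n2 (Ln B n1 n2 (rgt (B+1) (fM B n0 n1 n2) (f1 B n0 n1 n2) (n2+1) n1 p)) x y z ≤ T3 n0 n1 n2 (Ln B n1 n2 p) x ((1+y)/2) z := by
  rw [T3_sw1, T3_sw1]
  refine Bz_mono _ _ _ _ hx.1 hx.2 fun i hi => Bz_mono _ _ _ _ hz.1 hz.2 fun k hk => ?_
  have := (ax1 B n0 n1 n2).right p hp ((n2+1)*(n1+1)*i + k) (by rw [mul_assoc, Nat.mul_add_div (by positivity), Nat.div_eq_of_lt (show k < n2+1 by omega), Nat.add_zero, Nat.mul_mod_right])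
    (by have := ijk_lt n0 n1 n2 hi (le_refl n1) hk; omega) y hy.1 hy.2
  simp only [add_assoc, add_comm k] at this
  exact this

theorem T3_l0 : T3 n0 n1 n2 (Ln B n1 n2 (lft (B+1) (fM B n0 n1 n2) (f0 B n0 n1 n2) ((n2+1)*(n1+1)) n0 n0 p)) x y z ≤ T3 n0 n1 n2 (Ln B n1 n2 p) (x/2) y z := by
  rw [T3_sw0, T3_sw0]
  refine Bz_mono _ _ _ _ hy.1 hy.2 fun j hj => Bz_mono _ _ _ _ hz.1 hz.2 fun k hk => ?_
  have := (ax0 B n0 n1 n2).left p hp ((n2+1)*j + k) (by rw [Nat.div_eq_of_lt (by have := ijk_lt 0 n1 n2 le_rfl hj hk; simpa using this), Nat.zero_mod])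
    (by have := ijk_lt n0 n1 n2 (le_refl n0) hj hk; omega) x hx.1 hx.2
  simp only [add_comm ((n2+1)*j + k)] at this
  exact this

theorem T3_r0 : T3 n0 n1 n2 (Ln B n1 n2 (rgt (B+1) (fM B n0 n1 n2) (f0 B n0 n1 n2) ((n2+1)*(n1+1)) n0 p)) x y z ≤ T3 n0 n1 n2 (Ln B n1 n2 p) ((1+x)/2) y z := by
  rw [T3_sw0, T3_sw0]
  refine Bz_mono _ _ _ _ hy.1 hy.2 fun j hj => Bz_mono _ _ _ _ hz.1 hz.2 fun k hk => ?_
  have := (ax0 B n0 n1 n2).right p hp ((n2+1)*j + k) (by rw [Nat.div_eq_of_lt (by have := ijk_lt 0 n1 n2 le_rfl hj hk; simpa using this), Nat.zero_mod])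
    (by have := ijk_lt n0 n1 n2 (le_refl n0) hj hk; omega) x hx.1 hx.2
  simp only [add_comm ((n2+1)*j + k)] at this
  exact this
end

theorem leaf_ok (B n0 n1 n2 p : ℕ) (hB : 0 < B) (h : p &&& fT B n0 n1 n2 = fT B n0 n1 n2) (x y z : ℝ) (hx : 0 ≤ x ∧ x ≤ 1) (hy : 0 ≤ y ∧ y ≤ 1) (hz : 0 ≤ z ∧ z ≤ 1) :
    (2:ℝ)^(B-1) ≤ T3 n0 n1 n2 (Ln B n1 n2 p) x y z := by
  have : T3 n0 n1 n2 (fun _ _ _ => (2:ℝ)^(B-1)) x y z = 2^(B-1) := by simp only [T3, Bz_const]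
  rw [← this]
  apply T3_mono _ _ _ _ _ _ _ _ hx hy hz
  intro i hi j hj k hk
  have h1 := congrArg (fun a => dig (B+1) a ((n2+1)*(n1+1)*i + ((n2+1)*j + k))) h
  rw [dig_and, fT, dig_pack3 _ _ _ _ _ _ _ _ _ hj hk, if_pos hi] at h1
  · have : 2^(B-1) ≤ dig (B+1) p ((n2+1)*(n1+1)*i + ((n2+1)*j + k)) := by rw [← h1]; exact Nat.and_le_left
    unfold Ln
    exact_mod_cast this
  · intros; exact Nat.pow_lt_pow_right (by norm_num) (by omega)

inductive Tr | lf | nx (l r : Tr) | ny (l r : Tr) | nz (l r : Tr)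
def force {α : Type} (x : ℕ) (f : ℕ → α) : α := Nat.rec (f 0) (fun n _ => f (n+1)) x
theorem force_eq {α : Type} (x : ℕ) (f : ℕ → α) : force x f = f x := by cases x <;> rfl
def Box := ℕ → ℕ → ℕ → ℕ → ℕ → ℕ → Bool

noncomputable def chk (W M top m0 m1 m2 s0 s1 n0 n1 n2 : ℕ) (dsc : Box) (t : Tr) : ℕ → ℕ → ℕ → ℕ → ℕ → ℕ → ℕ → Bool :=
  Tr.rec (fun p A0 j0 A1 j1 A2 j2 => or (dsc A0 j0 A1 j1 A2 j2) (Nat.beq (p &&& top) top))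
    (fun _ _ il ir p A0 j0 A1 j1 A2 j2 => force p fun p => Nat.rec false (fun j _ => force (A0+2^j) fun A =>
      and (il (lft W M m0 s0 n0 n0 p) A0 j A1 j1 A2 j2) (ir (rgt W M m0 s0 n0 p) A j A1 j1 A2 j2)) j0)
    (fun _ _ il ir p A0 j0 A1 j1 A2 j2 => force p fun p => Nat.rec false (fun j _ => force (A1+2^j) fun A =>
      and (il (lft W M m1 s1 n1 n1 p) A0 j0 A1 j A2 j2) (ir (rgt W M m1 s1 n1 p) A0 j0 A j A2 j2)) j1)
    (fun _ _ il ir p A0 j0 A1 j1 A2 j2 => force p fun p => Nat.rec false (fun j _ => force (A2+2^j) fun A =>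
      and (il (lft W M m2 1 n2 n2 p) A0 j0 A1 j1 A2 j) (ir (rgt W M m2 1 n2 p) A0 j0 A1 j1 A j)) j2) t

section
variable (W M top m0 m1 m2 s0 s1 n0 n1 n2 : ℕ) (dsc : Box) (l r : Tr) (p A0 j0 A1 j1 A2 j2 j : ℕ)
theorem chk_x : chk W M top m0 m1 m2 s0 s1 n0 n1 n2 dsc (.nx l r) p A0 (j+1) A1 j1 A2 j2 = and (chk W M top m0 m1 m2 s0 s1 n0 n1 n2 dsc l (lft W M m0 s0 n0 n0 p) A0 j A1 j1 A2 j2) (chk W M top m0 m1 m2 s0 s1 n0 n1 n2 dsc r (rgt W M m0 s0 n0 p) (A0+2^j) j A1 j1 A2 j2) := by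
  have : chk W M top m0 m1 m2 s0 s1 n0 n1 n2 dsc (.nx l r) p A0 (j+1) A1 j1 A2 j2 = force p fun p => force (A0+2^j) fun A => and (chk W M top m0 m1 m2 s0 s1 n0 n1 n2 dsc l (lft W M m0 s0 n0 n0 p) A0 j A1 j1 A2 j2) (chk W M top m0 m1 m2 s0 s1 n0 n1 n2 dsc r (rgt W M m0 s0 n0 p) A j A1 j1 A2 j2) := rfl
  rw [this, force_eq, force_eq]
theorem chk_y : chk W M top m0 m1 m2 s0 s1 n0 n1 n2 dsc (.ny l r) p A0 j0 A1 (j+1) A2 j2 = and (chk W M top m0 m1 m2 s0 s1 n0 n1 n2 dsc l (lft W M m1 s1 n1 n1 p) A0 j0 A1 j A2 j2) (chk W M top m0 m1 m2 s0 s1 n0 n1 n2 dsc r (rgt W M m1 s1 n1 p) A0 j0 (A1+2^j) j A2 j2) := by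
  have : chk W M top m0 m1 m2 s0 s1 n0 n1 n2 dsc (.ny l r) p A0 j0 A1 (j+1) A2 j2 = force p fun p => force (A1+2^j) fun A => and (chk W M top m0 m1 m2 s0 s1 n0 n1 n2 dsc l (lft W M m1 s1 n1 n1 p) A0 j0 A1 j A2 j2) (chk W M top m0 m1 m2 s0 s1 n0 n1 n2 dsc r (rgt W M m1 s1 n1 p) A0 j0 A j A2 j2) := rfl
  rw [this, force_eq, force_eq]
theorem chk_z : chk W M top m0 m1 m2 s0 s1 n0 n1 n2 dsc (.nz l r) p A0 j0 A1 j1 A2 (j+1) = and (chk W M top m0 m1 m2 s0 s1 n0 n1 n2 dsc l (lft W M m2 1 n2 n2 p) A0 j0 A1 j1 A2 j) (chk W M top m0 m1 m2 s0 s1 n0 n1 n2 dsc r (rgt W M m2 1 n2 p) A0 j0 A1 j1 (A2+2^j) j) := by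
  have : chk W M top m0 m1 m2 s0 s1 n0 n1 n2 dsc (.nz l r) p A0 j0 A1 j1 A2 (j+1) = force p fun p => force (A2+2^j) fun A => and (chk W M top m0 m1 m2 s0 s1 n0 n1 n2 dsc l (lft W M m2 1 n2 n2 p) A0 j0 A1 j1 A2 j) (chk W M top m0 m1 m2 s0 s1 n0 n1 n2 dsc r (rgt W M m2 1 n2 p) A0 j0 A1 j1 A j) := rfl
  rw [this, force_eq, force_eq]
theorem chk_x0 : chk W M top m0 m1 m2 s0 s1 n0 n1 n2 dsc (.nx l r) p A0 0 A1 j1 A2 j2 = false := force_eq p fun _ => false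
theorem chk_y0 : chk W M top m0 m1 m2 s0 s1 n0 n1 n2 dsc (.ny l r) p A0 j0 A1 0 A2 j2 = false := force_eq p fun _ => false
theorem chk_z0 : chk W M top m0 m1 m2 s0 s1 n0 n1 n2 dsc (.nz l r) p A0 j0 A1 j1 A2 0 = false := force_eq p fun _ => false
end

def InB (E A j : ℕ) (x : ℝ) : Prop := A + 2^j ≤ E ∧ (A:ℝ) ≤ E*x ∧ E*x ≤ A + 2^j ∧ (E*x < A + 2^j ∨ x = 1)

theorem InB_split {E A j : ℕ} {x : ℝ} (h : InB E A (j+1) x) : InB E A j x ∨ InB E (A+2^j) j x := by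
  obtain ⟨h1, h2, h3, h4⟩ := h
  have h5 : (A:ℝ)+2^(j+1) ≤ E := by exact_mod_cast h1
  rw [pow_succ] at *
  have hp : (0:ℝ) < 2^j := by positivity
  by_cases hx : (E:ℝ)*x < A + 2^j
  · left; exact ⟨by omega, h2, hx.le, Or.inl hx⟩
  · right
    refine ⟨by omega, by push_cast; linarith, by push_cast; linarith, ?_⟩
    rcases h4 with h4 | h4
    · left; push_cast; linarith
    · right; exact h4

theorem InB_half1 (E A j : ℕ) (a : ℝ) : ((A:ℝ) + 2^j*a)/E = (A + 2^(j+1)*(a/2))/E := by rw [pow_succ]; ring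
theorem InB_half2 (E A j : ℕ) (a : ℝ) : (((A+2^j : ℕ):ℝ) + 2^j*a)/E = (A + 2^(j+1)*((1+a)/2))/E := by push_cast; rw [pow_succ]; ring

theorem sound (E B n0 n1 n2 : ℕ) (hE : 0 < E) (hB : 0 < B) (dsc : Box) (G : ℝ → ℝ → ℝ → ℝ) (Dom : ℝ → ℝ → ℝ → Prop)
    (hd : ∀ A0 j0 A1 j1 A2 j2, dsc A0 j0 A1 j1 A2 j2 = true → ∀ x y z, InB E A0 j0 x → InB E A1 j1 y → InB E A2 j2 z → Dom x y z → False) (t : Tr) :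
    ∀ p A0 j0 A1 j1 A2 j2, chk (B+1) (fM B n0 n1 n2) (fT B n0 n1 n2) (f0 B n0 n1 n2) (f1 B n0 n1 n2) (f2 B n0 n1 n2) ((n2+1)*(n1+1)) (n2+1) n0 n1 n2 dsc t p A0 j0 A1 j1 A2 j2 = true →
     (∀ n, dig (B+1) p n < 2^B) →
     (∀ a b c : ℝ, (0 ≤ a ∧ a ≤ 1) → (0 ≤ b ∧ b ≤ 1) → (0 ≤ c ∧ c ≤ 1) →
        T3 n0 n1 n2 (Ln B n1 n2 p) a b c ≤ G ((A0+2^j0*a)/E) ((A1+2^j1*b)/E) ((A2+2^j2*c)/E)) →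
     ∀ x y z, InB E A0 j0 x → InB E A1 j1 y → InB E A2 j2 z → Dom x y z → (2:ℝ)^(B-1) ≤ G x y z := by
  have half : ∀ a : ℝ, 0 ≤ a ∧ a ≤ 1 → 0 ≤ a/2 ∧ a/2 ≤ 1 := fun a h => ⟨by linarith [h.1], by linarith [h.2]⟩
  have half' : ∀ a : ℝ, 0 ≤ a ∧ a ≤ 1 → 0 ≤ (1+a)/2 ∧ (1+a)/2 ≤ 1 := fun a h => ⟨by linarith [h.1], by linarith [h.2]⟩
  induction t with
  | lf =>
    intro p A0 j0 A1 j1 A2 j2 hc hp hT x y z hx hy hz hD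
    have hc : or (dsc A0 j0 A1 j1 A2 j2) (Nat.beq (p &&& fT B n0 n1 n2) (fT B n0 n1 n2)) = true := hc
    rw [Bool.or_eq_true] at hc
    rcases hc with hc | hc
    · exact (hd _ _ _ _ _ _ hc x y z hx hy hz hD).elim
    · have hc := Nat.eq_of_beq_eq_true hc
      have loc : ∀ A j x, InB E A j x → ∃ a : ℝ, (0 ≤ a ∧ a ≤ 1) ∧ ((A:ℝ)+2^j*a)/E = x := by
        intro A j x ⟨h1, h2, h3, h4⟩
        have hp : (0:ℝ) < 2^j := by positivity
        have hE' : (0:ℝ) < E := by exact_mod_cast hE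
        refine ⟨(E*x - A)/2^j, ⟨div_nonneg (by linarith) hp.le, (div_le_one hp).2 (by linarith)⟩, ?_⟩
        field_simp; ring
      obtain ⟨a, ha, rfl⟩ := loc _ _ _ hx
      obtain ⟨b, hb, rfl⟩ := loc _ _ _ hy
      obtain ⟨c, hc', rfl⟩ := loc _ _ _ hz
      exact (leaf_ok B n0 n1 n2 p hB hc a b c ha hb hc').trans (hT a b c ha hb hc')
  | nx l r ihl ihr =>
    intro p A0 j0 A1 j1 A2 j2 hc hp hT x y z hx hy hz hD
    cases j0 with
    | zero => rw [chk_x0] at hc; exact absurd hc (by simp)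
    | succ j =>
      rw [chk_x, Bool.and_eq_true] at hc
      rcases InB_split hx with hx | hx
      · refine ihl _ _ _ _ _ _ _ hc.1 ((ax0 B n0 n1 n2).lft_lt _ _) ?_ x y z hx hy hz hD
        intro a b c ha hb hc
        rw [InB_half1 E A0 j a]
        exact (T3_l0 p hp a b c ha hb hc).trans (hT _ _ _ (half a ha) hb hc)
      · refine ihr _ _ _ _ _ _ _ hc.2 ((ax0 B n0 n1 n2).rgt_lt _ _) ?_ x y z hx hy hz hD
        intro a b c ha hb hc
        rw [InB_half2]
        exact (T3_r0 p hp a b c ha hb hc).trans (hT _ _ _ (half' a ha) hb hc)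
  | ny l r ihl ihr =>
    intro p A0 j0 A1 j1 A2 j2 hc hp hT x y z hx hy hz hD
    cases j1 with
    | zero => rw [chk_y0] at hc; exact absurd hc (by simp)
    | succ j =>
      rw [chk_y, Bool.and_eq_true] at hc
      rcases InB_split hy with hy | hy
      · refine ihl _ _ _ _ _ _ _ hc.1 ((ax1 B n0 n1 n2).lft_lt _ _) ?_ x y z hx hy hz hD
        intro a b c ha hb hc
        rw [InB_half1 E A1 j b]
        exact (T3_l1 p hp a b c ha hb hc).trans (hT _ _ _ ha (half b hb) hc)
      · refine ihr _ _ _ _ _ _ _ hc.2 ((ax1 B n0 n1 n2).rgt_lt _ _) ?_ x y z hx hy hz hD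
        intro a b c ha hb hc
        rw [InB_half2]
        exact (T3_r1 p hp a b c ha hb hc).trans (hT _ _ _ ha (half' b hb) hc)
  | nz l r ihl ihr =>
    intro p A0 j0 A1 j1 A2 j2 hc hp hT x y z hx hy hz hD
    cases j2 with
    | zero => rw [chk_z0] at hc; exact absurd hc (by simp)
    | succ j =>
      rw [chk_z, Bool.and_eq_true] at hc
      rcases InB_split hz with hz | hz
      · refine ihl _ _ _ _ _ _ _ hc.1 ((ax2 B n0 n1 n2).lft_lt _ _) ?_ x y z hx hy hz hD
        intro a b c ha hb hc
        rw [InB_half1 E A2 j c]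
        exact (T3_l2 p hp a b c ha hb hc).trans (hT _ _ _ ha hb (half c hc))
      · refine ihr _ _ _ _ _ _ _ hc.2 ((ax2 B n0 n1 n2).rgt_lt _ _) ?_ x y z hx hy hz hD
        intro a b c ha hb hc
        rw [InB_half2]
        exact (T3_r2 p hp a b c ha hb hc).trans (hT _ _ _ ha hb (half' c hc))
end Kiss

namespace Kiss
open Finset
abbrev En := List (List ℤ) × List ℤ
section gen
variable {R : Type*} [CommRing R]
def hv (U e : R) : List ℤ → R → R → R
  | [], h, _ => h
  | c :: cs, h, up => hv U e cs (h*e + c*up) (up*U)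
def hq (U e : R) : List ℤ → R
  | [] => 0
  | c :: cs => hv U e cs c U
def aK (U eu V ev : R) : List (List ℤ) → R → R
  | [], acc => acc
  | q :: qs, acc => aK U eu V ev qs (acc*(eu*ev) + hq U eu q * hq V ev q)
def cK (w r : R) (b : Bool) (cs : List ℤ) : R := hq r (w*w) cs * (cond b w 1)
def ff (U eu V ev w r et : R) : List En → Bool → R → R
  | [], _, tot => tot
  | q :: Q, b, tot => ff U eu V ev w r et Q (not b) (tot*et + aK U eu V ev q.1 0 * cK w r b q.2)

def fh (Q : List En) (x x' y y' z z' : R) : R :=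
  let U := x - 2*x'; let V := y - 2*y'; let T := z - 2*z'
  let eu := 2*x+2*x'; let ev := 2*y+2*y'; let et := 2*z+2*z'
  ff U eu V ev (T*(eu*ev) - U*V*et) ((eu*eu - U*U)*(ev*ev - V*V)*(et*et)) et Q false 0
def gh (Q : List En) (x x' y y' z z' : R) : R :=
  fh Q x x' y y' z z' + fh Q y y' z z' x x' + fh Q z z' x x' y y'
def ph (Q P : List En) (x x' : R) : R :=
  let U := x - 2*x'; let eu := 2*x+2*x'
  ff U eu U eu (eu*eu-U*U) ((eu*eu-U*U)*(eu*eu-U*U)) 1 Q false 0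
   + (2 * ff U eu 1 1 0 0 1 Q false 0 + ff 0 1 0 1 U (eu*eu) eu P false 0) * (eu^16)
end gen

section map
variable {R S : Type*} [CommRing R] [CommRing S] (φ : R →+* S)
theorem map_hv (U e : R) (cs : List ℤ) : ∀ h up, φ (hv U e cs h up) = hv (φ U) (φ e) cs (φ h) (φ up) := by
  induction cs with
  | nil => intros; rfl
  | cons c cs ih => intro h up; simp only [hv]; rw [ih]; simp
theorem map_hq (U e : R) (cs : List ℤ) : φ (hq U e cs) = hq (φ U) (φ e) cs := by
  cases cs with
  | nil => simp [hq]
  | cons c cs => simp [hq, map_hv]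
theorem map_aK (U eu V ev : R) (qs : List (List ℤ)) : ∀ acc, φ (aK U eu V ev qs acc) = aK (φ U) (φ eu) (φ V) (φ ev) qs (φ acc) := by
  induction qs with
  | nil => intros; rfl
  | cons c cs ih => intro h; simp only [aK]; rw [ih]; simp [map_hq]
theorem map_cK (w r : R) (b : Bool) (cs : List ℤ) : φ (cK w r b cs) = cK (φ w) (φ r) b cs := by
  cases b <;> simp [cK, map_hq]
theorem map_ff (U eu V ev w r et : R) (Q : List En) : ∀ b tot, φ (ff U eu V ev w r et Q b tot) = ff (φ U) (φ eu) (φ V) (φ ev) (φ w) (φ r) (φ et) Q b (φ tot) := by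
  induction Q with
  | nil => intros; rfl
  | cons c cs ih => intro b h; simp only [ff]; rw [ih]; simp [map_aK, map_cK]
theorem map_fh (Q : List En) (x x' y y' z z' : R) : φ (fh Q x x' y y' z z') = fh Q (φ x) (φ x') (φ y) (φ y') (φ z) (φ z') := by
  have h2 : φ 2 = 2 := map_ofNat φ 2
  simp [fh, map_ff, h2]
theorem map_gh (Q : List En) (x x' y y' z z' : R) : φ (gh Q x x' y y' z z') = gh Q (φ x) (φ x') (φ y) (φ y') (φ z) (φ z') := by
  simp [gh, map_fh]
theorem map_ph (Q P : List En) (x x' : R) : φ (ph Q P x x') = ph Q P (φ x) (φ x') := by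
  have h2 : φ 2 = 2 := map_ofNat φ 2
  simp [ph, map_ff, h2]
end map

abbrev MP := MvPolynomial (Fin 6) ℤ
open MvPolynomial
def Dm (p q : MP) : Prop := ∀ m, |coeff m p| ≤ coeff m q
theorem Dm.add {p q p' q' : MP} (h : Dm p q) (h' : Dm p' q') : Dm (p+p') (q+q') := fun m => by
  rw [coeff_add, coeff_add]; exact (abs_add_le _ _).trans (add_le_add (h m) (h' m))
theorem Dm.neg {p q : MP} (h : Dm p q) : Dm (-p) q := fun m => by
  rw [coeff_neg, abs_neg]; exact h m
theorem Dm.sub {p q p' q' : MP} (h : Dm p q) (h' : Dm p' q') : Dm (p-p') (q+q') := by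
  rw [sub_eq_add_neg]; exact h.add h'.neg
theorem Dm.mul {p q p' q' : MP} (h : Dm p q) (h' : Dm p' q') : Dm (p*p') (q*q') := fun m => by
  rw [coeff_mul, coeff_mul]
  refine (Finset.abs_sum_le_sum_abs _ _).trans (Finset.sum_le_sum fun x _ => ?_)
  rw [abs_mul]
  exact mul_le_mul (h _) (h' _) (abs_nonneg _) ((abs_nonneg _).trans (h _))
theorem dm_C (c : ℤ) : Dm (C c) (C |c|) := fun m => by
  rw [coeff_C, coeff_C]; split_ifs <;> simp
theorem Dm.cast (c : ℤ) : Dm (c : MP) ((|c| : ℤ) : MP) := by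
  have := dm_C c; simpa using this
theorem Dm.one : Dm 1 1 := by simpa using dm_C 1
theorem Dm.two : Dm 2 2 := by simpa using dm_C 2
theorem Dm.zero : Dm 0 0 := by simpa using dm_C 0
theorem dm_X (i : Fin 6) : Dm (X i) (X i) := fun m => by
  rw [coeff_X]; split_ifs <;> simp
theorem Dm.pow {p q : MP} (h : Dm p q) (n : ℕ) : Dm (p^n) (q^n) := by
  induction n with
  | zero => simpa using Dm.one
  | succ n ih => rw [pow_succ, pow_succ]; exact ih.mul h

def absQ (Q : List En) : List En := Q.map fun q => (q.1.map fun l => l.map abs, q.2.map abs)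

theorem dm_hv {U U' e e' : MP} (hU : Dm U U') (he : Dm e e') (cs : List ℤ) : ∀ h h' up up', Dm h h' → Dm up up' → Dm (hv U e cs h up) (hv U' e' (cs.map abs) h' up') := by
  induction cs with
  | nil => intro h h' up up' a b; exact a
  | cons c cs ih => intro h h' up up' a b; exact ih _ _ _ _ ((a.mul he).add ((Dm.cast c).mul b)) (b.mul hU)
theorem dm_hq {U U' e e' : MP} (hU : Dm U U') (he : Dm e e') (cs : List ℤ) : Dm (hq U e cs) (hq U' e' (cs.map abs)) := by
  cases cs with
  | nil => exact Dm.zero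
  | cons c cs => exact dm_hv hU he cs _ _ _ _ (Dm.cast c) hU
theorem dm_aK {U U' e e' V V' f f' : MP} (hU : Dm U U') (he : Dm e e') (hV : Dm V V') (hf : Dm f f') (qs : List (List ℤ)) :
    ∀ acc acc', Dm acc acc' → Dm (aK U e V f qs acc) (aK U' e' V' f' (qs.map fun l => l.map abs) acc') := by
  induction qs with
  | nil => intro a a' h; exact h
  | cons c cs ih => intro a a' h; exact ih _ _ ((h.mul (he.mul hf)).add ((dm_hq hU he c).mul (dm_hq hV hf c)))
theorem dm_cK {w w' r r' : MP} (hw : Dm w w') (hr : Dm r r') (b : Bool) (cs : List ℤ) : Dm (cK w r b cs) (cK w' r' b (cs.map abs)) := by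
  refine (dm_hq hr (hw.mul hw) cs).mul ?_
  cases b
  · exact Dm.one
  · exact hw
theorem dm_ff {U U' e e' V V' f f' w w' r r' t t' : MP} (hU : Dm U U') (he : Dm e e') (hV : Dm V V') (hf : Dm f f') (hw : Dm w w') (hr : Dm r r') (ht : Dm t t') (Q : List En) :
    ∀ b tot tot', Dm tot tot' → Dm (ff U e V f w r t Q b tot) (ff U' e' V' f' w' r' t' (absQ Q) b tot') := by
  induction Q with
  | nil => intro b a a' h; exact h
  | cons c cs ih => intro b a a' h; exact ih _ _ _ ((h.mul ht).add ((dm_aK hU he hV hf c.1 _ _ Dm.zero).mul (dm_cK hw hr b c.2)))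

theorem Dm.bound {p q : MP} (h : Dm p q) (m) : |coeff m p| ≤ eval (fun _ => 1) q := by
  refine (h m).trans ?_
  have h0 : ∀ m, 0 ≤ coeff m q := fun m => (abs_nonneg _).trans (h m)
  rw [eval_eq']
  simp only [one_pow, prod_const_one, mul_one]
  by_cases hm : m ∈ q.support
  · exact Finset.single_le_sum (f := fun m => coeff m q) (fun i _ => h0 i) hm
  · rw [notMem_support_iff.1 hm]; exact Finset.sum_nonneg fun i _ => h0 i

abbrev Dg := ℕ × ℕ × ℕ
def wt : Fin 6 → Dg := ![(1,0,0),(1,0,0),(0,1,0),(0,1,0),(0,0,1),(0,0,1)]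
abbrev Hm (p : MP) (d : Dg) : Prop := IsWeightedHomogeneous wt p d
theorem Hm.add {p q : MP} {d : Dg} (h : Hm p d) (h' : Hm q d) : Hm (p+q) d := IsWeightedHomogeneous.add h h'
theorem Hm.sub {p q : MP} {d : Dg} (h : Hm p d) (h' : Hm q d) : Hm (p-q) d :=
  (weightedHomogeneousSubmodule ℤ wt d).sub_mem h h'
theorem Hm.mul' {p q : MP} {d d' d'' : Dg} (h : Hm p d) (h' : Hm q d') (e : d + d' = d'') : Hm (p*q) d'' := e ▸ IsWeightedHomogeneous.mul h h'
theorem Hm.cast (c : ℤ) : Hm (c : MP) 0 := by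
  have := isWeightedHomogeneous_C (R := ℤ) wt c; simpa using this
theorem Hm.one : Hm 1 0 := isWeightedHomogeneous_one _ _
theorem Hm.zero (d : Dg) : Hm 0 d := isWeightedHomogeneous_zero _ _ _
theorem Hm.two {p : MP} {d : Dg} (h : Hm p d) : Hm (2*p) d := by rw [two_mul]; exact h.add h
theorem hm_X (i : Fin 6) : Hm (X i) (wt i) := isWeightedHomogeneous_X _ _ _

theorem hm_hv {U e : MP} {a : Dg} (hU : Hm U a) (he : Hm e a) (cs : List ℤ) : ∀ n h up, Hm h (n•a) → Hm up ((n+1)•a) → Hm (hv U e cs h up) ((n+cs.length)•a) := by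
  induction cs with
  | nil => intro n h up h1 h2; exact h1
  | cons c cs ih =>
    intro n h up h1 h2
    have := ih (n+1) _ _ ((h1.mul' he (by rw [succ_nsmul])).add ((Hm.cast c).mul' h2 (zero_add _))) (h2.mul' hU (by rw [succ_nsmul _ (n+1)]))
    rw [List.length_cons, show n + (cs.length+1) = n+1+cs.length by ring]; exact this
theorem hm_hq {U e : MP} {a : Dg} (hU : Hm U a) (he : Hm e a) (cs : List ℤ) (n : ℕ) (hn : cs.length = n+1) : Hm (hq U e cs) (n•a) := by
  cases cs with
  | nil => simp at hn
  | cons c cs =>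
    have := hm_hv hU he cs 0 c U (by simpa using Hm.cast c) (by simpa using hU)
    simp at hn; rw [zero_add, hn] at this; exact this
def wfA : ℕ → List (List ℤ) → Prop
  | _, [] => True
  | n, q :: qs => q.length = n+1 ∧ wfA (n+1) qs
def wfB : ℕ → List (List ℤ) → Bool
  | _, [] => true
  | n, q :: qs => Nat.beq q.length (n+1) && wfB (n+1) qs
theorem wfB_A (qs : List (List ℤ)) : ∀ n, wfB n qs = true → wfA n qs := by
  induction qs with
  | nil => intros; trivial
  | cons q qs ih => intro n h; simp only [wfB, Bool.and_eq_true] at h; exact ⟨Nat.eq_of_beq_eq_true h.1, ih _ h.2⟩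
theorem hm_aK {U e V f : MP} {a b : Dg} (hU : Hm U a) (he : Hm e a) (hV : Hm V b) (hf : Hm f b) (qs : List (List ℤ)) :
    ∀ n acc, wfA (n+1) qs → Hm acc (n•(a+b)) → Hm (aK U e V f qs acc) ((n+qs.length)•(a+b)) := by
  induction qs with
  | nil => intro n acc _ h; exact h
  | cons q qs ih =>
    intro n acc h1 h2
    have := ih (n+1) _ h1.2 ((h2.mul' (he.mul' hf rfl) (by rw [succ_nsmul])).add ((hm_hq hU he q (n+1) h1.1).mul' (hm_hq hV hf q (n+1) h1.1) (by rw [nsmul_add])))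
    rw [List.length_cons, show n + (qs.length+1) = n+1+qs.length by ring]; exact this
theorem hm_aK0 {U e V f : MP} {a b : Dg} (hU : Hm U a) (he : Hm e a) (hV : Hm V b) (hf : Hm f b) (qs : List (List ℤ)) (n : ℕ) (hn : qs.length = n+1)
    (h1 : wfA 0 qs) : Hm (aK U e V f qs 0) (n•(a+b)) := by
  cases qs with
  | nil => simp at hn
  | cons q qs =>
    simp at hn
    have := hm_aK hU he hV hf qs 0 (0*(e*f) + hq U e q * hq V f q) h1.2 (by
      rw [zero_mul, zero_add, zero_nsmul]
      exact (hm_hq hU he q 0 h1.1).mul' (hm_hq hV hf q 0 h1.1) (by simp))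
    rw [zero_add, hn] at this; exact this
theorem hm_cK {w r : MP} {c : Dg} (hw : Hm w c) (hr : Hm r (c+c)) (b : Bool) (cs : List ℤ) (n : ℕ) (hn : cs.length = n+1) :
    Hm (cK w r b cs) ((2*n + b.toNat)•c) := by
  refine (hm_hq hr (hw.mul' hw rfl) cs n hn).mul' (d' := b.toNat•c) ?_ ?_
  · cases b
    · simpa using Hm.one
    · simpa using hw
  · rw [add_nsmul, mul_comm, mul_nsmul, two_nsmul, nsmul_add]
def wfF (K : ℕ) : ℕ → List En → Bool
  | k, [] => Nat.beq k (K+1)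
  | k, q :: Q => Nat.beq (q.1.length + k) (K+1) && wfB 0 q.1 && Nat.beq (q.2.length) (k/2+1) && wfF K (k+1) Q
theorem wfF_le (K : ℕ) (Q : List En) : ∀ k, wfF K k Q = true → k ≤ K+1 := by
  cases Q with
  | nil => intro k h; exact (Nat.eq_of_beq_eq_true h).le
  | cons q Q => intro k h; simp only [wfF, Bool.and_eq_true] at h; have := Nat.eq_of_beq_eq_true h.1.1.1; omega
theorem hm_ff {U e V f w r t : MP} {a b c τ : Dg} (hU : Hm U a) (he : Hm e a) (hV : Hm V b) (hf : Hm f b) (hw : Hm w c) (hr : Hm r (c+c)) (ht : Hm t τ)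
    (hc : a + b + τ = c) (K : ℕ) (Q : List En) : ∀ k o tot, o.toNat = (k+1)%2 → wfF K (k+1) Q = true → Hm tot ((K-k)•(a+b) + k•c) → Hm (ff U e V f w r t Q o tot) (K•c) := by
  induction Q with
  | nil =>
    intro k o tot ho hwf h
    have := Nat.eq_of_beq_eq_true hwf
    have : k = K := by omega
    subst this; simpa [Kiss.ff] using h
  | cons q Q ih =>
    intro k o tot ho hwf h
    have hle := wfF_le K _ _ hwf
    simp only [wfF, Bool.and_eq_true] at hwf
    obtain ⟨⟨⟨h1, h2⟩, h3⟩, h4⟩ := hwf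
    have h1 := Nat.eq_of_beq_eq_true h1
    have h3 := Nat.eq_of_beq_eq_true h3
    have hwl := wfF_le K _ _ h4
    have e1 : K - k = (K-(k+1)) + 1 := by omega
    refine ih (k+1) (not o) _ ?_ h4 ?_
    · cases o <;> simp at ho ⊢ <;> omega
    · refine (h.mul' ht ?_).add ((hm_aK0 hU he hV hf q.1 (K-(k+1)) (by omega) (wfB_A _ _ h2)).mul' (hm_cK hw hr o q.2 ((k+1)/2) h3) ?_)
      · rw [e1, succ_nsmul, succ_nsmul, ← hc]; abel
      · rw [ho, Nat.div_add_mod]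
theorem hm_ff0 {U e V f w r t : MP} {a b c τ : Dg} (hU : Hm U a) (he : Hm e a) (hV : Hm V b) (hf : Hm f b) (hw : Hm w c) (hr : Hm r (c+c)) (ht : Hm t τ)
    (hc : a + b + τ = c) (K : ℕ) (Q : List En) (hwf : wfF K 0 Q = true) : Hm (ff U e V f w r t Q false 0) (K•c) := by
  cases Q with
  | nil => exact Hm.zero _
  | cons q Q =>
    have hle := wfF_le K _ _ hwf
    simp only [wfF, Bool.and_eq_true] at hwf
    obtain ⟨⟨⟨h1, h2⟩, h3⟩, h4⟩ := hwf
    have h1 := Nat.eq_of_beq_eq_true h1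
    have h3 := Nat.eq_of_beq_eq_true h3
    refine hm_ff hU he hV hf hw hr ht hc K Q 0 true _ rfl h4 ?_
    rw [zero_mul, zero_add]
    refine ((hm_aK0 hU he hV hf q.1 K (by omega) (wfB_A _ _ h2)).mul' (hm_cK hw hr false q.2 0 h3) ?_)
    simp
end Kiss

namespace Kiss
open Finset MvPolynomial
theorem hm_fh {x x' y y' z z' : MP} {a b τ : Dg} (hx : Hm x a) (hx' : Hm x' a) (hy : Hm y b) (hy' : Hm y' b) (hz : Hm z τ) (hz' : Hm z' τ)
    (Q : List En) (h : wfF 16 0 Q = true) : Hm (fh Q x x' y y' z z') (16•(a+b+τ)) := by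
  have hU := hx.sub hx'.two
  have hV := hy.sub hy'.two
  have hT := hz.sub hz'.two
  have hu := hx.two.add hx'.two
  have hv := hy.two.add hy'.two
  have ht := hz.two.add hz'.two
  refine hm_ff0 hU hu hV hv ?_ ?_ ht rfl 16 Q h
  · exact (hT.mul' (hu.mul' hv rfl) (by abel)).sub ((hU.mul' hV rfl).mul' ht rfl)
  · exact ((((hu.mul' hu rfl).sub (hU.mul' hU rfl)).mul' ((hv.mul' hv rfl).sub (hV.mul' hV rfl)) rfl).mul' (ht.mul' ht rfl) (by abel))
theorem hm_gh (Q : List En) (h : wfF 16 0 Q = true) : Hm (gh Q (X 0) (X 1) (X 2) (X 3) (X 4) (X 5)) (16,16,16) := by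
  have a0 : Hm (X 0) (1,0,0) := hm_X 0
  have a1 : Hm (X 1) (1,0,0) := hm_X 1
  have a2 : Hm (X 2) (0,1,0) := hm_X 2
  have a3 : Hm (X 3) (0,1,0) := hm_X 3
  have a4 : Hm (X 4) (0,0,1) := hm_X 4
  have a5 : Hm (X 5) (0,0,1) := hm_X 5
  exact ((hm_fh a0 a1 a2 a3 a4 a5 Q h).add (hm_fh a2 a3 a4 a5 a0 a1 Q h)).add (hm_fh a4 a5 a0 a1 a2 a3 Q h)
theorem Hm.pow' {p : MP} {d : Dg} (h : Hm p d) (n : ℕ) : Hm (p^n) (n•d) := IsWeightedHomogeneous.pow h n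
theorem hm_ph (Q P : List En) (h : wfF 16 0 Q = true) (h' : wfF 16 0 P = true) : Hm (ph Q P (X 0) (X 1)) (32,0,0) := by
  have a0 : Hm (X 0) (1,0,0) := hm_X 0
  have a1 : Hm (X 1) (1,0,0) := hm_X 1
  have hU := a0.sub a1.two
  have hu := a0.two.add a1.two
  have hw := (hu.mul' hu rfl).sub (hU.mul' hU rfl)
  have p1 := hm_ff0 hU hu hU hu hw (hw.mul' hw rfl) Hm.one rfl 16 Q h
  have p2 := hm_ff0 (c := (1,0,0)) hU hu Hm.one Hm.one (Hm.zero _) (Hm.zero _) Hm.one rfl 16 Q h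
  have p3 := hm_ff0 (c := (1,0,0)) (Hm.zero 0) Hm.one (Hm.zero 0) Hm.one hU (hu.mul' hu rfl) hu rfl 16 P h'
  exact p1.add ((p2.two.add p3).mul' (hu.pow' 16) rfl)
section
variable {R : Type*} [CommRing R]
def fhM (Q : List En) (x x' y y' z z' : R) : R :=
  let U := x + 2*x'; let V := y + 2*y'; let T := z + 2*z'
  let eu := 2*x+2*x'; let ev := 2*y+2*y'; let et := 2*z+2*z'
  ff U eu V ev (T*(eu*ev) + U*V*et) ((eu*eu + U*U)*(ev*ev + V*V)*(et*et)) et Q false 0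
def phM (Q P : List En) (x x' : R) : R :=
  let U := x + 2*x'; let eu := 2*x+2*x'
  ff U eu U eu (eu*eu+U*U) ((eu*eu+U*U)*(eu*eu+U*U)) 1 Q false 0
   + (2 * ff U eu 1 1 0 0 1 Q false 0 + ff 0 1 0 1 U (eu*eu) eu P false 0) * (eu^16)
end
theorem dm_fh {x x' y y' z z' : MP} (hx : Dm x x) (hx' : Dm x' x') (hy : Dm y y) (hy' : Dm y' y') (hz : Dm z z) (hz' : Dm z' z')
    (Q : List En) : Dm (fh Q x x' y y' z z') (fhM (absQ Q) x x' y y' z z') := by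
  have two {p : MP} (h : Dm p p) : Dm (2*p) (2*p) := Dm.two.mul h
  have hU := hx.sub (two hx')
  have hV := hy.sub (two hy')
  have hT := hz.sub (two hz')
  have hu := (two hx).add (two hx')
  have hv := (two hy).add (two hy')
  have ht := (two hz).add (two hz')
  refine dm_ff hU hu hV hv ?_ ?_ ht Q _ _ _ Dm.zero
  · exact (hT.mul (hu.mul hv)).sub ((hU.mul hV).mul ht)
  · exact (((hu.mul hu).sub (hU.mul hU)).mul ((hv.mul hv).sub (hV.mul hV))).mul (ht.mul ht)
theorem dm_ph {x x' : MP} (hx : Dm x x) (hx' : Dm x' x') (Q P : List En) : Dm (ph Q P x x') (phM (absQ Q) (absQ P) x x') := by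
  have two {p : MP} (h : Dm p p) : Dm (2*p) (2*p) := Dm.two.mul h
  have hU := hx.sub (two hx')
  have hu := (two hx).add (two hx')
  have hw := (hu.mul hu).sub (hU.mul hU)
  exact (dm_ff hU hu hU hu hw (hw.mul hw) Dm.one Q _ _ _ Dm.zero).add
    (((Dm.two.mul (dm_ff hU hu Dm.one Dm.one Dm.zero Dm.zero Dm.one Q _ _ _ Dm.zero)).add
     (dm_ff Dm.zero Dm.one Dm.zero Dm.one hU (hu.mul hu) hu P _ _ _ Dm.zero)).mul (hu.pow 16))
theorem bd_gh (Q : List En) (m : Fin 6 →₀ ℕ) : |coeff m (gh Q (X 0) (X 1) (X 2) (X 3) (X 4) (X 5))| ≤ 3 * ff (3:ℤ) 4 3 4 84 10000 4 (absQ Q) false 0 := by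
  have := (((dm_fh (dm_X 0) (dm_X 1) (dm_X 2) (dm_X 3) (dm_X 4) (dm_X 5) Q).add (dm_fh (dm_X 2) (dm_X 3) (dm_X 4) (dm_X 5) (dm_X 0) (dm_X 1) Q)).add
    (dm_fh (dm_X 4) (dm_X 5) (dm_X 0) (dm_X 1) (dm_X 2) (dm_X 3) Q)).bound m
  refine this.trans (le_of_eq ?_)
  have h2 : (eval fun _ : Fin 6 => (1:ℤ)) 2 = 2 := map_ofNat _ 2
  simp only [fhM, map_add, map_ff, map_mul, eval_X, h2, map_zero]
  norm_num; ring
theorem bd_ph (Q P : List En) (m : Fin 6 →₀ ℕ) : |coeff m (ph Q P (X 0) (X 1))| ≤ ff (3:ℤ) 4 3 4 25 625 1 (absQ Q) false 0 + (2 * ff (3:ℤ) 4 1 1 0 0 1 (absQ Q) false 0 + ff (0:ℤ) 1 0 1 3 16 4 (absQ P) false 0) * 4^16 := by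
  have := (dm_ph (dm_X 0) (dm_X 1) Q P).bound m
  refine this.trans (le_of_eq ?_)
  have h2 : (eval fun _ : Fin 6 => (1:ℤ)) 2 = 2 := map_ofNat _ 2
  simp only [phM, map_add, map_ff, map_mul, eval_X, h2, map_zero, map_pow, map_one]
  norm_num
noncomputable def mon (n0 n1 n2 i j k : ℕ) : Fin 6 →₀ ℕ := Finsupp.equivFunOnFinite.symm ![i, n0-i, j, n1-j, k, n2-k]
noncomputable def cf (p : MP) (n0 n1 n2 i j k : ℕ) : ℤ := coeff (mon n0 n1 n2 i j k) p
theorem aeval_sum {R : Type*} [CommRing R] (f : Fin 6 → R) (p : MP) (n0 n1 n2 : ℕ) (h : Hm p (n0,n1,n2)) :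
    aeval f p = ∑ i ∈ range (n0+1), ∑ j ∈ range (n1+1), ∑ k ∈ range (n2+1),
      (cf p n0 n1 n2 i j k : R) * ((f 0^i*f 1^(n0-i))*(f 2^j*f 3^(n1-j))*(f 4^k*f 5^(n2-k))) := by
  rw [aeval_def, eval₂_eq']
  have hinj : Set.InjOn (fun t : ℕ×ℕ×ℕ => mon n0 n1 n2 t.1 t.2.1 t.2.2) (range (n0+1) ×ˢ range (n1+1) ×ˢ range (n2+1) : Finset (ℕ×ℕ×ℕ)) := by
    rintro ⟨a,b,c⟩ _ ⟨a',b',c'⟩ _ e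
    have e0 := DFunLike.congr_fun e 0
    have e2 := DFunLike.congr_fun e 2
    have e4 := DFunLike.congr_fun e 4
    simp [mon] at e0 e2 e4
    simp [e0, e2, e4]
  have hs : p.support ⊆ (range (n0+1) ×ˢ range (n1+1) ×ˢ range (n2+1)).image (fun t : ℕ×ℕ×ℕ => mon n0 n1 n2 t.1 t.2.1 t.2.2) := by
    intro m hm
    have := h (mem_support_iff.1 hm)
    rw [Finsupp.weight_apply, Finsupp.sum_fintype _ _ (by simp)] at this
    simp [Fin.sum_univ_six, wt, Prod.ext_iff] at this
    obtain ⟨t0, t1, t2⟩ := this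
    rw [mem_image]
    refine ⟨(m 0, m 2, m 4), by simp; omega, ?_⟩
    ext i
    fin_cases i <;> simp [mon] <;> omega
  rw [sum_subset hs (fun m _ hm => by rw [notMem_support_iff.1 hm]; simp), sum_image hinj, sum_product]
  refine sum_congr rfl fun i _ => ?_
  rw [sum_product]
  refine sum_congr rfl fun j _ => sum_congr rfl fun k _ => ?_
  simp [Fin.prod_univ_six, mon, cf]
  ring
theorem pk_sum (w N : ℕ) (D : ℕ → ℕ) : ((pk w N D : ℕ) : ℤ) = ∑ n ∈ range N, (D n : ℤ) * (2^w)^n := by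
  induction N with
  | zero => rfl
  | succ n ih => rw [pk_succ, sum_range_succ, Nat.shiftLeft_eq]; push_cast; rw [ih, pow_mul]
theorem extract (p : MP) (n0 n1 n2 W : ℕ) (hW : 0 < W) (h : Hm p (n0,n1,n2)) (hb : ∀ m, |coeff m p| < 2^(W-1)) (Φ : ℤ) (Ψ : ℕ)
    (hΦ : Φ = aeval ![2^(W*((n2+1)*(n1+1))), 1, 2^(W*(n2+1)), 1, 2^W, 1] p)
    (hΨ : (Ψ:ℤ) = Φ + (pack3 W n0 n1 n2 fun _ _ _ => 2^(W-1) : ℕ)) (i j k : ℕ) (hi : i ≤ n0) (hj : j ≤ n1) (hk : k ≤ n2) :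
    (dig W Ψ ((n2+1)*(n1+1)*i + ((n2+1)*j + k)) : ℤ) = cf p n0 n1 n2 i j k + 2^(W-1) := by
  have hb' : ∀ i j k, ((cf p n0 n1 n2 i j k + 2^(W-1)).toNat : ℤ) = cf p n0 n1 n2 i j k + 2^(W-1) := fun i j k => by
    rw [Int.toNat_of_nonneg]; have := abs_lt.1 (hb (mon n0 n1 n2 i j k)); unfold cf; linarith
  have key : Ψ = pack3 W n0 n1 n2 fun i j k => (cf p n0 n1 n2 i j k + 2^(W-1)).toNat := by
    zify
    rw [hΨ, hΦ, aeval_sum _ p n0 n1 n2 h]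
    simp only [pack3, pk_sum, sum_mul, ← sum_add_distrib]
    refine sum_congr rfl fun i _ => sum_congr rfl fun j _ => sum_congr rfl fun k _ => ?_
    rw [hb']
    simp
    ring
  rw [key, dig_pack3 _ _ _ _ _ _ _ _ _ hj hk, if_pos hi, hb']
  intro i _ j _ k _
  zify
  rw [hb']
  have := abs_lt.1 (hb (mon n0 n1 n2 i j k))
  have e : (2:ℤ)^W = 2^(W-1) + 2^(W-1) := by
    conv_lhs => rw [show W = W-1+1 by omega, pow_succ]
    ring
  unfold cf; linarith
end Kiss

namespace Kiss
open Finset MvPolynomial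
theorem Bz_sum (n : ℕ) : ∀ (c : ℕ → ℝ) (x : ℝ), Bz n c x = ∑ ij ∈ antidiagonal n, (n.choose ij.1 : ℝ) * (c ij.1 * (x^ij.1*(1-x)^ij.2)) := by
  induction n with
  | zero => intro c x; simp [Bz]
  | succ n ih =>
    intro c x
    rw [Bz, ih, ih, sum_antidiagonal_choose_succ_mul (fun i j => c i * (x^i*(1-x)^j)), mul_sum, mul_sum]
    congr 1
    · exact sum_congr rfl fun i _ => by ring
    · refine sum_congr rfl fun i hi => ?_
      rw [Nat.choose_symm_of_eq_add (mem_antidiagonal.1 hi).symm]; ring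
theorem Bz_div (n : ℕ) (c : ℕ → ℝ) (x : ℝ) : Bz n (fun i => c i / n.choose i) x = ∑ i ∈ range (n+1), c i * (x^i*(1-x)^(n-i)) := by
  rw [Bz_sum, Nat.sum_antidiagonal_eq_sum_range_succ (fun i j => (n.choose i : ℝ) * (c i / n.choose i * (x^i*(1-x)^j)))]
  refine sum_congr rfl fun i hi => ?_
  have : (n.choose i : ℝ) ≠ 0 := by
    have := Nat.choose_pos (mem_range_succ_iff.1 hi); positivity
  field_simp
theorem Bz_sm (n : ℕ) (a : ℝ) (c : ℕ → ℝ) (x : ℝ) : Bz n (fun i => a * c i) x = a * Bz n c x := by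
  have := Bz_lin n a 0 c c x; simpa using this
theorem Bz_dv (n : ℕ) (a : ℝ) (c : ℕ → ℝ) (x : ℝ) : Bz n (fun i => c i / a) x = Bz n c x / a := by
  have := Bz_sm n a⁻¹ c x; simpa [div_eq_inv_mul] using this
theorem T3_div (n0 n1 n2 : ℕ) (c : ℕ → ℕ → ℕ → ℝ) (x y z : ℝ) :
    T3 n0 n1 n2 (fun i j k => c i j k / (n0.choose i * n1.choose j * n2.choose k : ℕ)) x y z =
     ∑ i ∈ range (n0+1), ∑ j ∈ range (n1+1), ∑ k ∈ range (n2+1), c i j k * ((x^i*(1-x)^(n0-i))*(y^j*(1-y)^(n1-j))*(z^k*(1-z)^(n2-k))) := by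
  have h1 : ∀ i j, Bz n2 (fun k => c i j k / (n0.choose i * n1.choose j * n2.choose k : ℕ)) z
      = (∑ k ∈ range (n2+1), c i j k * (z^k*(1-z)^(n2-k))) / n0.choose i / n1.choose j := fun i j => by
    rw [← Bz_div, ← Bz_dv, ← Bz_dv]
    exact Bz_congr _ _ _ _ fun k _ => by push_cast; field_simp
  have h2 : ∀ i, Bz n1 (fun j => (∑ k ∈ range (n2+1), c i j k * (z^k*(1-z)^(n2-k))) / n0.choose i / n1.choose j) y
      = (∑ j ∈ range (n1+1), (∑ k ∈ range (n2+1), c i j k * (z^k*(1-z)^(n2-k))) * (y^j*(1-y)^(n1-j))) / n0.choose i := fun i => by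
    rw [← Bz_div, ← Bz_dv]
    exact Bz_congr _ _ _ _ fun k _ => by field_simp
  simp only [T3, h1, h2, Bz_div]
  refine sum_congr rfl fun i _ => ?_
  rw [sum_mul]
  refine sum_congr rfl fun j _ => ?_
  rw [sum_mul, sum_mul]
  exact sum_congr rfl fun k _ => by ring
theorem T3_lin (n0 n1 n2 : ℕ) (a b : ℝ) (c : ℕ → ℕ → ℕ → ℝ) (x y z : ℝ) :
    T3 n0 n1 n2 (fun i j k => a * c i j k + b) x y z = a * T3 n0 n1 n2 c x y z + b := by
  have h (n : ℕ) (c : ℕ → ℝ) (x : ℝ) : Bz n (fun i => a * c i + b) x = a * Bz n c x + b := by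
    have := Bz_lin n a b c (fun _ => 1) x; rw [Bz_const] at this; simpa using this
  simp only [T3, h]

def bn (n k : ℕ) : ℕ := n.factorial / (k.factorial * (n-k).factorial)
theorem bn_eq (n k : ℕ) (h : k ≤ n) : bn n k = n.choose k := (Nat.choose_eq_factorial_div_factorial h).symm
def lan (W B e α β c d : ℕ) : ℕ := (2^(W-1) + (2^(B-1+e)+α)*c - (d + β*c)) / (c*2^e)
def okl (W B e α β c d : ℕ) : Bool := and (Nat.ble (d+β*c) (2^(W-1)+(2^(B-1+e)+α)*c)) (Nat.ble (lan W B e α β c d + 1) (2^B))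
def allr (n : ℕ) (P : ℕ → Bool) : Bool := Nat.rec true (fun n ih => and (P n) ih) n
theorem allr_ok (n : ℕ) (P : ℕ → Bool) (h : allr n P = true) : ∀ i < n, P i = true := by
  induction n with
  | zero => intro i hi; omega
  | succ n ih =>
    have h' : and (P n) (allr n P) = true := h
    rw [Bool.and_eq_true] at h'
    intro i hi
    rcases Nat.lt_succ_iff_lt_or_eq.1 hi with h1 | h1
    · exact ih h'.2 i h1
    · rw [h1]; exact h'.1
theorem pk_congr (w N : ℕ) (D D' : ℕ → ℕ) (h : ∀ i < N, D i = D' i) : pk w N D = pk w N D' := by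
  induction N with
  | zero => rfl
  | succ n ih => rw [pk_succ, pk_succ, ih (fun i hi => h i (by omega)), h n (by omega)]
section
variable (W B e α β n0 n1 n2 Ψ : ℕ)
def rtD (i j k : ℕ) : ℕ := lan W B e α β (bn n0 i*bn n1 j*bn n2 k) (dig W Ψ ((n2+1)*(n1+1)*i + ((n2+1)*j + k)))
def packK : ℕ := pk ((B+1)*((n2+1)*(n1+1))) (n0+1) fun i => force (dig (W*((n2+1)*(n1+1))) Ψ i) fun pl => force (bn n0 i) fun bi =>
  pk ((B+1)*(n2+1)) (n1+1) fun j => force (dig (W*(n2+1)) pl j) fun rw => force (bi*bn n1 j) fun bj =>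
  pk (B+1) (n2+1) fun k => lan W B e α β (bj*bn n2 k) (dig W rw k)
def allK : Bool := allr (n0+1) fun i => force (dig (W*((n2+1)*(n1+1))) Ψ i) fun pl => force (bn n0 i) fun bi =>
  allr (n1+1) fun j => force (dig (W*(n2+1)) pl j) fun rw => force (bi*bn n1 j) fun bj =>
  allr (n2+1) fun k => okl W B e α β (bj*bn n2 k) (dig W rw k)
theorem dig3 (i j k : ℕ) (hj : j ≤ n1) (hk : k ≤ n2) : dig W (dig (W*(n2+1)) (dig (W*((n2+1)*(n1+1))) Ψ i) j) k = dig W Ψ ((n2+1)*(n1+1)*i + ((n2+1)*j + k)) := by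
  rw [dig_nest W ((n2+1)*(n1+1)) Ψ i _ (by nlinarith), dig_nest W (n2+1) _ j k (by omega)]
theorem packK_eq : packK W B e α β n0 n1 n2 Ψ = pack3 (B+1) n0 n1 n2 (rtD W B e α β n0 n1 n2 Ψ) := by
  refine pk_congr _ _ _ _ fun i _ => ?_
  rw [force_eq, force_eq]
  refine pk_congr _ _ _ _ fun j hj => ?_
  rw [force_eq, force_eq]
  refine pk_congr _ _ _ _ fun k hk => ?_
  rw [dig3 _ _ _ _ _ _ _ (by omega) (by omega), rtD]
theorem allK_ok (h : allK W B e α β n0 n1 n2 Ψ = true) (i j k : ℕ) (hi : i ≤ n0) (hj : j ≤ n1) (hk : k ≤ n2) :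
    okl W B e α β (bn n0 i*bn n1 j*bn n2 k) (dig W Ψ ((n2+1)*(n1+1)*i + ((n2+1)*j + k))) = true := by
  have h := allr_ok _ _ h i (by omega)
  rw [force_eq, force_eq] at h
  have h := allr_ok _ _ h j (by omega)
  rw [force_eq, force_eq] at h
  have h := allr_ok _ _ h k (by omega)
  rwa [dig3 _ _ _ _ _ _ _ (by omega) (by omega)] at h
end
noncomputable def run (W B e α β n0 n1 n2 K : ℕ) (dsc : Box) (t : Tr) (Φ : ℤ) : Bool :=
  Int.rec (fun Ψ => force Ψ fun Ψ => and (allK W B e α β n0 n1 n2 Ψ) (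
    force (fM B n0 n1 n2) fun a => force (fT B n0 n1 n2) fun b => force (f0 B n0 n1 n2) fun c0 => force (f1 B n0 n1 n2) fun c1 => force (f2 B n0 n1 n2) fun c2 =>
    force ((n2+1)*(n1+1)) fun s0 => force (n2+1) fun s1 => force (packK W B e α β n0 n1 n2 Ψ) fun p =>
    chk (B+1) a b c0 c1 c2 s0 s1 n0 n1 n2 dsc t p 0 K 0 K 0 K)) (fun _ => false) (Int.add Φ (Int.ofNat (pack3 W n0 n1 n2 fun _ _ _ => 2^(W-1))))
theorem InB01 (K : ℕ) (x : ℝ) (h : 0 ≤ x ∧ x ≤ 1) : InB (2^K) 0 K x := by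
  have : (0:ℝ) < 2^K := by positivity
  refine ⟨by simp, by push_cast; nlinarith, by push_cast; nlinarith, ?_⟩
  rcases h.2.lt_or_eq with h | h
  · left; push_cast; nlinarith
  · right; exact h
theorem run_ok (p : MP) (W B e α β n0 n1 n2 K : ℕ) (hW : 0 < W) (hB : 0 < B) (dsc : Box) (t : Tr) (Φ : ℤ) (Dom : ℝ → ℝ → ℝ → Prop)
    (h : Hm p (n0,n1,n2)) (hb : ∀ m, |coeff m p| < 2^(W-1))
    (hΦ : Φ = aeval ![2^(W*((n2+1)*(n1+1))), 1, 2^(W*(n2+1)), 1, 2^W, 1] p)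
    (hd : ∀ A0 j0 A1 j1 A2 j2, dsc A0 j0 A1 j1 A2 j2 = true → ∀ x y z, InB (2^K) A0 j0 x → InB (2^K) A1 j1 y → InB (2^K) A2 j2 z → Dom x y z → False)
    (hr : run W B e (α*2^(n0+n1+n2)) (β*2^(n0+n1+n2)) n0 n1 n2 K dsc t Φ = true)
    (x y z : ℝ) (hx : 0 ≤ x ∧ x ≤ 1) (hy : 0 ≤ y ∧ y ≤ 1) (hz : 0 ≤ z ∧ z ≤ 1) (hD : Dom x y z) :
    aeval ![x/2, (1-x)/2, y/2, (1-y)/2, z/2, (1-z)/2] p ≤ α-(β:ℝ) := by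
  set α' := α*2^(n0+n1+n2) with hα
  set β' := β*2^(n0+n1+n2) with hβ
  obtain ⟨Ψ, hΨ⟩ : ∃ Ψ : ℕ, Φ + (pack3 W n0 n1 n2 fun _ _ _ => 2^(W-1) : ℕ) = Int.ofNat Ψ := by
    unfold run at hr
    change Int.rec _ _ (Φ + (pack3 W n0 n1 n2 fun _ _ _ => 2^(W-1) : ℕ)) = true at hr
    rcases hh : (Φ + (pack3 W n0 n1 n2 fun _ _ _ => 2^(W-1) : ℕ)) with a | a
    · exact ⟨a, rfl⟩
    · rw [hh] at hr; simp at hr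
  unfold run at hr
  change Int.rec _ _ (Φ + (pack3 W n0 n1 n2 fun _ _ _ => 2^(W-1) : ℕ)) = true at hr
  rw [hΨ] at hr
  simp only [force_eq, Bool.and_eq_true, packK_eq] at hr
  obtain ⟨ha, hc⟩ := hr
  have hdg := extract p n0 n1 n2 W hW h hb Φ Ψ hΦ hΨ.symm
  have hok := allK_ok _ _ _ _ _ _ _ _ _ ha
  simp only [okl, Bool.and_eq_true, Nat.ble_eq] at hok
  have hlt : ∀ i ≤ n0, ∀ j ≤ n1, ∀ k ≤ n2, rtD W B e α' β' n0 n1 n2 Ψ i j k < 2^B := fun i hi j hj k hk => (hok i j k hi hj hk).2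
  have hlt' : ∀ i ≤ n0, ∀ j ≤ n1, ∀ k ≤ n2, rtD W B e α' β' n0 n1 n2 Ψ i j k < 2^(B+1) := fun i hi j hj k hk =>
    (hlt i hi j hj k hk).trans (Nat.pow_lt_pow_right (by norm_num) (by omega))
  set V : ℝ → ℝ → ℝ → ℝ := fun x y z => ∑ i ∈ range (n0+1), ∑ j ∈ range (n1+1), ∑ k ∈ range (n2+1), (cf p n0 n1 n2 i j k : ℝ) * ((x^i*(1-x)^(n0-i))*(y^j*(1-y)^(n1-j))*(z^k*(1-z)^(n2-k))) with hV
  have hs := sound (2^K) B n0 n1 n2 (by positivity) hB dsc (fun x y z => (-1/2^e) * V x y z + (2^(B-1) - (β'-α')/2^e)) Dom hd t _ _ _ _ _ _ _ hc (pack3_lt B n0 n1 n2 _ hlt) ?_ x y z (InB01 K x hx) (InB01 K y hy) (InB01 K z hz) hD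
  · have h1 : V x y z ≤ α'-β' := by
      have : (0:ℝ) < 2^e := by positivity
      have h2 : (V x y z + (β'-α'))/2^e ≤ 0 := by
        have : (-1/2^e) * V x y z + (2^(B-1) - (β'-α')/2^e) = 2^(B-1) - (V x y z + (β'-α'))/2^e := by ring
        linarith
      rw [div_le_iff₀ this] at h2; linarith
    have h2 : aeval ![x/2, (1-x)/2, y/2, (1-y)/2, z/2, (1-z)/2] p * 2^(n0+n1+n2) = V x y z := by
      rw [aeval_sum _ p n0 n1 n2 h, hV, sum_mul]
      refine sum_congr rfl fun i hi => ?_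
      rw [sum_mul]
      refine sum_congr rfl fun j hj => ?_
      rw [sum_mul]
      refine sum_congr rfl fun k hk => ?_
      have e0 : n0 = i + (n0-i) := by have := mem_range_succ_iff.1 hi; omega
      have e1 : n1 = j + (n1-j) := by have := mem_range_succ_iff.1 hj; omega
      have e2 : n2 = k + (n2-k) := by have := mem_range_succ_iff.1 hk; omega
      have : (2:ℝ)^(n0+n1+n2) = (2^i*2^(n0-i))*(2^j*2^(n1-j))*(2^k*2^(n2-k)) := by
        simp only [← pow_add]; congr 1; omega
      rw [this]
      simp [div_pow]
      field_simp
    have h3 : (0:ℝ) < 2^(n0+n1+n2) := by positivity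
    rw [← h2, hα, hβ] at h1; push_cast at h1
    nlinarith
  · intro a b c ha0 hb0 hc0
    have ee : ∀ a : ℝ, (((0:ℕ):ℝ) + 2^K*a)/((2^K:ℕ):ℝ) = a := fun a => by push_cast; field_simp; ring
    rw [ee, ee, ee]
    simp only [hV]
    rw [← T3_div, ← T3_lin]
    refine T3_mono _ _ _ _ _ _ _ _ ha0 hb0 hc0 fun i hi j hj k hk => ?_
    rw [Ln, dig_pack3 _ _ _ _ _ hlt' _ _ _ hj hk, if_pos hi, rtD, lan, bn_eq _ _ hi, bn_eq _ _ hj, bn_eq _ _ hk]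
    have hle := (hok i j k hi hj hk).1
    rw [bn_eq _ _ hi, bn_eq _ _ hj, bn_eq _ _ hk] at hle
    have hcp : 0 < n0.choose i * n1.choose j * n2.choose k := by
      have := Nat.choose_pos hi; have := Nat.choose_pos hj; have := Nat.choose_pos hk; positivity
    set C := n0.choose i * n1.choose j * n2.choose k
    have hdd : (dig W Ψ ((n2+1)*(n1+1)*i + ((n2+1)*j + k)) : ℝ) = cf p n0 n1 n2 i j k + 2^(W-1) := by exact_mod_cast hdg i j k hi hj hk
    refine Nat.cast_div_le.trans (le_of_eq ?_)
    rw [Nat.cast_sub hle]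
    push_cast
    rw [hdd, pow_add]
    have : (C:ℝ) ≠ 0 := by positivity
    field_simp
    ring
end Kiss

namespace Kiss
open Finset MvPolynomial
noncomputable def forceI {α : Type} (z : ℤ) (f : ℤ → α) : α := Int.rec (fun n => force n fun n => f (Int.ofNat n)) (fun n => force n fun n => f (Int.negSucc n)) z
theorem forceI_eq {α : Type} (z : ℤ) (f : ℤ → α) : forceI z f = f z := by cases z <;> simp [forceI, force_eq]
noncomputable def hvK (U e : ℤ) : List ℤ → ℤ → ℤ → ℤ
  | [], h, _ => h
  | c :: cs, h, up => forceI (Int.add (Int.mul h e) (Int.mul c up)) fun h => forceI (Int.mul up U) fun up => hvK U e cs h up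
noncomputable def hqK (U e : ℤ) : List ℤ → ℤ
  | [] => 0
  | c :: cs => hvK U e cs c U
noncomputable def aKK (U eu V ev ee : ℤ) : List (List ℤ) → ℤ → ℤ
  | [], acc => acc
  | q :: qs, acc => forceI (hqK U eu q) fun a => forceI (hqK V ev q) fun b => forceI (Int.add (Int.mul acc ee) (Int.mul a b)) fun acc => aKK U eu V ev ee qs acc
noncomputable def cKK (w ww r : ℤ) (b : Bool) (cs : List ℤ) : ℤ := Int.mul (hqK r ww cs) (cond b w 1)
noncomputable def ffL (U eu V ev w ww r et ee : ℤ) : List En → Bool → ℤ → ℤ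
  | [], _, tot => tot
  | q :: Q, b, tot => forceI (aKK U eu V ev ee q.1 0) fun a => forceI (cKK w ww r b q.2) fun c =>
      forceI (Int.add (Int.mul tot et) (Int.mul a c)) fun tot => ffL U eu V ev w ww r et ee Q (not b) tot
noncomputable def ffK (U eu V ev w r et : ℤ) (Q : List En) : ℤ :=
  forceI U fun U => forceI eu fun eu => forceI V fun V => forceI ev fun ev => forceI w fun w => forceI r fun r => forceI et fun et =>
  forceI (Int.mul eu ev) fun ee => forceI (Int.mul w w) fun ww => ffL U eu V ev w ww r et ee Q false 0
theorem hvK_eq (U e : ℤ) (cs : List ℤ) : ∀ h up, hvK U e cs h up = hv U e cs h up := by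
  induction cs with
  | nil => intros; rfl
  | cons c cs ih => intro h up; rw [hvK, forceI_eq, forceI_eq, ih, hv]; simp
theorem hqK_eq (U e : ℤ) (cs : List ℤ) : hqK U e cs = hq U e cs := by
  cases cs with
  | nil => rfl
  | cons c cs => rw [hqK, hvK_eq, hq]; simp
theorem aKK_eq (U eu V ev : ℤ) (qs : List (List ℤ)) : ∀ acc, aKK U eu V ev (Int.mul eu ev) qs acc = aK U eu V ev qs acc := by
  induction qs with
  | nil => intros; rfl
  | cons c cs ih => intro h; rw [aKK, forceI_eq, forceI_eq, forceI_eq, ih, aK, hqK_eq, hqK_eq]; rfl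
theorem ffL_eq (U eu V ev w r et : ℤ) (Q : List En) : ∀ b tot, ffL U eu V ev w (Int.mul w w) r et (Int.mul eu ev) Q b tot = ff U eu V ev w r et Q b tot := by
  induction Q with
  | nil => intros; rfl
  | cons c cs ih => intro b h; rw [ffL, forceI_eq, forceI_eq, forceI_eq, ih, ff, aKK_eq, cKK, hqK_eq]; rfl
theorem ffK_eq (U eu V ev w r et : ℤ) (Q : List En) : ffK U eu V ev w r et Q = ff U eu V ev w r et Q false 0 := by
  simp only [ffK, forceI_eq, ffL_eq]
noncomputable def fhK (Q : List En) (x y z : ℤ) : ℤ :=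
  forceI (x-2) fun U => forceI (y-2) fun V => forceI (z-2) fun T => forceI (2*x+2) fun eu => forceI (2*y+2) fun ev => forceI (2*z+2) fun et =>
  ffK U eu V ev (T*(eu*ev) - U*V*et) ((eu*eu - U*U)*(ev*ev - V*V)*(et*et)) et Q
noncomputable def ghK (Q : List En) (x y z : ℤ) : ℤ :=
  forceI x fun x => forceI y fun y => forceI z fun z => forceI (fhK Q x y z) fun a => forceI (fhK Q y z x) fun b => forceI (fhK Q z x y) fun c => forceI (a+b+c) fun d => d
theorem fhK_eq (Q : List En) (x y z : ℤ) : fhK Q x y z = fh Q x 1 y 1 z 1 := by simp only [fhK, forceI_eq, ffK_eq, fh, mul_one]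
theorem ghK_eq (Q : List En) (x y z : ℤ) : ghK Q x y z = gh Q x 1 y 1 z 1 := by simp only [ghK, forceI_eq, fhK_eq, gh]
noncomputable def phK (Q P : List En) (x : ℤ) : ℤ :=
  forceI (x-2) fun U => forceI (2*x+2) fun eu => forceI (eu*eu-U*U) fun w =>
  forceI (ffK U eu U eu w (w*w) 1 Q) fun a => forceI (ffK U eu 1 1 0 0 1 Q) fun b => forceI (ffK 0 1 0 1 U (eu*eu) eu P) fun c =>
  forceI (eu*eu) fun e2 => forceI (e2*e2) fun e4 => forceI (e4*e4) fun e8 => forceI (e8*e8) fun e16 => a + (2*b+c)*e16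
theorem phK_eq (Q P : List En) (x : ℤ) : phK Q P x = ph Q P x 1 := by
  simp only [phK, forceI_eq, ffK_eq, ph, mul_one]; ring
def absK (Q : List En) : List En := Q.map fun q => (q.1.map fun l => l.map fun z => Int.ofNat z.natAbs, q.2.map fun z => Int.ofNat z.natAbs)
theorem absK_eq (Q : List En) : absQ Q = absK Q := by
  have : (abs : ℤ → ℤ) = fun z => Int.ofNat z.natAbs := funext Int.abs_eq_natAbs
  simp only [absQ, absK, this]
end Kiss

namespace Kiss
def mkz : ℕ → ℕ → List (List ℤ)
  | 0, _ => []
  | n+1, l => List.replicate l 0 :: mkz n (l+1)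
def q0 : En := ([[166512],
 [7021,139021696],
 [-38498535,17072667,422495660],
 [20021595,-328382470,-218854659,1169530885],
 [65273967,-138430006,-1225872028,413509213,2206078505],
 [-17175858,208109940,456097424,-3065767090,-1158587066,6039438492],
 [100659552,89247941,-1997715409,1562492768,2656214061,-5094842871,3567422870],
 [-213018704,-184851805,4031851114,1935509060,-4568585246,-16607154508,-8416603873,29625955736],
 [-14474598,57442833,208926080,-746916430,2161439623,1061522056,-13660985954,1335901747,14094242124],
 [335634278,17942521,-7189724539,-4913080727,14467745136,41843863803,5342598905,-93008198766,-12395404822,54599471310],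
 [-220559000,327134143,3367662289,-13928417346,-3526319045,60151141530,15208896384,-87220561126,-85328518151,54945939886,69763487880],
 [-118386007,2010698147,10282516746,-4875304544,-88981264684,-298145439503,288651651350,1499897340967,-434570929918,-2350424017495,232939962266,1182146099436],
 [1409534076,1644538529,-17733684121,56286622783,7048500168,-592460901750,-247170999655,1986890689524,1617093704354,-2690852020410,-2756181383651,1258780890564,1417790873779],
 [2081034,-914209345,-8175583117,-72200516142,89176817482,779812635393,-299607259178,-3312864632628,-63519510977,7318628612834,1389183365924,-8254061211774,-1061506582137,3410359331832],
 [911554410,-10846262,-15597835620,-26002130302,-9213206346,373972698348,614045393413,-2360028819777,-4103435965359,6904071296908,11193154215237,-9036970895206,-12555658373668,4069994158159,4928979542015],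
 [495457123,4006513543,-9955383394,-59930571688,-74391995017,-62348409637,1390315312400,3870959387138,-6874912002897,-21234151556569,15275617336512,47933382128935,-16273688727698,-47674755298801,6506639549053,17364248291766],
 [-421365165,-678011376,15694873670,72652567175,-68953628974,-1427717457789,-1051577807956,10441311174950,12084679834245,-37355812194592,-49334125004154,69151580586673,95615650331716,-63266447686308,-87048600588454,22270172820972,29820788042070]],
 [1])
def q1 : En := ([[79946123],
 [-19809227,178371685],
 [-102771860,53009256,883892805],
 [63625371,-471167700,-302160123,1740799850],
 [166336119,147029244,-3317193977,-229833454,6183774201],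
 [-43347892,522306534,33488029,-5817025800,1320517950,6815330865],
 [42333362,326113630,1581305686,-2044021556,-10145480320,844185123,17053567428],
 [-352491068,72199672,-3418449795,-3549281189,26691056632,230895123,-45091087737,24871194149],
 [292355836,-1128868154,-1105374927,21241358878,-2359354872,-39737579305,-46972019721,8105732973,87243804231],
 [-305013230,-4663963473,6708055073,48620675559,57673296942,-31735499562,-354733589602,-228612615675,350023899454,303706733496],
 [309776498,-822715097,8174904660,-13274450423,-136168478355,91937395493,643377318441,-165492720751,-1231928324331,100078079719,797308548949],
 [116182367,810294365,1839440174,3687942948,-8697482517,-223540290925,32670650749,1399018470137,136128837185,-3115630240712,-95751161267,2026287563778],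
 [38712439,-1096817398,-6821592633,16076714941,92235600828,-308988164858,-676688582103,1728218130356,3324712638249,-3325835226247,-7069008408396,2222712020728,4682712396665],
 [-201082368,4065491253,1561505202,837809721,184680777353,-107474180850,-2232028489164,-802807844135,9512134505311,6636621170011,-16477638766544,-13150147776809,9632185275239,8087091109918],
 [-9438382,-847218665,-13404764697,-10550637933,170224578421,644864560510,226183343325,-4826148857328,-7049853894003,13448760031385,24181868706669,-16229029330076,-30633164536973,7067212493340,13258626460969],
 [-58977799,1203986625,13057321387,-21235220511,-371077803026,79169509471,4143491811875,2163378176475,-21189283127503,-18766226715069,52985893968560,56558275616275,-63154830173206,-72467092926771,28520786163412,33479476473029]],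
 [8])
def q2 : En := ([[58214681],
 [-3069123,273848115],
 [31720250,75915142,351260685],
 [-10067619,-631797040,-383470125,2578740292],
 [138035012,104017917,-1738589086,-140663272,2658435234],
 [-333165073,-81854942,4040872759,-3308979725,-5840700201,8883258393],
 [582840427,8679305,-8514429728,6292853712,4255022378,-12550551932,24945784664],
 [170004817,923927508,1082701069,-4637458420,398699789,-2391605142,-1005445278,17447060472],
 [-587985857,-1628809615,2305614730,23439132703,25467550803,-103091013459,-165719246143,105609502086,191178202298],
 [-458669777,1097333212,-581514099,-37955161294,10114566032,312034345043,-33695711443,-849485510060,39110993879,671827621372],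
 [-201137102,-709805339,1977475252,-29823019436,-67610808897,296423147304,548286323382,-699835050074,-1611057752534,562296596178,1324991169442],
 [77597801,65681088,4606980384,-3243505539,-121718792579,-100289207164,836079665142,1249503019452,-1833608893461,-3721785362076,1329985578312,2992515179397],
 [418014885,-397236152,-1808595812,2541505196,-67483093374,-376822574420,60511188025,2765514728600,2073000553422,-6216269506412,-5866257166911,4280846002760,4277271927290],
 [-215671794,-1503404074,1737568115,51549658301,130790119438,-167254685533,-1773332805005,-1534253368534,8218576127746,10657285743931,-15552820474468,-21247435959116,10032809655939,13470183936123],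
 [-134902384,182024156,671473863,-70286913404,74614096122,1255072367683,150047939142,-8284625480809,-5489401594368,25374379883366,23448466283492,-35760505908081,-37347080245558,18586621180571,20295945724413]],
 [40,-4])
def q3 : En := ([[37939432],
 [57483493,253449294],
 [14641772,41400368,940600157],
 [-744059,245082492,-405114001,1331001267],
 [-23112253,-137359875,69087149,-762470018,347122541],
 [-17163801,215751230,-928281612,-4157244997,5352407545,7918068809],
 [-111611744,-296060811,-1269223046,-5776832478,4699753431,14303723365,6767981110],
 [93229635,122830736,2675636221,15541429010,-36435852628,-52696899929,45520281572,63714554291],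
 [202954090,-1567797904,-1063966474,19007245494,79944667259,-13438786046,-343058827409,-25491314722,331964231864],
 [105909886,-1926726926,3443141872,13462044932,14569878673,-42979089354,-243035811858,-216653522400,405606570081,480325874733],
 [-278829281,-1375830905,-7312278127,-5927190612,82654975287,246155922014,-117132578653,-1002420730758,-658906045386,1067703750505,1107894369423],
 [-35465600,-565945015,-4542889838,-23134751121,-64196802166,86650915726,1022080565792,612675090112,-3693201489347,-3354599971256,3668148822997,3683540999311],
 [47401077,-257585206,5991941969,22973481095,-44737333414,-477218284187,-468688141247,2646872356320,4086096613107,-5424194741543,-8937809695173,3637264363162,5883690761789],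
 [-23941625,1387767207,-14745969497,3646118478,285735976694,12102866935,-2420174389612,-1751171198597,9343638335659,10161009411471,-15449881988305,-19413887696945,8919076488190,11880087709580]],
 [160,-40])
def q4 : En := ([[44685178],
 [-18726476,236724889],
 [-10281919,-62535203,72177914],
 [-3578611,-43684589,19569443,23807483],
 [47508253,-128946348,-366003477,-72933333,168358956],
 [-128839,106675631,-100257949,-225699465,451219950,992390916],
 [49540756,-23292376,-160755124,-8135353583,-15620515864,27716634412,50248302225],
 [-81776086,204315172,1618764421,7248310024,-2337616536,-37955713197,2591404722,52228624364],
 [-101823118,-379398567,-652393539,22274984909,20826630929,-123233781597,-92743501324,178486931370,117140784099],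
 [-74602204,269346023,-1862935175,8190853585,70841766174,1409214313,-327731039437,-200012112334,403856249254,357353095947],
 [-174768037,150264334,-6495413734,-5171412635,39181682554,193141727805,39098582636,-989461962273,-925460216572,1166158010908,1302406260250],
 [45063814,819056426,1304325643,-33044950579,-93662609610,118626593445,955072681886,623912580711,-3206277627748,-3446859166953,3170549818082,3688991269992],
 [268822913,-652550125,-668200456,41042745740,-55712350114,-704215685206,-123605890329,4151668809653,3072467439673,-9793691681876,-9638275728856,7779442614190,8526757606718]],
 [560,-240,10])
def q5 : En := ([[19836196],
 [-10829600,9182611],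
 [12758295,-6123594,12370683],
 [-10842374,-1643625,-22642634,23060806],
 [-4647541,-95519724,-72114931,-32900299,619992971],
 [-27495869,222348519,-891086224,-2466669771,3588791260,9443953830],
 [20868179,173288725,208739658,-2866045563,-6076328471,10689640005,18505864764],
 [-3473666,185688029,140530411,-4010742630,-9154460951,12112771912,31976178747,11238244169],
 [117496417,517341681,626869580,5466635093,-11190334480,-81618965761,-18658072983,246007493759,206572971346],
 [40223885,298275679,266391692,13885171399,56256202192,-52286921316,-496719228963,-232935898442,1031055326928,948012622090],
 [-147315382,690312754,-6271966448,-13269956578,38542756762,155749299908,48111788017,-719721741833,-698722800658,1208212525152,1331612791266],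
 [-39312192,-66484335,5978636781,-6440864298,-118386029281,15029540892,1068372680316,688615498673,-3702582980199,-3708437153017,3787242374615,4305871389515]],
 [1792,-1120,120])
def q6 : En := ([[1290517],
 [-19145,1215786],
 [646914,173945,1694457],
 [-184628,-1016638,-1702262,5173321],
 [546177,-1714097,-14365303,6477004,57770306],
 [667511,8022548,8311103,-118878447,-27292022,338790450],
 [-3255713,-343525,-64611738,-392676342,-506905182,1645086034,2804268407],
 [1670570,19439406,86235907,-369839586,-1647945375,-392259788,5379003446,6089807548],
 [21622512,18532573,1582606460,6933371252,-8479540903,-80089423611,-31151735356,204422952615,174486081602],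
 [-39365651,-138370639,-2655577988,-7336055743,18530232281,94714948882,-17385255431,-273058961016,-82667347635,107751425729],
 [25173281,424164790,838126953,-12363827971,-15383356501,111489985065,166871470199,-322475253215,-558911852516,177268679381,370411485547]],
 [5376,-4480,840,-20])
def q7 : En := ([[197400],
 [-6656,305624],
 [-26957,108692,858011],
 [17458,-789750,-604501,6064665],
 [113220,290242,-6508982,-4021471,32536228],
 [63536,665526,-5226731,-21879873,20995060,75279764],
 [-8656,862482,-304086,-46882813,-84142115,183022539,323966060],
 [-49303,1513557,12061098,-63535186,-437803507,-207671652,1577704913,1719199539],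
 [-55762,-1111454,8070173,73783180,-186272469,-1441214374,-556739853,4658378959,4691592634],
 [62031,-1591083,-7114217,103688088,365685866,-1382358473,-5577049213,633442787,16840528507,13460956941]],
 [15360,-16128,4480,-280])
def q8 : En := ([[42341],
 [-3009,211292],
 [-61819,91430,1715510],
 [-68314,-2262181,2549645,21972374],
 [176053,2149056,-8655650,-23809587,24922242],
 [118050,1381368,-7558237,-27401073,25298521,60577229],
 [-169226,-938870,8094580,-22498223,-102391751,165165994,308420753],
 [766464,11970718,-17994813,-168759682,-645566605,-796997934,2718671748,3797201397],
 [-14289781,-160758387,702846574,3167399557,-4650498180,-43379402492,-38982835205,152867805188,195075407540]],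
 [42240,-53760,20160,-2240,35])
def q9 : En := ([[28077],
 [-3803,324420],
 [-332224,-357031,10108224],
 [547616,-92240,-16203062,6964129],
 [-149055,-211066,2603378,-3733386,17372233],
 [-964149,850131,23834725,-42336643,23044579,121258373],
 [159934,1096105,-4178182,-41027315,-82202786,162183101,302568101],
 [-28096288,28975384,906484857,-1535882392,-6115651673,-2745694812,23292957480,29649581031]],
 [112640,-168960,80640,-13440,560])
def q10 : En := ([[42891],
 [1456,398813],
 [-22585,65629,774172],
 [20021,-322917,-230827,2448664],
 [27559,-15362,-2319597,-1086058,11713913],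
 [43273,416950,-3756591,-16256354,13890830,60601006],
 [-4822,572617,922540,-27367612,-59933449,104824834,217196586]],
 [292864,-506880,295680,-67200,5040,-56])
def q11 : En := ([[71593],
 [-3892,168038],
 [-7923,61402,669877],
 [10904,-184273,-153947,1857687],
 [32858,-11485,-2347223,-1039990,11621331],
 [21104,295616,-1916052,-12138008,6028647,47331423]],
 [745472,-1464320,1013760,-295680,33600,-1008])
def q12 : En := ([[22228],
 [-2103,124185],
 [-15301,60274,599727],
 [8122,-163320,-73874,1870023],
 [20975,2835,-1608157,-862491,8752193]],
 [1863680,-4100096,3294720,-1182720,184800,-10080,84])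
def q13 : En := ([[16322],
 [-2299,106636],
 [-13247,49436,527536],
 [5699,-154464,-8539,1900826]],
 [4587520,-11182080,10250240,-4392960,887040,-73920,1680])
def q14 : En := ([[13351],
 [-2063,97972],
 [-12412,38440,509722]],
 [11141120,-29818880,30750720,-15375360,3843840,-443520,18480,-120])
def q15 : En := ([[11918],
 [-1721,91044]],
 [26738688,-77987840,89456640,-51251200,15375360,-2306304,147840,-2640])
def q16 : En := ([[11148]],
 [63504384,-200540160,253460480,-164003840,57657600,-10762752,960960,-31680,165])
def Q : List En := [q0,q1,q2,q3,q4,q5,q6,q7,q8,q9,q10,q11,q12,q13,q14,q15,q16]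
def P : List En := [([0] :: mkz 16 2, [105]),
 ([327299388] :: mkz 15 2, [1890]),
 ([4048418] :: mkz 14 2, [20790,-1890]),
 ([254183195] :: mkz 13 2, [180180,-41580]),
 ([65437808] :: mkz 12 2, [1351350,-540540,20790]),
 ([49057122] :: mkz 11 2, [9189180,-5405400,540540]),
 ([102493] :: mkz 10 2, [58198140,-45945900,8108100,-180180]),
 ([27931] :: mkz 9 2, [349188840,-349188840,91891800,-5405400]),
 ([4261] :: mkz 8 2, [2007835830,-2444321880,872972100,-91891800,1351350]),
 ([1875] :: mkz 7 2, [11154643500,-16062686640,7332965640,-1163962800,45945900]),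
 ([1916] :: mkz 6 2, [60235074900,-100391791500,56219403240,-12221609400,872972100,-9189180]),
 ([2087] :: mkz 5 2, [317603122200,-602350749000,401567166000,-112438806480,12221609400,-349188840]),
 ([463] :: mkz 4 2, [1640949464700,-3493634344200,2710578370500,-936990054000,140548508100,-7332965640,58198140]),
 ([231] :: mkz 3 2, [8330974205400,-19691393576400,17468171721000,-7228208988000,1405485081000,-112438806480,2444321880]),
 ([130] :: mkz 2 2, [41654871027000,-108302664670200,108302664670200,-52404515163000,12649365729000,-1405485081000,56219403240,-349188840]),
 ([79] :: mkz 1 2, [205497363733200,-583168194378000,649815988021200,-361008882234000,104809030326000,-15179238874800,936990054000,-16062686640]),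
 ([50] :: mkz 0 2, [1001799648199350,-3082460455998000,3790593263457000,-2382658622744400,812269985026500,-146732642456400,12649365729000,-401567166000,2007835830])]
def tr0 : Tr :=
  let x := Tr.nx; let y := Tr.ny; let z := Tr.nz; let l := Tr.lf
  x (y (z (x (y l (z l (x (y l (z l (y (z l (x l (y l (x l l)))) (z l (x l (x (x l (y l (z l (y (z l (x l l)) (z l (x (y l l) l)))))) l)))))) l))) (y l
  (z l (x (y l (z l (x (y l (z l (x (y l l) (y l (z l l))))) (y (z (x l (y l (z l (x l (y l l))))) (x l (y (z (x l (y l l)) (x l (y l l))) (z (x (y l l)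
  (y (z l l) l)) l)))) (z l (x (y (z (x l (y l l)) (x l l)) (z l l)) (y (z (x (y (z l l) l) l) l) l))))))) (y l (z l (x (y (z (x (y (z l (x l l)) (z l
  (x l l))) (y l (z l l))) (x (y (z (x (y (z l l) (z l l)) (y l l)) (x (y l l) l)) l) (y l l))) (z l l)) (y l (z l l))))))))) (x (y (z (x (y l (y l (x l
  (y (z l (x l (y l (z l l)))) (z l l))))) (y l (x (y (z l (x (y l (z l (x l (y l l)))) (y l (z l l)))) (y (z l (x (z l l) (z (z (y l l) (y (x l (z (z l
  (y l l)) l)) (z l (x l (z (z (x l (y l (z l (x l (y l l))))) l) l))))) l))) (z l (z (x l (z l (z l (x l (y (z (z l l) l) l))))) l)))) (y l (z l (z (z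
  l (z (x (y (z l (x l l)) l) l) (x (y (x (y (z (z (x l (y l (z l l))) l) l) (z (z (x (y (z (x l l) (x (y l (z l l)) (y l l))) (z l (x (y (z (x (y l l)
  (y l l)) l) l) l))) (y (z l l) l)) l) l)) (z (y l l) l)) (z (x (y (z l l) l) l) l)) (y l l)))) l)))))) (x (y (x (y l (z l (y l (x l l)))) (y l (z l (x
  (y (x l l) l) l)))) (x (z (y l (x l (y (z l l) l))) (y (y (z l (x l l)) (z l (x (z l (x l l)) l))) l)) (z (z (x (y l l) l) l) l))) (y l (z l (x (y (z
  l (x (y l l) (z l (y l l)))) (z l (y (z l (x l l)) l))) (y l (z l (x (y l l) l)))))))) (x (y (z (x (y l (z l l)) (z l l)) (z (y l (x l (z l l))) (x (y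
  l l) (y l l)))) (z (y (z (y (z (x l l) (x l l)) (z (x l (x (x l l) l)) (x (x l l) l))) l) (z (z (x (z l (x l (y l l))) (x (y (x (z l (y (z l l) (z (x
  l l) l))) l) (z (x (z (y l (x l (y l l))) (y (x l l) l)) l) l)) l)) l) l)) (z (x l (y (z (x l (y (z (x l (y l (z l (x l (y l l))))) (y l (x l (z (y l
  l) l)))) (z l l))) l) l)) (z l (x (z l (y l l)) (y l l)))))) (z (z (y l (y (z l (y l (z (x l l) (x (x l (y l (z l (y l (x (z l (y l l)) (z l l))))))
  (x (y l (z l l)) l))))) (z (x (y l (z l l)) (y (z l (x (y l l) (y l l))) (z (x (y l (z l (y l l))) (y l (z l (x (y l l) l)))) (y (z (x l l) (x l l))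
  (z (x l l) l))))) (y (x (z (y l l) (x l (y (z (y (x l (z l l)) l) (y (x l l) l)) l))) (z (x (y (z l (y (x l l) (x (z l (y l l)) (z l l)))) (z (y l l)
  l)) (y (z l l) l)) (y (x (z (y (x (z (y l l) l) l) l) l) l) l))) (x l l))))) (y (x (z (y (x l (z l l)) l) (y l (x (y (z l l) (z l l)) (y (z (z l l) l)
  (z (z l (y (x l (z (y (z l l) l) l)) l)) l))))) (z l (y (y l (z (z l l) l)) (y (z (z l l) l) (z (z l (y (z (x (y l l) l) l) l)) l))))) (z (y (x (z (y
  l (x (y l (x l (z (y l l) l))) (y l (z (x (y l (z (y l l) l)) l) l)))) (x l l)) l) (x (y (x l l) l) l)) (x (x (y l (z l l)) (y l (z l (y l l)))) (y l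
  l))))) (y (z l (y l l)) (z (y (z (y (x (z (y l (x (z l l) l)) l) (z l l)) (x (z l l) (z l l))) l) (x (z (z l l) l) (z (z l l) l))) (z l (x (z l (y l
  l)) (y l l)))))))) (y l (z (x (y (z (x l (y l (z (x l (y l (z l (x l l)))) (x (y l l) (y l (z (x (y (z l l) l) (y l l)) l)))))) (z l (x (y (z (x (y l
  (z l l)) (y l (z l l))) l) (y (z (z l l) l) l)) (y l l)))) (z (x (y (z l l) (z (x (y l (z (y l l) l)) (y l l)) l)) (y (z (x l l) l) l)) (y l (x (z l
  l) l)))) (y l (x (y (z l l) (z l l)) (z (y l l) l)))) (x (y (z (x (y l (y l (x l (z l l)))) (y l (x (y (z l l) (z l l)) (y l (z l l))))) l) (z (x (y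
  (z l l) (z l l)) l) l)) (z (y l (z l (x l l))) l)))))) (z l (y (z (x (x (y (z l (x l l)) (z l (x (y l (z l (x l (y l l)))) (y l (z l (y l l)))))) (y
  (z (y (z (x (y (z l l) l) (y (z (y (z (x (y l l) (x (y (z l l) (z l l)) (y l l))) (x l l)) (z l l)) l) l)) l) l) (y l (z (x l (x (z l (y l l)) l)) (z
  (x (y l (z l l)) (y l (x l l))) (x l l))))) (z l (y (z (x (y (z l l) (z l l)) (y (z l (x l l)) (z l l))) (x l l)) (z l (x l l)))))) (y (z (x (y (z (x
  (y (z l l) l) l) l) (x l (z l l))) (x l l)) (x (x (z l l) l) l)) (x (z l (y l (z l l))) l))) (x (z (x (y (x l l) (x l (y (z (x l (z l l)) l) (z (x l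
  (y (z l l) l)) l)))) (y (x (z (z l l) l) (z (y (z l l) l) l)) (x (y (z (z (x l l) (x l l)) l) (z (x (z l l) (z (y l (z l l)) l)) l)) (z (y (z l l) l)
  l)))) (x (z l (x l (y l l))) (y (z l (z l (x (y l (z l (x l l))) (z l (y l l))))) (z l (x (y (z l (z l (x (y (z l (x l (y l l))) l) (y (z l (x (z l (y
  l (z l (x (y l l) l)))) l)) (z l (x (y (z l (x l (z l (y l l)))) l) (y l (z l (y (z l (x l l)) l))))))))) l) (y (z l (z l (x (y l (z l (x (z l (y l (z
  l (y l l)))) l))) l))) (z l (y (z l (x (z l (y (x (z l (y l l)) (z l (y l l))) l)) (z l (y l (z l (x (y l l) (z l (y l l)))))))) l)))))))) (z (x (y l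
  (z l l)) (y l l)) (z (x (y l (x (y l l) l)) l) (x (y (z l (x (z l (x (y l l) l)) l)) (z l (x (y l (z l (y l (x (z l (y (x (z l (y l l)) l) l)) (z l (x
  (y l l) (y l l))))))) (y l (x (z l (y l l)) l))))) (y l l)))))) (z l (x (y (z (x l (x (x l (y (z (y (z (x (y (z l l) l) (y (z l l) l)) l) l) l) l)) (y
  (z (x (y (z (y l (z l l)) l) (z l l)) (y (z (y l l) l) (z l l))) l) l))) l) (z l (x l l))) (x (y (z (x (y (z l l) l) l) (x l (z l (y (z l (x (y l l)
  (y l l))) l)))) (z l l)) (y (z l (x (y (z l (z l (x (y l l) l))) l) l)) (z l (y l (z l (x l (y l (z l (x (y l (z l (x l l))) l)))))))))))))) (y l (z l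
  (x (y (z (x (y l l) (y l l)) (z (x l (y l l)) (z (x l (y l l)) (x l (y l l))))) (z l (y (z (x l (x l (x (y l l) (y l l)))) l) (z l (y l (z l (x (y l
  (z l (x l l))) l))))))) (y l (z l (x l (y l (z l l))))))))
def tr1 : Tr :=
  let x := Tr.nx; let l := Tr.lf
  x (x (x (x l l) (x l l)) l) (x l (x l l))
abbrev bet : ℕ := 1803930267904182988
abbrev gam : ℕ := 467535645731866552759
end Kiss

namespace Kiss
def dcor (T S p : ℤ) : Bool := and (decide (T < p)) (decide (S < (p-T)*(p-T)))
def dsq (F lo hi : ℤ) : ℤ := cond (decide (hi ≤ 0)) (F*F-hi*hi) (cond (decide (0 ≤ lo)) (F*F-lo*lo) (F*F))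
noncomputable def dsc (E : ℕ) : Box := fun A0 j0 A1 j1 A2 j2 =>
  or (Nat.ble (A1+2^j1) A0) (or (Nat.ble (A2+2^j2) A1) (
   forceI (3*A0-2*E) fun a => forceI (3*(A0+2^j0)-2*E) fun b => forceI (3*A1-2*E) fun c => forceI (3*(A1+2^j1)-2*E) fun d =>
   forceI (2*E*(3*A2-2*E)) fun s => forceI (2*E*(3*(A2+2^j2)-2*E)) fun t =>
   forceI (dsq (2*E) a b * dsq (2*E) c d) fun S =>
   or (and (dcor t S (a*c)) (and (dcor t S (a*d)) (and (dcor t S (b*c)) (dcor t S (b*d)))))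
    (and (dcor (-s) S (-(a*c))) (and (dcor (-s) S (-(a*d))) (and (dcor (-s) S (-(b*c))) (dcor (-s) S (-(b*d))))))))
set_option maxRecDepth 100000
theorem w1 : wfF 16 0 Q = true := by decide +kernel
theorem w2 : wfF 16 0 P = true := by decide +kernel
theorem m1 : 3 * ffK 3 4 3 4 84 10000 4 (absK Q) < 2^199 := by decide +kernel
theorem m2 : ffK 3 4 3 4 25 625 1 (absK Q) + (2 * ffK 3 4 1 1 0 0 1 (absK Q) + ffK 0 1 0 1 3 16 4 (absK P)) * 4^16 < 2^199 := by decide +kernel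
theorem r2 : run 200 62 52 (gam*2^(32+0+0)) (0*2^(32+0+0)) 32 0 0 10 (fun _ _ _ _ _ _ => false) tr1 (phK Q P (2^(200*((0+1)*(0+1))))) = true := by decide +kernel
end Kiss

namespace Kiss
set_option maxRecDepth 100000
theorem r1 : run 200 62 82 (0*2^(16+16+16)) (bet*2^(16+16+16)) 16 16 16 10 (dsc (2^10)) tr0 (ghK Q (2^(200*((16+1)*(16+1)))) (2^(200*(16+1))) (2^200)) = true := by decide +kernel
end Kiss

namespace Kiss
theorem corner (a b c d U V : ℝ) (h1 : a ≤ U) (h2 : U ≤ b) (h3 : c ≤ V) (h4 : V ≤ d) :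
    a*c ≤ U*V ∨ a*d ≤ U*V ∨ b*c ≤ U*V ∨ b*d ≤ U*V := by
  by_contra! h
  obtain ⟨e1, e2, e3, e4⟩ := h
  rcases le_total 0 V with hv | hv
  · have h5 : a*V ≤ U*V := mul_le_mul_of_nonneg_right h1 hv
    rcases le_total 0 a with ha | ha
    · have := mul_le_mul_of_nonneg_left h3 ha; linarith
    · have := mul_le_mul_of_nonpos_left h4 ha; linarith
  · have h5 : b*V ≤ U*V := mul_le_mul_of_nonpos_right h2 hv
    rcases le_total 0 b with ha | ha
    · have := mul_le_mul_of_nonneg_left h3 ha; linarith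
    · have := mul_le_mul_of_nonpos_left h4 ha; linarith
theorem dsq_ge (F lo hi : ℤ) (U : ℝ) (h1 : lo ≤ U) (h2 : U ≤ hi) : (F:ℝ)*F - U*U ≤ (dsq F lo hi : ℤ) := by
  unfold dsq
  by_cases h : hi ≤ 0
  · have h' : (hi:ℝ) ≤ 0 := by exact_mod_cast h
    simp only [h, decide_true, cond_true]; push_cast; nlinarith
  · by_cases g : 0 ≤ lo
    · have h' : (0:ℝ) ≤ lo := by exact_mod_cast g
      simp only [h, g, decide_true, decide_false, cond_true, cond_false]; push_cast; nlinarith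
    · simp only [h, g, decide_false, cond_false]; push_cast; nlinarith [mul_self_nonneg U]
theorem dcor_abs {T S p : ℤ} (h : dcor T S p = true) {τ X Y : ℝ} (hT : τ ≤ T) (hp : p ≤ X) (hS : Y ≤ S)
    (hY : (X - τ)*(X-τ) ≤ Y) : False := by
  simp only [dcor, Bool.and_eq_true, decide_eq_true_eq] at h
  have h1 : (T:ℝ) < p := by exact_mod_cast h.1
  have h2 : (S:ℝ) < (p-T)*(p-T) := by exact_mod_cast h.2
  nlinarith
def Dom (x y z : ℝ) : Prop := x ≤ y ∧ y ≤ z ∧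
  ((3*z/2-1) - (3*x/2-1)*(3*y/2-1))^2 ≤ (1-(3*x/2-1)^2)*(1-(3*y/2-1)^2)
theorem dcor4 {T S a b c d : ℤ} (h : and (dcor T S (a*c)) (and (dcor T S (a*d)) (and (dcor T S (b*c)) (dcor T S (b*d)))) = true)
    {τ U V Y : ℝ} (hT : τ ≤ T) (h1 : a ≤ U) (h2 : U ≤ b) (h3 : c ≤ V) (h4 : V ≤ d) (hS : Y ≤ S)
    (hY : (U*V - τ)*(U*V-τ) ≤ Y) : False := by
  simp only [Bool.and_eq_true] at h
  obtain ⟨e1, e2, e3, e4⟩ := h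
  rcases corner a b c d U V h1 h2 h3 h4 with g | g | g | g
  · exact dcor_abs e1 hT (by push_cast; exact g) hS hY
  · exact dcor_abs e2 hT (by push_cast; exact g) hS hY
  · exact dcor_abs e3 hT (by push_cast; exact g) hS hY
  · exact dcor_abs e4 hT (by push_cast; exact g) hS hY
theorem ordx (E : ℕ) {A0 j0 A1 j1 : ℕ} {x y : ℝ} (hx : InB E A0 j0 x) (hy : InB E A1 j1 y) (h : A1+2^j1 ≤ A0) (hxy : x ≤ y) : False := by
  obtain ⟨a1, a2, a3, a4⟩ := hx
  obtain ⟨b1, b2, b3, b4⟩ := hy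
  have h' : (A1:ℝ)+2^j1 ≤ A0 := by exact_mod_cast h
  have a1' : (A0:ℝ)+2^j0 ≤ E := by exact_mod_cast a1
  have hE : (0:ℝ) ≤ E := by positivity
  have h2 : (0:ℝ) < 2^j0 := by positivity
  have := mul_le_mul_of_nonneg_left hxy hE
  rcases b4 with b4 | b4
  · linarith
  · rw [b4] at b3; linarith
theorem dsc_ok (E : ℕ) (A0 j0 A1 j1 A2 j2 : ℕ) (h : dsc E A0 j0 A1 j1 A2 j2 = true) (x y z : ℝ)
    (hx : InB E A0 j0 x) (hy : InB E A1 j1 y) (hz : InB E A2 j2 z) (hD : Dom x y z) : False := by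
  obtain ⟨d1, d2, d3⟩ := hD
  simp only [dsc, forceI_eq] at h
  rw [Bool.or_eq_true, Bool.or_eq_true] at h
  rcases h with h | h | h
  · exact ordx E hx hy (Nat.le_of_ble_eq_true h) d1
  · exact ordx E hy hz (Nat.le_of_ble_eq_true h) d2
  obtain ⟨a1, a2, a3, -⟩ := hx
  obtain ⟨b1, b2, b3, -⟩ := hy
  obtain ⟨c1, c2, c3, -⟩ := hz
  have hE : (0:ℝ) ≤ E := by positivity
  have a1' : (A0:ℝ)+2^j0 ≤ E := by exact_mod_cast a1
  have b1' : (A1:ℝ)+2^j1 ≤ E := by exact_mod_cast b1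
  have a0 : (0:ℝ) ≤ A0 := by positivity
  have b0 : (0:ℝ) ≤ A1 := by positivity
  have hU1 : ((3*A0-2*E : ℤ) : ℝ) ≤ 3*(E*x)-2*E := by push_cast; linarith
  have hU2 : 3*(E*x)-2*E ≤ ((3*(A0+2^j0)-2*E : ℤ) : ℝ) := by push_cast; linarith
  have hV1 : ((3*A1-2*E : ℤ) : ℝ) ≤ 3*(E*y)-2*E := by push_cast; linarith
  have hV2 : 3*(E*y)-2*E ≤ ((3*(A1+2^j1)-2*E : ℤ) : ℝ) := by push_cast; linarith
  have hs := dsq_ge (2*E) _ _ _ hU1 hU2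
  have hs' := dsq_ge (2*E) _ _ _ hV1 hV2
  have g1 : 0 ≤ ((2*E:ℤ):ℝ)*(2*E:ℤ) - (3*(E*x)-2*E)*(3*(E*x)-2*E) := by push_cast; nlinarith
  have g2 : 0 ≤ ((2*E:ℤ):ℝ)*(2*E:ℤ) - (3*(E*y)-2*E)*(3*(E*y)-2*E) := by push_cast; nlinarith
  have hS := mul_le_mul hs hs' g2 (g1.trans hs)
  rw [← Int.cast_mul (dsq _ _ _)] at hS
  have hY : ((3*(E*x)-2*E)*(3*(E*y)-2*E) - 2*E*(3*(E*z)-2*E))*((3*(E*x)-2*E)*(3*(E*y)-2*E) - 2*E*(3*(E*z)-2*E)) ≤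
     (((2*E:ℤ):ℝ)*(2*E:ℤ) - (3*(E*x)-2*E)*(3*(E*x)-2*E)) * (((2*E:ℤ):ℝ)*(2*E:ℤ) - (3*(E*y)-2*E)*(3*(E*y)-2*E)) := by
    have := mul_le_mul_of_nonneg_left d3 (show (0:ℝ) ≤ (2*E)^4 by positivity)
    push_cast
    nlinarith
  rw [Bool.or_eq_true] at h
  rcases h with h | h
  · refine dcor4 h (τ := 2*E*(3*(E*z)-2*E)) ?_ hU1 hU2 hV1 hV2 hS hY
    push_cast; exact mul_le_mul_of_nonneg_left (by linarith) (by positivity)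
  · simp only [← neg_mul] at h
    refine dcor4 (c := 3*A1-2*E) (d := 3*(A1+2^j1)-2*E) (a := -(3*(A0+2^j0)-2*E)) (b := -(3*A0-2*E)) (T := -(2*E*(3*A2-2*E)))
      ?_ (τ := -(2*E*(3*(E*z)-2*E))) ?_ (U := -(3*(E*x)-2*E)) ?_ ?_ hV1 hV2 hS ?_
    · simp only [Bool.and_eq_true] at h ⊢
      obtain ⟨e1, e2, e3, e4⟩ := h
      simp only [neg_mul] at *
      exact ⟨e3, e4, e1, e2⟩
    · push_cast
      have := mul_le_mul_of_nonneg_left (show 3*(A2:ℝ)-2*E ≤ 3*(E*z)-2*E by linarith) (show (0:ℝ) ≤ 2*E by positivity)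
      linarith
    · rw [Int.cast_neg]; linarith
    · rw [Int.cast_neg]; linarith
    · refine le_trans (le_of_eq ?_) hY; ring
end Kiss

namespace Kiss
open Finset MvPolynomial
noncomputable def f3 (u v t : ℝ) : ℝ := ff u 1 v 1 (t-u*v) ((1-u*u)*(1-v*v)) 1 Q false 0
noncomputable def pp (u : ℝ) : ℝ := ff 0 1 0 1 u 1 1 P false 0
noncomputable def g3 (u v t : ℝ) : ℝ := f3 u v t + f3 v t u + f3 t u v
theorem hd0 (A0 j0 A1 j1 A2 j2 : ℕ) (h : dsc (2^10) A0 j0 A1 j1 A2 j2 = true) (x y z : ℝ)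
    (hx : InB (2^10) A0 j0 x) (hy : InB (2^10) A1 j1 y) (hz : InB (2^10) A2 j2 z) (hD : Dom x y z) : False :=
  dsc_ok (2^10) A0 j0 A1 j1 A2 j2 h x y z hx hy hz hD
theorem phi1 : ghK Q (2^(200*((16+1)*(16+1)))) (2^(200*(16+1))) (2^200) =
    aeval ![(2:ℤ)^(200*((16+1)*(16+1))), 1, 2^(200*(16+1)), 1, 2^200, 1] (gh Q (X 0) (X 1) (X 2) (X 3) (X 4) (X 5) : MP) := by
  rw [ghK_eq]
  generalize (2:ℤ)^(200*((16+1)*(16+1))) = a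
  generalize (2:ℤ)^(200*(16+1)) = b
  generalize (2:ℤ)^200 = c
  have := map_gh (aeval ![a, 1, b, 1, c, 1] : MP →ₐ[ℤ] ℤ).toRingHom Q (X 0) (X 1) (X 2) (X 3) (X 4) (X 5)
  simp only [AlgHom.toRingHom_eq_coe, RingHom.coe_coe, aeval_X] at this
  rw [this]; rfl
theorem phi2 : phK Q P (2^(200*((0+1)*(0+1)))) =
    aeval ![(2:ℤ)^(200*((0+1)*(0+1))), 1, 2^(200*(0+1)), 1, 2^200, 1] (ph Q P (X 0) (X 1) : MP) := by
  rw [phK_eq]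
  generalize (2:ℤ)^(200*((0+1)*(0+1))) = a
  have := map_ph (aeval ![a, 1, a, 1, a, 1] : MP →ₐ[ℤ] ℤ).toRingHom Q P (X 0) (X 1)
  simp only [AlgHom.toRingHom_eq_coe, RingHom.coe_coe, aeval_X] at this
  rw [this]; rfl
set_option maxRecDepth 100000 in
theorem bound1 (x y z : ℝ) (hx : 0 ≤ x ∧ x ≤ 1) (hy : 0 ≤ y ∧ y ≤ 1) (hz : 0 ≤ z ∧ z ≤ 1) (hD : Dom x y z) :
    g3 (3*x/2-1) (3*y/2-1) (3*z/2-1) ≤ -(bet:ℝ) := by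
  have h := run_ok (gh Q (X 0) (X 1) (X 2) (X 3) (X 4) (X 5)) 200 62 82 0 bet 16 16 16 10 (by norm_num) (by norm_num)
    (dsc (2^10)) tr0 _ Dom (hm_gh Q w1) ?_ phi1 hd0 r1 x y z hx hy hz hD
  · have e := map_gh (aeval ![x/2, (1-x)/2, y/2, (1-y)/2, z/2, (1-z)/2] : MP →ₐ[ℤ] ℝ).toRingHom Q (X 0) (X 1) (X 2) (X 3) (X 4) (X 5)
    simp only [AlgHom.toRingHom_eq_coe, RingHom.coe_coe, aeval_X] at e
    rw [e] at h
    have e' : gh Q (x/2) ((1-x)/2) (y/2) ((1-y)/2) (z/2) ((1-z)/2) = g3 (3*x/2-1) (3*y/2-1) (3*z/2-1) := by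
      have E : ∀ x y z : ℝ, fh Q (x/2) ((1-x)/2) (y/2) ((1-y)/2) (z/2) ((1-z)/2) = f3 (3*x/2-1) (3*y/2-1) (3*z/2-1) := by
        intro x y z
        simp only [fh, f3]
        congr 1 <;> ring
      simp only [gh, g3, E]
    have h2 : gh Q (x/2) ((1-x)/2) (y/2) ((1-y)/2) (z/2) ((1-z)/2) ≤ ((0:ℕ):ℝ) - (bet:ℝ) := h
    rw [e'] at h2
    simpa using h2
  · intro m
    refine (bd_gh Q m).trans_lt ?_
    rw [absK_eq, ← ffK_eq]; exact m1
set_option maxRecDepth 100000 in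
theorem bound2 (u : ℝ) (h1 : -1 ≤ u) (h2 : u ≤ 1/2) : f3 u u 1 + 2 * f3 u 1 u + pp u ≤ gam := by
  have h := run_ok (ph Q P (X 0) (X 1)) 200 62 52 gam 0 32 0 0 10 (by norm_num) (by norm_num)
    (fun _ _ _ _ _ _ => false) tr1 _ (fun _ _ _ => True) (hm_ph Q P w1 w2) ?_ phi2 (by intros; contradiction) r2 (2*(u+1)/3) 0 0
    ⟨by linarith, by linarith⟩ (by norm_num) (by norm_num) trivial
  · have e := map_ph (aeval ![(2*(u+1)/3)/2, (1-(2*(u+1)/3))/2, 0/2, (1-0)/2, 0/2, (1-0)/2] : MP →ₐ[ℤ] ℝ).toRingHom Q P (X 0) (X 1)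
    simp only [AlgHom.toRingHom_eq_coe, RingHom.coe_coe, aeval_X] at e
    rw [e] at h
    have h2 : ph Q P ((2*(u+1)/3)/2) ((1-(2*(u+1)/3))/2) ≤ (gam:ℝ) - ((0:ℕ):ℝ) := h
    have e' : ph Q P ((2*(u+1)/3)/2) ((1-(2*(u+1)/3))/2) = f3 u u 1 + 2 * f3 u 1 u + pp u := by
      have E1 : (2*(u+1)/3)/2 - 2*((1-(2*(u+1)/3))/2) = u := by ring
      have E2 : 2*((2*(u+1)/3)/2) + 2*((1-(2*(u+1)/3))/2) = 1 := by ring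
      simp only [ph, f3, pp, E1, E2]
      simp [add_assoc]
    rw [e'] at h2; simpa using h2
  · intro m
    refine (bd_ph Q P m).trans_lt ?_
    rw [absK_eq, absK_eq, ← ffK_eq, ← ffK_eq, ← ffK_eq]; exact m2
end Kiss

namespace Kiss
open Finset
theorem aK_comm {R : Type*} [CommRing R] (U eu V ev : R) (qs : List (List ℤ)) : ∀ acc, aK U eu V ev qs acc = aK V ev U eu qs acc := by
  induction qs with
  | nil => intros; rfl
  | cons q qs ih => intro acc; simp only [aK]; rw [ih, mul_comm eu ev, mul_comm (hq U eu q)]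
theorem ff_comm {R : Type*} [CommRing R] (U eu V ev w r et : R) (Q : List En) : ∀ b tot, ff U eu V ev w r et Q b tot = ff V ev U eu w r et Q b tot := by
  induction Q with
  | nil => intros; rfl
  | cons q Q ih => intro b tot; simp only [ff]; rw [ih, aK_comm]
theorem f3_comm (u v t : ℝ) : f3 u v t = f3 v u t := by
  unfold f3; rw [ff_comm, mul_comm u v, mul_comm (1-u*u)]
theorem hv_sum (U e : ℝ) (cs : List ℤ) : ∀ h up, hv U e cs h up = h * e^cs.length + up * ∑ j ∈ range cs.length, ((cs.getD j 0 : ℤ):ℝ) * (U^j * e^(cs.length-1-j)) := by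
  induction cs with
  | nil => intro h up; simp [hv]
  | cons c cs ih =>
    intro h up
    rw [hv, ih, List.length_cons, sum_range_succ']
    have : ∀ j ∈ range cs.length, (((c::cs).getD (j+1) 0 : ℤ):ℝ) * (U^(j+1) * e^(cs.length+1-1-(j+1))) = U * (((cs.getD j 0 : ℤ):ℝ) * (U^j * e^(cs.length-1-j))) := by
      intro j _
      rw [List.getD_cons_succ, show cs.length+1-1-(j+1) = cs.length-1-j by omega]; ring
    rw [sum_congr rfl this, ← mul_sum]
    simp; ring
theorem hq_sum (U e : ℝ) (cs : List ℤ) : hq U e cs = ∑ j ∈ range cs.length, ((cs.getD j 0 : ℤ):ℝ) * (U^j * e^(cs.length-1-j)) := by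
  cases cs with
  | nil => simp [hq]
  | cons c cs =>
    rw [hq, hv_sum, List.length_cons, sum_range_succ']
    have : ∀ j ∈ range cs.length, (((c::cs).getD (j+1) 0 : ℤ):ℝ) * (U^(j+1) * e^(cs.length+1-1-(j+1))) = U * (((cs.getD j 0 : ℤ):ℝ) * (U^j * e^(cs.length-1-j))) := by
      intro j _
      rw [List.getD_cons_succ, show cs.length+1-1-(j+1) = cs.length-1-j by omega]; ring
    rw [sum_congr rfl this, ← mul_sum]
    simp; ring
theorem cK_gk (w r : ℝ) (k : ℕ) (cs : List ℤ) (h : cs.length = k/2+1) :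
    cK w r (decide (k % 2 = 1)) cs = gk (fun j => ((cs.getD j 0 : ℤ) : ℝ)) k w r := by
  rw [cK, hq_sum, gk, h, sum_mul]
  refine sum_congr rfl fun j hj => ?_
  have hj := mem_range.1 hj
  rw [mul_assoc]; congr 1
  rw [← pow_two, ← pow_mul, mul_assoc, mul_comm (r^j)]; congr 1
  by_cases hk : k % 2 = 1
  · simp only [hk, decide_true, cond_true]
    rw [← pow_succ]; congr 1; omega
  · simp only [hk, decide_false, cond_false, mul_one]
    congr 1; omega
def okc (m : ℕ) (k : ℕ) (cs : List ℤ) : Bool :=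
  and (decide (cs.length = k/2+1)) (and (decide (0 < cs.getD 0 0))
   ((List.range (k/2)).all fun j => decide (cs.getD (j+1) 0 * (2*(j+1)*(2*k-2*j+m-4)) = -cs.getD j 0 * ((k-2*j)*(k-2*j-1)))))
def okF (m : ℕ) : ℕ → List En → Bool
  | _, [] => true
  | k, q :: Q => and (okc m k q.2) (okF m (k+1) Q)
theorem okQ : okF 10 0 Q = true := by decide +kernel
theorem okP : okF 11 0 P = true := by decide +kernel
theorem cK_pos {m : ℕ} {ι : Type*} (s : Finset ι) (k : ℕ) (cs : List ℤ) (h : okc m k cs = true) (c : ι → ℝ) (v : ι → Fin m → ℝ) :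
    0 ≤ ∑ a ∈ s, ∑ b ∈ s, c a * c b * cK (dt (v a) (v b)) (dt (v a) (v a) * dt (v b) (v b)) (decide (k % 2 = 1)) cs := by
  simp only [okc, Bool.and_eq_true, decide_eq_true_eq, List.all_eq_true, List.mem_range] at h
  obtain ⟨h1, h2, h3⟩ := h
  simp only [cK_gk _ _ k cs h1]
  refine gk_pos s _ k (by exact_mod_cast h2) ?_ c v
  intro j hj
  have := h3 j (by omega)
  exact_mod_cast congrArg (Int.cast : ℤ → ℝ) this
theorem aK_sum (U V : ℝ) (qs : List (List ℤ)) : ∀ acc, aK U 1 V 1 qs acc = acc + (qs.map fun q => hq U 1 q * hq V 1 q).sum := by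
  induction qs with
  | nil => intro acc; simp [aK]
  | cons q qs ih => intro acc; rw [aK, ih]; simp; ring
theorem aK_pos {m : ℕ} {ι : Type*} (s : Finset ι) (k : ℕ) (cs : List ℤ) (h : okc m k cs = true) (u : ι → ℝ) (v : ι → Fin m → ℝ) (qs : List (List ℤ)) :
    0 ≤ ∑ a ∈ s, ∑ b ∈ s, aK (u a) 1 (u b) 1 qs 0 * cK (dt (v a) (v b)) (dt (v a) (v a) * dt (v b) (v b)) (decide (k % 2 = 1)) cs := by
  induction qs with
  | nil => simp [aK]
  | cons q qs ih =>
    have := add_nonneg ih (cK_pos s k cs h (fun a => hq (u a) 1 q) v)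
    rw [← sum_add_distrib] at this
    refine this.trans (le_of_eq ?_)
    refine sum_congr rfl fun a _ => ?_
    rw [← sum_add_distrib]
    refine sum_congr rfl fun b _ => ?_
    rw [aK_sum, aK_sum]; simp; ring
theorem ff_pos {m : ℕ} {ι : Type*} (s : Finset ι) (u : ι → ℝ) (v : ι → Fin m → ℝ) (Q : List En) :
    ∀ (k : ℕ) (_ : okF m k Q = true) (tot : ι → ι → ℝ) (_ : 0 ≤ ∑ a ∈ s, ∑ b ∈ s, tot a b),
    0 ≤ ∑ a ∈ s, ∑ b ∈ s, ff (u a) 1 (u b) 1 (dt (v a) (v b)) (dt (v a) (v a) * dt (v b) (v b)) 1 Q (decide (k % 2 = 1)) (tot a b) := by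
  induction Q with
  | nil => intro k _ tot h; exact h
  | cons q Q ih =>
    intro k hk tot h
    simp only [okF, Bool.and_eq_true] at hk
    have e : (!decide (k % 2 = 1)) = decide ((k+1) % 2 = 1) := by
      by_cases hk : k % 2 = 1
      · have : ¬ (k+1) % 2 = 1 := by omega
        simp [hk, this]
      · have : (k+1) % 2 = 1 := by omega
        simp [hk, this]
    simp only [ff, e]
    refine ih (k+1) hk.2 _ ?_
    have := add_nonneg h (aK_pos s k q.2 hk.1 u v q.1)
    rw [← sum_add_distrib] at this
    refine this.trans (le_of_eq ?_)
    refine sum_congr rfl fun a _ => ?_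
    rw [← sum_add_distrib]
    refine sum_congr rfl fun b _ => ?_
    rw [mul_one]
theorem posP {ι : Type*} (s : Finset ι) (v : ι → Fin 11 → ℝ) (h : ∀ a ∈ s, dt (v a) (v a) = 1) :
    0 ≤ ∑ a ∈ s, ∑ b ∈ s, pp (dt (v a) (v b)) := by
  refine (ff_pos s (fun _ => 0) v P 0 okP (fun _ _ => 0) (by simp)).trans (le_of_eq ?_)
  refine sum_congr rfl fun a ha => sum_congr rfl fun b hb => ?_
  rw [pp, h a ha, h b hb, mul_one]; rfl
theorem posQ {ι : Type*} (s : Finset ι) (u : ι → ℝ) (t : ι → ι → ℝ) (v : ι → Fin 10 → ℝ) (h : ∀ a ∈ s, ∀ b ∈ s, dt (v a) (v b) = t a b - u a * u b)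
   (ht : ∀ a ∈ s, t a a = 1) :
    0 ≤ ∑ a ∈ s, ∑ b ∈ s, f3 (u a) (u b) (t a b) := by
  refine (ff_pos s u v Q 0 okQ (fun _ _ => 0) (by simp)).trans (le_of_eq ?_)
  refine sum_congr rfl fun a ha => sum_congr rfl fun b hb => ?_
  rw [f3, h a ha a ha, h b hb b hb, h a ha b hb, ht a ha, ht b hb]; rfl
end Kiss

namespace Kiss
open Finset
theorem g3_perm1 (u v t : ℝ) : g3 u v t = g3 v u t := by
  unfold g3; rw [f3_comm u v t, f3_comm v t u, f3_comm t u v]; ring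
theorem g3_perm2 (u v t : ℝ) : g3 u v t = g3 v t u := by
  unfold g3; ring
theorem bound1' (u v t : ℝ) (hu : -1 ≤ u ∧ u ≤ 1/2) (hv : -1 ≤ v ∧ v ≤ 1/2) (ht : -1 ≤ t ∧ t ≤ 1/2)
    (h1 : u ≤ v) (h2 : v ≤ t) (hD : 0 ≤ 1 + 2*u*v*t - u^2 - v^2 - t^2) : g3 u v t ≤ -(bet:ℝ) := by
  have E : ∀ w : ℝ, 3*(2*(w+1)/3)/2-1 = w := fun w => by ring
  have := bound1 (2*(u+1)/3) (2*(v+1)/3) (2*(t+1)/3) ⟨by linarith, by linarith⟩ ⟨by linarith, by linarith⟩ ⟨by linarith, by linarith⟩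
    ⟨by linarith, by linarith, by simp only [E]; nlinarith⟩
  simpa only [E] using this
theorem bound3 (u v t : ℝ) (hu : -1 ≤ u ∧ u ≤ 1/2) (hv : -1 ≤ v ∧ v ≤ 1/2) (ht : -1 ≤ t ∧ t ≤ 1/2)
    (hD : 0 ≤ 1 + 2*u*v*t - u^2 - v^2 - t^2) : g3 u v t ≤ -(bet:ℝ) := by
  rcases le_total u v with h1 | h1 <;> rcases le_total v t with h2 | h2 <;> rcases le_total u t with h3 | h3
  · exact bound1' u v t hu hv ht h1 h2 hD
  · exact bound1' u v t hu hv ht h1 h2 hD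
  · rw [g3_perm2, g3_perm2, g3_perm1]; exact bound1' u t v hu ht hv h3 h2 (by linarith)
  · rw [g3_perm2, g3_perm2]; exact bound1' t u v ht hu hv h3 h1 (by linarith)
  · rw [g3_perm1]; exact bound1' v u t hv hu ht h1 h3 (by linarith)
  · rw [g3_perm2]; exact bound1' v t u hv ht hu h2 h3 (by linarith)
  · rw [g3_perm2, g3_perm1]; exact bound1' t v u ht hv hu h2 h1 (by linarith)
  · rw [g3_perm2, g3_perm1]; exact bound1' t v u ht hv hu h2 h1 (by linarith)

abbrev V11 := EuclideanSpace ℝ (Fin 11)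
theorem proj10 (z : V11) (hz : ‖z‖ = 1) : ∃ v : V11 → Fin 10 → ℝ, ∀ x y, dt (v x) (v y) = inner ℝ x y - inner ℝ x z * inner ℝ y z := by
  have hz0 : z ≠ 0 := by intro h; rw [h] at hz; simp at hz
  have : Fact (Module.finrank ℝ V11 = 10+1) := ⟨by simp⟩
  have hf := Submodule.finrank_orthogonal_span_singleton (𝕜 := ℝ) (n := 10) hz0
  let b := (stdOrthonormalBasis ℝ (Submodule.span ℝ {z})ᗮ).reindex (finCongr hf)
  have hzz : inner ℝ z z = (1:ℝ) := by rw [real_inner_self_eq_norm_sq, hz]; norm_num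
  have hm : ∀ x : V11, x - inner ℝ x z • z ∈ (Submodule.span ℝ {z})ᗮ := by
    intro x
    rw [Submodule.mem_orthogonal_singleton_iff_inner_left, inner_sub_left, real_inner_smul_left, hzz]; ring
  let p : V11 → (Submodule.span ℝ {z})ᗮ := fun x => ⟨x - inner ℝ x z • z, hm x⟩
  refine ⟨fun x i => inner ℝ (p x) (b i), fun x y => ?_⟩
  have h := b.sum_inner_mul_inner (p x) (p y)
  have h2 : dt (fun i => inner ℝ (p x) (b i)) (fun i => inner ℝ (p y) (b i)) = inner ℝ (p x) (p y) := by
    rw [← h, dt]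
    exact sum_congr rfl fun i _ => by rw [real_inner_comm (b i) (p y)]
  rw [h2, Submodule.coe_inner]
  simp only [p, inner_sub_left, inner_sub_right, real_inner_smul_left, real_inner_smul_right, hzz]
  rw [real_inner_comm y z]; ring
theorem gramD (x y z : V11) (hx : ‖x‖ = 1) (hy : ‖y‖ = 1) (hz : ‖z‖ = 1) :
    0 ≤ 1 + 2*inner ℝ x z * inner ℝ y z * inner ℝ x y - (inner ℝ x z : ℝ)^2 - (inner ℝ y z:ℝ)^2 - (inner ℝ x y:ℝ)^2 := by
  have h := real_inner_mul_inner_self_le (x - (inner ℝ x z : ℝ) • z) (y - (inner ℝ y z:ℝ) • z)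
  have e : ∀ w : V11, ‖w‖ = 1 → inner ℝ w w = (1:ℝ) := fun w hw => by rw [real_inner_self_eq_norm_sq, hw]; norm_num
  simp only [inner_sub_left, inner_sub_right, real_inner_smul_left, real_inner_smul_right, e x hx, e y hy, e z hz] at h
  rw [real_inner_comm y z, real_inner_comm x z] at h
  nlinarith
theorem posP' (S : Finset V11) (hn : ∀ x ∈ S, ‖x‖ = 1) : 0 ≤ ∑ a ∈ S, ∑ b ∈ S, pp (inner ℝ a b) := by
  have E : ∀ a b : V11, dt (fun i => a i) (fun i => b i) = inner ℝ a b := by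
    intro a b
    rw [dt, PiLp.inner_apply]
    exact sum_congr rfl fun i _ => by simp [mul_comm]
  have := posP S (fun a i => a i) (fun a ha => by rw [E, real_inner_self_eq_norm_sq, hn a ha]; norm_num)
  simpa only [E] using this
theorem posQ' (S : Finset V11) (hn : ∀ x ∈ S, ‖x‖ = 1) (z : V11) (hz : z ∈ S) :
    0 ≤ ∑ a ∈ S, ∑ b ∈ S, f3 (inner ℝ a z) (inner ℝ b z) (inner ℝ a b) := by
  obtain ⟨v, hv⟩ := proj10 z (hn z hz)
  exact posQ S (fun a => inner ℝ a z) (fun a b => inner ℝ a b) v (fun a _ b _ => hv a b)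
    (fun a ha => by rw [real_inner_self_eq_norm_sq, hn a ha]; norm_num)
theorem posG (S : Finset V11) (hn : ∀ x ∈ S, ‖x‖ = 1) :
    0 ≤ ∑ x ∈ S, ∑ y ∈ S, ∑ z ∈ S, g3 (inner ℝ x z) (inner ℝ y z) (inner ℝ x y) := by
  simp only [g3, sum_add_distrib]
  refine add_nonneg (add_nonneg ?_ ?_) ?_
  · have := sum_nonneg (posQ' S hn)
    rw [sum_comm] at this
    refine this.trans (le_of_eq (sum_congr rfl fun x _ => ?_))
    rw [sum_comm]
  · have := sum_nonneg (posQ' S hn)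
    rw [sum_comm' (t' := S) (s' := fun _ => S) (by simp)]
    refine this.trans (le_of_eq (sum_congr rfl fun y _ => ?_))
    rw [sum_comm]
    refine sum_congr rfl fun x _ => sum_congr rfl fun z _ => ?_
    rw [f3_comm, f3_comm, real_inner_comm x z, real_inner_comm y z, f3_comm]
  · refine sum_nonneg fun x hx => (posQ' S hn x hx).trans (le_of_eq ?_)
    refine sum_congr rfl fun y _ => sum_congr rfl fun z _ => ?_
    rw [real_inner_comm x y, real_inner_comm x z]
end Kiss

namespace Kiss
open Finset
theorem sum3 {α : Type*} [DecidableEq α] (S : Finset α) (β K : ℝ) (H : α → α → ℝ) :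
    ∑ x ∈ S, ∑ y ∈ S, ∑ z ∈ S, (-β + (if x = y then H x z else 0) + (if y = z then H x y else 0) + (if x = z then H y x else 0) + (if x = y then (if y = z then K else 0) else 0))
    = -β * (#S:ℝ)^3 + 3 * (∑ x ∈ S, ∑ y ∈ S, H x y) + K * #S := by
  simp only [sum_add_distrib]
  have e1 : ∑ x ∈ S, ∑ y ∈ S, ∑ z ∈ S, (if x = y then H x z else 0) = ∑ x ∈ S, ∑ y ∈ S, H x y := by
    refine sum_congr rfl fun x hx => ?_
    rw [sum_comm]
    refine sum_congr rfl fun z _ => ?_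
    rw [sum_ite_eq, if_pos hx]
  have e2 : ∑ x ∈ S, ∑ y ∈ S, ∑ z ∈ S, (if y = z then H x y else 0) = ∑ x ∈ S, ∑ y ∈ S, H x y := by
    refine sum_congr rfl fun x hx => sum_congr rfl fun y hy => ?_
    rw [sum_ite_eq, if_pos hy]
  have e3 : ∑ x ∈ S, ∑ y ∈ S, ∑ z ∈ S, (if x = z then H y x else 0) = ∑ x ∈ S, ∑ y ∈ S, H x y := by
    rw [sum_comm]
    refine sum_congr rfl fun y hy => sum_congr rfl fun x hx => ?_
    rw [sum_ite_eq, if_pos hx]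
  have e4 : ∑ x ∈ S, ∑ y ∈ S, ∑ z ∈ S, (if x = y then (if y = z then K else 0) else 0) = K * #S := by
    have : ∀ x ∈ S, ∑ y ∈ S, ∑ z ∈ S, (if x = y then (if y = z then K else 0) else 0) = K := by
      intro x hx
      rw [sum_comm]
      simp only [sum_ite_eq, hx, if_true]
    rw [sum_congr rfl this]; simp [mul_comm]
  rw [e1, e2, e3, e4]
  simp only [sum_const, nsmul_eq_mul]; ring
theorem num0 : 3*(ffK 1 1 1 1 0 0 1 Q + ffK 0 1 0 1 1 1 1 P) < (bet:ℤ)*(870*869) - 3*gam*870 := by decide +kernel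
theorem num1 : 3*(f3 1 1 1 + pp 1) < (bet:ℝ)*(870*869) - 3*gam*870 := by
  have h := num0
  rw [ffK_eq, ffK_eq] at h
  have h' := (Int.cast_lt (R := ℝ)).2 h
  have a := map_ff (Int.castRingHom ℝ) 1 1 1 1 0 0 1 Q false 0
  have b := map_ff (Int.castRingHom ℝ) 0 1 0 1 1 1 1 P false 0
  simp only [eq_intCast, Int.cast_one, Int.cast_zero] at a b
  push_cast at h'
  rw [a, b] at h'
  have c : f3 1 1 1 = ff 1 1 1 1 0 0 1 Q false 0 := by simp [f3]
  rw [c, pp]; refine h'.trans_le (le_of_eq ?_); norm_num [bet, gam]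
theorem ptw (S : Finset V11) (hn : ∀ x ∈ S, ‖x‖ = 1) (hd : ∀ x ∈ S, ∀ y ∈ S, x ≠ y → 1 ≤ dist x y)
   (β γ : ℝ) (hβ : β = bet) (hγ : γ = gam) (x y z : V11) (hx : x ∈ S) (hy : y ∈ S) (hz : z ∈ S) :
   g3 (inner ℝ x z) (inner ℝ y z) (inner ℝ x y) ≤ -β + (if x = y then (β + γ - pp (inner ℝ x z)) else 0) + (if y = z then (β + γ - pp (inner ℝ x y)) else 0)
     + (if x = z then (β + γ - pp (inner ℝ y x)) else 0) + (if x = y then (if y = z then (3 * f3 1 1 1 + β - 3*(β+γ-pp 1)) else 0) else 0) := by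
  have e : ∀ w ∈ S, inner ℝ w w = (1:ℝ) := fun w hw => by rw [real_inner_self_eq_norm_sq, hn w hw]; norm_num
  have hb : ∀ a ∈ S, ∀ b ∈ S, a ≠ b → -1 ≤ (inner ℝ a b : ℝ) ∧ (inner ℝ a b : ℝ) ≤ 1/2 := by
    intro a ha b hb hab
    constructor
    · have := abs_real_inner_le_norm a b
      rw [hn a ha, hn b hb] at this
      have := (abs_le.1 this).1; linarith
    · have h1 := hd a ha b hb hab
      rw [dist_eq_norm] at h1
      have h2 := norm_sub_sq_real a b
      rw [hn a ha, hn b hb] at h2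
      nlinarith
  have hp : ∀ a ∈ S, ∀ b ∈ S, a ≠ b → f3 (inner ℝ a b) (inner ℝ a b) 1 + 2 * f3 (inner ℝ a b) 1 (inner ℝ a b) + pp (inner ℝ a b) ≤ γ := by
    intro a ha b hb' hab
    rw [hγ]
    exact bound2 _ (hb a ha b hb' hab).1 (hb a ha b hb' hab).2
  by_cases h1 : x = y
  · subst h1
    by_cases h2 : x = z
    · subst h2
      simp only [if_true, e x hx, g3]; linarith
    · have := hp x hx z hz h2
      simp only [if_true, h2, if_false, e x hx, g3]
      rw [f3_comm 1]; linarith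
  · by_cases h2 : y = z
    · subst h2
      have := hp x hx y hy h1
      simp only [if_true, h1, if_false, e y hy, g3]
      rw [f3_comm 1]; linarith
    · by_cases h3 : x = z
      · subst h3
        have := hp y hy x hx h2
        simp only [if_true, h1, h2, if_false, e x hx, g3]
        rw [real_inner_comm y x] at *
        rw [f3_comm 1]; linarith
      · simp only [h1, h2, h3, if_false]
        rw [hβ]
        have := bound3 _ _ _ (hb x hx z hz h3) (hb y hy z hz h2) (hb x hx y hy h1) (gramD x y z (hn x hx) (hn y hy) (hn z hz))
        linarith
theorem main871 (S : Finset V11) (hn : ∀ x ∈ S, ‖x‖ = 1) (hd : ∀ x ∈ S, ∀ y ∈ S, x ≠ y → 1 ≤ dist x y) (hc : #S = 871) : False := by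
  classical
  have h0 := posG S hn
  have hP := posP' S hn
  obtain ⟨β, hβ⟩ : ∃ β : ℝ, β = bet := ⟨_, rfl⟩
  obtain ⟨γ, hγ⟩ : ∃ γ : ℝ, γ = gam := ⟨_, rfl⟩
  have hnum := num1
  rw [← hβ, ← hγ] at hnum
  have h1 := sum_le_sum fun x hx => sum_le_sum fun y hy => sum_le_sum fun z hz => ptw S hn hd β γ hβ hγ x y z hx hy hz
  rw [sum3 S β _ (fun a b => β + γ - pp (inner ℝ a b))] at h1
  simp only [sum_sub_distrib, sum_const, nsmul_eq_mul, hc] at h1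
  push_cast at h1
  linarith
end Kiss
theorem kissing_number_dim11_le_870 (S : Finset (EuclideanSpace ℝ (Fin 11)))
    (hnorm : ∀ x ∈ S, ‖x‖ = 1)
    (hdist : ∀ x ∈ S, ∀ y ∈ S, x ≠ y → 1 ≤ dist x y) :
    S.card ≤ 870 := by
  by_contra h
  obtain ⟨T, hT, hc⟩ := Finset.exists_subset_card_eq (show 871 ≤ S.card by omega)
  exact Kiss.main871 T (fun x hx => hnorm x (hT hx)) (fun x hx y hy => hdist x (hT hx) y (hT hy)) hc
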